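/- Fix an integer n1 ≥ 1 and an integer n2 ≥ 1, set T = n2 + 2^{2·n1}, and fix ρ ≥ 2. There exists ε* = ε*(ρ) > 0 such that for every ε ∈ (0, ε*), every λ > 0, and every integer m with 1 ≤ m ≤ n2 the following holds. If S is an elastic collision system of 2·n1 + m unit discs in ℝ², labeled as described below, which satisfies (ε,ρ) initial conditions at some time t0, and moreover |DS(t0)| = λ and |Da_m(t0) − λ·w0| ≤ λ·ε, then S undergoes at least m − 1 + n1·(n1+1) collisions in the time interval [t0, t0 + ε·λ⁻¹·T), and S satisfies (ε·(1+2T), ρ·(1+3T)) initial conditions at time t0 + ε·λ⁻¹·T. -/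

import Mathlib

open scoped RealInnerProductSpace

noncomputable section

/-- An elastic collision system of unit balls in `ℝ^d`, indexed by `ι`, on the time
interval `I ⊆ ℝ`.  `x i` is the trajectory of the center of ball `i`, `vr i t` its right
derivative (velocity) at time `t` and `vl i t` its left derivative (which, for a
continuous piecewise linear trajectory, is the left limit of the right derivative).
Fields `right_lin` and `left_lin` say that each trajectory is (locally) linear to the
right and to the left of every time, with the indicated one-sided derivatives; this
encodes continuity and piecewise linearity with locally finitely many breakpoints.
`dist_ge` says the closed unit balls have disjoint interiors, and `collision_rule` is
the elastic collision rule. -/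
structure BallSystem (ι : Type) (d : ℕ) (I : Set ℝ) where
  x : ι → ℝ → EuclideanSpace ℝ (Fin d)
  vr : ι → ℝ → EuclideanSpace ℝ (Fin d)
  vl : ι → ℝ → EuclideanSpace ℝ (Fin d)
  right_lin : ∀ i, ∀ t ∈ I, ∃ ε > 0, ∀ s ∈ Set.Icc t (t + ε) ∩ I,
    x i s = x i t + (s - t) • vr i t
  left_lin : ∀ i, ∀ t ∈ I, ∃ ε > 0, ∀ s ∈ Set.Icc (t - ε) t ∩ I,
    x i s = x i t + (s - t) • vl i t
  dist_ge : ∀ i j, i ≠ j → ∀ t ∈ I, 2 ≤ ‖x i t - x j t‖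
  collision_rule : ∀ i, ∀ t ∈ I, (∃ s ∈ I, s < t) → vr i t ≠ vl i t →
    ∃ j, j ≠ i ∧ ‖x i t - x j t‖ = 2 ∧ vr j t ≠ vl j t ∧
      (∀ k, k ≠ i → ‖x i t - x k t‖ = 2 → k = j) ∧
      (∀ k, k ≠ i → k ≠ j → vr k t = vl k t) ∧
      vr i t = vl i t -
        ⟪vl i t - vl j t, (2⁻¹ : ℝ) • (x i t - x j t)⟫ • ((2⁻¹ : ℝ) • (x i t - x j t)) ∧
      vr j t = vl j t +
        ⟪vl i t - vl j t, (2⁻¹ : ℝ) • (x i t - x j t)⟫ • ((2⁻¹ : ℝ) • (x i t - x j t))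

/-- The set of collisions of the system: pairs `(t, {i,j})` such that at time `t` the
balls `i` and `j` are tangent and both of their velocities change at `t`. -/
def BallSystem.collisions {ι : Type} [DecidableEq ι] {d : ℕ} {I : Set ℝ}
    (S : BallSystem ι d I) : Set (ℝ × Finset ι) :=
  {p | p.1 ∈ I ∧ (∃ s ∈ I, s < p.1) ∧ ∃ i j : ι, i ≠ j ∧ p.2 = {i, j} ∧
    ‖S.x i p.1 - S.x j p.1‖ = 2 ∧ S.vr i p.1 ≠ S.vl i p.1 ∧ S.vr j p.1 ≠ S.vl j p.1}

/-- The Euclidean norm `|DS(t)|` of the concatenated velocity vector of the system. -/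
def BallSystem.speedNorm {ι : Type} [Fintype ι] {d : ℕ} {I : Set ℝ}
    (S : BallSystem ι d I) (t : ℝ) : ℝ :=
  Real.sqrt (∑ i, ‖S.vr i t‖ ^ 2)

/-- `w0 = (0,1)`. -/
def w0 : EuclideanSpace ℝ (Fin 2) := (EuclideanSpace.equiv (Fin 2) ℝ).symm ![0, 1]
/-- `u0 = (1,0)`. -/
def u0 : EuclideanSpace ℝ (Fin 2) := (EuclideanSpace.equiv (Fin 2) ℝ).symm ![1, 0]
/-- `w1 = (-√3/2, 1/2)`. -/
def w1 : EuclideanSpace ℝ (Fin 2) :=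
  (EuclideanSpace.equiv (Fin 2) ℝ).symm ![-(Real.sqrt 3 / 2), 1 / 2]
/-- `w2 = (√3/2, 1/2)`. -/
def w2 : EuclideanSpace ℝ (Fin 2) :=
  (EuclideanSpace.equiv (Fin 2) ℝ).symm ![Real.sqrt 3 / 2, 1 / 2]
/-- `u1 = (1/2, √3/2)`. -/
def u1 : EuclideanSpace ℝ (Fin 2) :=
  (EuclideanSpace.equiv (Fin 2) ℝ).symm ![1 / 2, Real.sqrt 3 / 2]
/-- `u2 = (-1/2, √3/2)`. -/
def u2 : EuclideanSpace ℝ (Fin 2) :=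
  (EuclideanSpace.equiv (Fin 2) ℝ).symm ![-(1 / 2), Real.sqrt 3 / 2]

/-- Index type for the `2·n1 + m` discs `A_m,…,A_1,B_1,…,B_{n1},C_1,…,C_{n1}`:
`Sum.inl k` is the disc `A_{k+1}` (so `Sum.inl 0` is `A_1`), `Sum.inr (Sum.inl j)` is
`B_{j+1}` and `Sum.inr (Sum.inr j)` is `C_{j+1}`. -/
abbrev BBIndex (m n1 : ℕ) : Type := Fin m ⊕ (Fin n1 ⊕ Fin n1)

/-- The `(ε,ρ)` initial conditions at time `t0` for a system of `2·n1 + m` discs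
labeled `A_m,…,A_1,B_1,…,B_{n1},C_1,…,C_{n1}` (with `b_0 = c_0 = a_1`):
(i) `w1·a_1 ≥ 0`, `w2·a_1 ≥ 0`, `w0·a_1 ≤ ε`;
(ii) `|u0·a_k| ≤ ε` for `k = 2,…,m`, `|u1·b_j| ≤ ε` and `|u2·c_j| ≤ ε` for
`j = 0,…,n1`;
(iii) every gap `Γ^A_k`, `Γ^B_k`, `Γ^C_k` lies in `[ε/ρ, ε]`;
(iv) the ratio of the gaps `Γ^B_1` and `Γ^C_1` (in one order or the other) is `≤ 2/3`. -/
def InitCond (m n1 : ℕ) (hm : 0 < m) (hn1 : 0 < n1)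
    (S : BallSystem (BBIndex m n1) 2 Set.univ) (ε ρ t0 : ℝ) : Prop :=
  let a : Fin m → ℝ → EuclideanSpace ℝ (Fin 2) := fun k => S.x (Sum.inl k)
  let b : Fin n1 → ℝ → EuclideanSpace ℝ (Fin 2) := fun j => S.x (Sum.inr (Sum.inl j))
  let c : Fin n1 → ℝ → EuclideanSpace ℝ (Fin 2) := fun j => S.x (Sum.inr (Sum.inr j))
  -- (i)
  (0 ≤ ⟪w1, a ⟨0, hm⟩ t0⟫ ∧ 0 ≤ ⟪w2, a ⟨0, hm⟩ t0⟫ ∧ ⟪w0, a ⟨0, hm⟩ t0⟫ ≤ ε) ∧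
  -- (ii)
  (∀ k : Fin m, 0 < (k : ℕ) → |⟪u0, a k t0⟫| ≤ ε) ∧
  (|⟪u1, a ⟨0, hm⟩ t0⟫| ≤ ε) ∧ (∀ j : Fin n1, |⟪u1, b j t0⟫| ≤ ε) ∧
  (|⟪u2, a ⟨0, hm⟩ t0⟫| ≤ ε) ∧ (∀ j : Fin n1, |⟪u2, c j t0⟫| ≤ ε) ∧
  -- (iii): gaps `Γ^A_k`, `k = 2,…,m`
  (∀ i : ℕ, ∀ h : i + 1 < m,
    ε * ρ⁻¹ ≤ ⟪w0, a ⟨i, by omega⟩ t0 - a ⟨i + 1, h⟩ t0⟫ - 2 ∧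
      ⟪w0, a ⟨i, by omega⟩ t0 - a ⟨i + 1, h⟩ t0⟫ - 2 ≤ ε) ∧
  -- (iii): gap `Γ^B_1` (recall `b_0 = a_1`)
  (ε * ρ⁻¹ ≤ ⟪w1, b ⟨0, hn1⟩ t0 - a ⟨0, hm⟩ t0⟫ - 2 ∧
    ⟪w1, b ⟨0, hn1⟩ t0 - a ⟨0, hm⟩ t0⟫ - 2 ≤ ε) ∧
  -- (iii): gaps `Γ^B_k`, `k = 2,…,n1`
  (∀ i : ℕ, ∀ h : i + 1 < n1,
    ε * ρ⁻¹ ≤ ⟪w1, b ⟨i + 1, h⟩ t0 - b ⟨i, by omega⟩ t0⟫ - 2 ∧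
      ⟪w1, b ⟨i + 1, h⟩ t0 - b ⟨i, by omega⟩ t0⟫ - 2 ≤ ε) ∧
  -- (iii): gap `Γ^C_1`
  (ε * ρ⁻¹ ≤ ⟪w2, c ⟨0, hn1⟩ t0 - a ⟨0, hm⟩ t0⟫ - 2 ∧
    ⟪w2, c ⟨0, hn1⟩ t0 - a ⟨0, hm⟩ t0⟫ - 2 ≤ ε) ∧
  -- (iii): gaps `Γ^C_k`, `k = 2,…,n1`
  (∀ i : ℕ, ∀ h : i + 1 < n1,
    ε * ρ⁻¹ ≤ ⟪w2, c ⟨i + 1, h⟩ t0 - c ⟨i, by omega⟩ t0⟫ - 2 ∧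
      ⟪w2, c ⟨i + 1, h⟩ t0 - c ⟨i, by omega⟩ t0⟫ - 2 ≤ ε) ∧
  -- (iv)
  ((⟪w1, b ⟨0, hn1⟩ t0 - a ⟨0, hm⟩ t0⟫ - 2) /
      (⟪w2, c ⟨0, hn1⟩ t0 - a ⟨0, hm⟩ t0⟫ - 2) ≤ 2 / 3 ∨
    (⟪w2, c ⟨0, hn1⟩ t0 - a ⟨0, hm⟩ t0⟫ - 2) /
      (⟪w1, b ⟨0, hn1⟩ t0 - a ⟨0, hm⟩ t0⟫ - 2) ≤ 2 / 3)

end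

/-- The launch speed of the `j`-th pulse travelling along the arm that is hit first. -/
noncomputable def firstSpeed (j : ℕ) : ℝ := if j = 1 then 1 / 2 else 6 / 4 ^ j

/-- The launch speed of the `j`-th pulse travelling along the arm that is hit second. -/
noncomputable def secondSpeed (j : ℕ) : ℝ := 3 / 4 ^ j

/-- A speed profile whose consecutive speeds are separated up to level `n`. -/
structure SpeedProfile (n : ℕ) (V : ℕ → ℝ) : Prop where
  lower : ∀ j, 1 ≤ j → j ≤ n → 2 / 4 ^ n ≤ V j
  gap : ∀ j, 1 ≤ j → j < n → 2 / 4 ^ n ≤ V j - V (j + 1)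

/-- The state of one arm of balls `1, …, n`.  The number `h k` counts the collisions between the
balls `k` and `k + 1`; every ball either rests at the position of one of the initial balls or
carries one of the pulses. -/
structure Chain (n : ℕ) (P V : ℕ → ℝ) (e t : ℝ) (h : ℕ → ℕ) (y v : ℕ → ℝ) : Prop where
  bound : ∀ k ≤ n, h k + k ≤ n
  step : ∀ k < n, h (k + 1) ≤ h k ∧ h k ≤ h (k + 1) + 1
  move : ∀ k < n, h k = h (k + 1) + 1 → |v (k + 1) - V (h k)| ≤ e
  rest : ∀ k < n, h k = h (k + 1) →
    |v (k + 1)| ≤ e ∧ |y (k + 1) - P (k + 1 + h (k + 1))| ≤ e * (1 + t)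

lemma abs_drift {y v c p e s t : ℝ} (hst : s ≤ t) (h1 : |y - c| ≤ e * (1 + s))
    (h2 : |v - p| ≤ e) : |(y + (t - s) * v) - (c + (t - s) * p)| ≤ e * (1 + t) := by
  have h3 : |(t - s) * (v - p)| ≤ (t - s) * e := by
    rw [abs_mul, abs_of_nonneg (by linarith)]
    exact mul_le_mul_of_nonneg_left h2 (by linarith)
  have : (y + (t - s) * v) - (c + (t - s) * p) = (y - c) + (t - s) * (v - p) := by ring
  rw [this]
  refine (abs_add_le _ _).trans ?_
  nlinarith

lemma firstSpeed_profile {n : ℕ} (hn : 0 < n) : SpeedProfile n firstSpeed := by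
  constructor
  · intro j hj hjn
    have h4 : (4 : ℝ) ^ j ≤ 4 ^ n := pow_le_pow_right₀ (by norm_num) hjn
    have hp : (0 : ℝ) < 4 ^ j := by positivity
    have hn' : (4 : ℝ) ^ 1 ≤ 4 ^ n := pow_le_pow_right₀ (by norm_num) hn
    unfold firstSpeed
    split_ifs with h
    · rw [div_le_div_iff₀ (by positivity) (by norm_num)]; linarith
    · rw [div_le_div_iff₀ (by positivity) hp]; linarith
  · intro j hj hjn
    have h4 : (4 : ℝ) ^ (j + 1) ≤ 4 ^ n := pow_le_pow_right₀ (by norm_num) hjn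
    have hp : (0 : ℝ) < 4 ^ j := by positivity
    have e1 : (4 : ℝ) ^ (j + 1) = 4 * 4 ^ j := by ring
    have h6 : (2 : ℝ) / 4 ^ n ≤ 2 / 4 ^ (j + 1) :=
      div_le_div_of_nonneg_left (by norm_num) (by positivity) h4
    unfold firstSpeed
    split_ifs with h h'
    · omega
    · subst h; norm_num at h6 ⊢; linarith
    · omega
    · rw [e1] at h6 ⊢
      have : (6 : ℝ) / 4 ^ j - 6 / (4 * 4 ^ j) = 9 * (2 / (4 * 4 ^ j)) := by
        field_simp; ring
      rw [this]
      have : (0 : ℝ) < 2 / (4 * 4 ^ j) := by positivity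
      linarith

lemma secondSpeed_profile (n : ℕ) : SpeedProfile n secondSpeed := by
  constructor
  · intro j hj hjn
    have h4 : (4 : ℝ) ^ j ≤ 4 ^ n := pow_le_pow_right₀ (by norm_num) hjn
    have hp : (0 : ℝ) < 4 ^ j := by positivity
    unfold secondSpeed
    rw [div_le_div_iff₀ (by positivity) hp]; linarith
  · intro j hj hjn
    have h4 : (4 : ℝ) ^ (j + 1) ≤ 4 ^ n := pow_le_pow_right₀ (by norm_num) hjn
    have hp : (0 : ℝ) < 4 ^ j := by positivity
    have e1 : (4 : ℝ) ^ (j + 1) = 4 * 4 ^ j := by ring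
    have h6 : (2 : ℝ) / 4 ^ n ≤ 2 / 4 ^ (j + 1) :=
      div_le_div_of_nonneg_left (by norm_num) (by positivity) h4
    unfold secondSpeed
    rw [e1] at h6 ⊢
    have : (3 : ℝ) / 4 ^ j - 3 / (4 * 4 ^ j) = 9 / 2 * (2 / (4 * 4 ^ j)) := by
      field_simp; ring
    rw [this]
    have : (0 : ℝ) < 2 / (4 * 4 ^ j) := by positivity
    linarith

namespace Chain

variable {n : ℕ} {P V : ℕ → ℝ} {e t : ℝ} {h : ℕ → ℕ} {y v : ℕ → ℝ}

lemma mono (H : Chain n P V e t h y v) {e' : ℝ} (he : e ≤ e') (ht : 0 ≤ t) :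
    Chain n P V e' t h y v where
  bound := H.bound
  step := H.step
  move k hk hm := (H.move k hk hm).trans he
  rest k hk hm := by
    obtain ⟨h1, h2⟩ := H.rest k hk hm
    exact ⟨h1.trans he, h2.trans (mul_le_mul_of_nonneg_right he (by linarith))⟩

lemma congr (H : Chain n P V e t h y v) {v' : ℕ → ℝ}
    (hv : ∀ j, 1 ≤ j → j ≤ n → v' j = v j) : Chain n P V e t h y v' where
  bound := H.bound
  step := H.step
  move k hk hm := by rw [hv _ (by omega) (by omega)]; exact H.move k hk hm
  rest k hk hm := by rw [hv _ (by omega) (by omega)]; exact H.rest k hk hm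

lemma drift (H : Chain n P V e t h y v) {t' : ℝ} (ht : t ≤ t') {y' : ℕ → ℝ}
    (hy : ∀ k, y' k = y k + (t' - t) * v k) : Chain n P V e t' h y' v where
  bound := H.bound
  step := H.step
  move := H.move
  rest k hk hm := by
    obtain ⟨h1, h2⟩ := H.rest k hk hm
    refine ⟨h1, ?_⟩
    have := abs_drift ht h2 (p := 0) (by simpa using h1)
    rw [hy]
    simpa using this

/-- As long as an arm has not been hit by the maximal number of pulses, the apex lies behind the
first resting ball. -/
lemma apex_le (H : Chain n P V e t h y v) {κ : ℝ} (hκ : 0 ≤ κ)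
    (hgap : ∀ k < n, -κ ≤ y (k + 1) - y k) (hlt : h 0 < n) :
    y 0 ≤ P (h 0 + 1) + n * κ + e * (1 + t) := by
  have key : ∀ k ≤ n, (h 0 = h k + k ∨ y 0 ≤ P (h 0 + 1) + n * κ + e * (1 + t)) ∧
      y 0 ≤ y k + k * κ := by
    intro k
    induction k with
    | zero => intro _; simp
    | succ k ih =>
      intro hk
      obtain ⟨ih1, ih2⟩ := ih (by omega)
      have hg := hgap k (by omega)
      have h2 : y 0 ≤ y (k + 1) + (k + 1 : ℕ) * κ := by push_cast; linarith
      refine ⟨?_, h2⟩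
      rcases ih1 with ih1 | ih1
      · obtain ⟨s1, s2⟩ := H.step k (by omega)
        rcases Nat.lt_or_ge (h (k + 1)) (h k) with hlt' | hge
        · left; omega
        · right
          have heq : h k = h (k + 1) := by omega
          obtain ⟨-, h3⟩ := H.rest k (by omega) heq
          have h4 : k + 1 + h (k + 1) = h 0 + 1 := by omega
          rw [h4] at h3
          have h5 := (abs_le.1 h3).2
          have h6 : ((k + 1 : ℕ) : ℝ) * κ ≤ n * κ :=
            mul_le_mul_of_nonneg_right (by exact_mod_cast hk) hκ
          linarith
      · right; exact ih1
  rcases (key n le_rfl).1 with h1 | h1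
  · have := H.bound n le_rfl; omega
  · exact h1

/-- When the maximal number of pulses has entered an arm, all balls are moving. -/
lemma eq_of_full (H : Chain n P V e t h y v) (hfull : h 0 = n) : ∀ k ≤ n, h k = n - k := by
  intro k
  induction k with
  | zero => intro _; simpa using hfull
  | succ k ih =>
    intro hk
    have h1 := ih (by omega)
    have h2 := H.step k (by omega)
    have h3 := H.bound (k + 1) hk
    omega

lemma sum_le (H : Chain n P V e t h y v) : ∑ k ∈ Finset.range n, h k ≤ n * n := by
  calc ∑ k ∈ Finset.range n, h k ≤ ∑ k ∈ Finset.range n, n := by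
        refine Finset.sum_le_sum fun k hk => ?_
        have := H.bound k (Finset.mem_range.1 hk).le
        omega
    _ = n * n := by simp

lemma sum_of_full (H : Chain n P V e t h y v) (hfull : h 0 = n) :
    2 * ∑ k ∈ Finset.range n, h k = n * (n + 1) := by
  have h1 : ∑ k ∈ Finset.range n, h k = ∑ k ∈ Finset.range n, (n - k) :=
    Finset.sum_congr rfl fun k hk => H.eq_of_full hfull k (Finset.mem_range.1 hk).le
  have h2 : ∑ k ∈ Finset.range n, (n - k) = ∑ k ∈ Finset.range n, (k + 1) := by
    rw [← Finset.sum_range_reflect]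
    refine Finset.sum_congr rfl fun k hk => ?_
    have := Finset.mem_range.1 hk
    omega
  rw [h1, h2, Finset.sum_add_distrib, Finset.sum_const, Finset.card_range, mul_add,
    mul_comm 2 (∑ k ∈ Finset.range n, k), Finset.sum_range_id_mul_two]
  rcases n with _ | n
  · rfl
  · simp; ring

/-- A pulse is passed from ball `k` to the resting ball `k + 1`. -/
lemma pass (H : Chain n P V e t h y v) {k : ℕ} (hk : k < n) (hrest : h k = h (k + 1))
    (hprev : k ≠ 0 → h (k - 1) = h k + 1) {e' : ℝ} (he : e ≤ e') (ht : 0 ≤ t) {v' : ℕ → ℝ}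
    (h1 : |v' (k + 1) - V (h k + 1)| ≤ e')
    (h0 : k ≠ 0 → |v' k| ≤ e' ∧ |y k - P (k + h k + 1)| ≤ e' * (1 + t))
    (hv : ∀ j, 1 ≤ j → j ≤ n → j ≠ k → j ≠ k + 1 → v' j = v j) :
    Chain n P V e' t (Function.update h k (h k + 1)) y v' := by
  have H' := H.mono he ht
  have up : ∀ j, Function.update h k (h k + 1) j = if j = k then h k + 1 else h j := by
    intro j; by_cases hj : j = k
    · subst hj; simp
    · simp [hj]
  have b1 := H.bound (k + 1) hk
  constructor
  · intro j hj
    rw [up]; split_ifs with hjk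
    · omega
    · exact H.bound j hj
  · intro j hj
    rw [up, up]
    have s := H.step j hj
    split_ifs with c1 c2 c2
    · omega
    · subst c1
      have := hprev (by omega)
      simp only [Nat.add_sub_cancel] at this
      omega
    · subst c2; omega
    · exact s
  · intro j hj hm
    rw [up] at hm; rw [up] at hm
    rw [up]
    by_cases c2 : j = k
    · subst c2; simpa using h1
    · by_cases c1 : j + 1 = k
      · exfalso
        subst c1
        have := hprev (by omega)
        simp only [Nat.add_sub_cancel] at this
        simp at hm
        omega
      · simp only [c1, c2, if_false] at hm ⊢
        rw [hv (j + 1) (by omega) (by omega) (by omega) (by omega)]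
        exact H'.move j hj hm
  · intro j hj hm
    rw [up] at hm; rw [up] at hm
    rw [up]
    by_cases c2 : j = k
    · exfalso; subst c2; simp at hm; omega
    · by_cases c1 : j + 1 = k
      · subst c1
        have := h0 (by omega)
        simpa [add_assoc] using this
      · simp only [c1, c2, if_false] at hm ⊢
        rw [hv (j + 1) (by omega) (by omega) (by omega) (by omega)]
        exact H'.rest j hj hm

/-- Only a pulse reaching a resting ball leads to a collision inside an arm. -/
lemma hit_cases (H : Chain n P V e t h y v) (hV : SpeedProfile n V) {ρ κ : ℝ}
    (hP : ∀ k < n, ρ⁻¹ ≤ P (k + 1) - P k) (hκ : κ ≤ e)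
    (hsm1 : 4 * e < 2 / 4 ^ n) (hsm2 : 3 * (e * (1 + t)) < ρ⁻¹) (ht : 0 ≤ t) (he : 0 ≤ e)
    {k : ℕ} (hk : k + 1 < n) (hgap : |y (k + 1 + 1) - y (k + 1)| ≤ κ)
    (happ : v (k + 1 + 1) - v (k + 1) ≤ κ) : h (k + 1) = h (k + 1 + 1) ∧ h k = h (k + 1) + 1 := by
  have s1 := H.step k (by omega)
  have s2 := H.step (k + 1) hk
  have b1 := H.bound (k + 1) (by omega)
  have b2 := H.bound (k + 1 + 1) (by omega)
  have b0 := H.bound k (by omega)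
  rcases Nat.lt_or_ge (h (k + 1 + 1)) (h (k + 1)) with c | c
  · exfalso
    have m2 := abs_le.1 (H.move (k + 1) hk (by omega))
    have l2 := hV.lower (h (k + 1)) (by omega) (by omega)
    rcases Nat.lt_or_ge (h (k + 1)) (h k) with c' | c'
    · have m1 := abs_le.1 (H.move k (by omega) (by omega))
      have g := hV.gap (h (k + 1)) (by omega) (by omega)
      rw [show h k = h (k + 1) + 1 by omega] at m1
      linarith [m1.1, m1.2, m2.1, m2.2]
    · have m1 := abs_le.1 (H.rest k (by omega) (by omega)).1
      linarith [m1.1, m1.2, m2.1, m2.2]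
  · refine ⟨by omega, ?_⟩
    by_contra hne
    have r2 := abs_le.1 (H.rest (k + 1) hk (by omega)).2
    have r1 := abs_le.1 (H.rest k (by omega) (by omega)).2
    have hp := hP (k + 1 + h (k + 1)) (by omega)
    have g := abs_le.1 hgap
    have heq : k + 1 + 1 + h (k + 1 + 1) = k + 1 + h (k + 1) + 1 := by
      omega
    rw [heq] at r2
    have : κ ≤ e * (1 + t) := hκ.trans (le_mul_of_one_le_right he (by linarith))
    linarith [r1.1, r1.2, r2.1, r2.2]

/-- A collision between two balls of an arm away from the apex. -/
lemma hit (H : Chain n P V e t h y v) (hV : SpeedProfile n V) {ρ κ : ℝ}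
    (hP : ∀ k < n, ρ⁻¹ ≤ P (k + 1) - P k) (hκ : κ ≤ e)
    (hsm1 : 4 * e < 2 / 4 ^ n) (hsm2 : 3 * (e * (1 + t)) < ρ⁻¹) (ht : 0 ≤ t) (he : 0 ≤ e)
    {k : ℕ} (hk : k + 1 < n) (hgap : |y (k + 1 + 1) - y (k + 1)| ≤ κ)
    (happ : v (k + 1 + 1) - v (k + 1) ≤ κ) {v' : ℕ → ℝ} (h2 : |v' (k + 1 + 1) - v (k + 1)| ≤ κ)
    (h1 : |v' (k + 1) - v (k + 1 + 1)| ≤ κ)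
    (hv : ∀ j, 1 ≤ j → j ≤ n → j ≠ k + 1 → j ≠ k + 1 + 1 → v' j = v j) {e' : ℝ}
    (he' : 4 * e ≤ e') :
    Chain n P V e' t (Function.update h (k + 1) (h (k + 1) + 1)) y v' := by
  obtain ⟨c1, c2⟩ := H.hit_cases hV hP hκ hsm1 hsm2 ht he hk hgap happ
  have m := abs_le.1 (H.move k (by omega) c2)
  have r := H.rest (k + 1) hk c1
  have r1 := abs_le.1 r.1
  have r2 := abs_le.1 r.2
  have g := abs_le.1 hgap
  have h1' := abs_le.1 h1
  have h2' := abs_le.1 h2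
  have hκe : κ ≤ e * (1 + t) := hκ.trans (le_mul_of_one_le_right he (by linarith))
  have hee : 4 * (e * (1 + t)) ≤ e' * (1 + t) := by nlinarith
  rw [c2] at m
  have heq : k + 1 + 1 + h (k + 1 + 1) = k + 1 + h (k + 1) + 1 := by
    omega
  rw [heq] at r2
  refine H.pass hk c1 (fun _ => c2) (by linarith) ht ?_ (fun _ => ⟨?_, ?_⟩) hv
  · rw [abs_le]; constructor <;> linarith [m.1, m.2]
  · rw [abs_le]; constructor <;> linarith [r1.1, r1.2]
  · rw [abs_le]; constructor <;> linarith [r2.1, r2.2]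

end Chain

/-- Reduced positions and velocities of the two arms and of the train at one instant.
The index `0` always refers to the apex. -/
structure Snapshot where
  y₁ : ℕ → ℝ
  v₁ : ℕ → ℝ
  y₂ : ℕ → ℝ
  v₂ : ℕ → ℝ
  z : ℕ → ℝ
  vz : ℕ → ℝ

namespace Snapshot

/-- Exchange the two arms. -/
def swap (s : Snapshot) : Snapshot := ⟨s.y₂, s.v₂, s.y₁, s.v₁, s.z, s.vz⟩

/-- The snapshot after free motion during a time `d`. -/
def move (s : Snapshot) (d : ℝ) : Snapshot where
  y₁ k := s.y₁ k + d * s.v₁ k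
  v₁ := s.v₁
  y₂ k := s.y₂ k + d * s.v₂ k
  v₂ := s.v₂
  z k := s.z k + d * s.vz k
  vz := s.vz

/-- The apex belongs to the train and to both arms. -/
structure Linked (s : Snapshot) : Prop where
  pos : s.z 0 = s.y₁ 0 + s.y₂ 0
  vel : s.vz 0 = s.v₁ 0 + s.v₂ 0

/-- All reduced gaps are bounded below by `-κ`. -/
structure Separated (n m : ℕ) (κ : ℝ) (s : Snapshot) : Prop where
  arm₁ : ∀ k < n, -κ ≤ s.y₁ (k + 1) - s.y₁ k
  arm₂ : ∀ k < n, -κ ≤ s.y₂ (k + 1) - s.y₂ k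
  train : ∀ i, i + 1 < m → -κ ≤ s.z i - s.z (i + 1)

/-- The initial reduced gaps lie in `[ρ⁻¹, 1]`. -/
structure Spaced (n m : ℕ) (ρ : ℝ) (s : Snapshot) : Prop where
  arm₁ : ∀ k < n, ρ⁻¹ ≤ s.y₁ (k + 1) - s.y₁ k ∧ s.y₁ (k + 1) - s.y₁ k ≤ 1
  arm₂ : ∀ k < n, ρ⁻¹ ≤ s.y₂ (k + 1) - s.y₂ k ∧ s.y₂ (k + 1) - s.y₂ k ≤ 1
  train : ∀ i, i + 1 < m → ρ⁻¹ ≤ s.z i - s.z (i + 1) ∧ s.z i - s.z (i + 1) ≤ 1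
  linked : s.z 0 = s.y₁ 0 + s.y₂ 0

lemma Linked.swap {s : Snapshot} (h : s.Linked) : s.swap.Linked :=
  ⟨by simp [Snapshot.swap, h.pos, add_comm], by simp [Snapshot.swap, h.vel, add_comm]⟩

lemma Separated.swap {n m : ℕ} {κ : ℝ} {s : Snapshot} (h : s.Separated n m κ) :
    s.swap.Separated n m κ := ⟨h.arm₂, h.arm₁, h.train⟩

lemma Spaced.swap {n m : ℕ} {ρ : ℝ} {s : Snapshot} (h : s.Spaced n m ρ) :
    s.swap.Spaced n m ρ := ⟨h.arm₂, h.arm₁, h.train, by simp [Snapshot.swap, h.linked, add_comm]⟩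

/-- An approximately elastic collision between the balls `k` and `k + 1` of the first arm,
turning the snapshot `l` into `s`. -/
structure HitArm (n m : ℕ) (κ : ℝ) (l s : Snapshot) (k : ℕ) : Prop where
  lt : k < n
  contact : |l.y₁ (k + 1) - l.y₁ k| ≤ κ
  approach : l.v₁ (k + 1) - l.v₁ k ≤ κ
  outer : |s.v₁ (k + 1) - l.v₁ k| ≤ κ
  inner : |s.v₁ k - l.v₁ (k + 1)| ≤ κ
  other₁ : ∀ j ≤ n, j ≠ k → j ≠ k + 1 → s.v₁ j = l.v₁ j
  other₂ : ∀ j, 1 ≤ j → j ≤ n → s.v₂ j = l.v₂ j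
  apex : k ≠ 0 → s.v₂ 0 = l.v₂ 0
  turn : k = 0 → |s.v₂ 0 - (l.v₂ 0 + (l.v₁ 0 - l.v₁ 1) / 2)| ≤ κ
  train : ∀ i, 1 ≤ i → i < m → s.vz i = l.vz i
  pos : s.y₁ = l.y₁ ∧ s.y₂ = l.y₂ ∧ s.z = l.z

/-- An approximately elastic collision between the balls `i + 1` and `i` of the train. -/
structure HitTrain (n m : ℕ) (κ : ℝ) (l s : Snapshot) (i : ℕ) : Prop where
  lt : i + 1 < m
  contact : |l.z i - l.z (i + 1)| ≤ κ
  approach : l.vz i - l.vz (i + 1) ≤ κ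
  outer : |s.vz (i + 1) - l.vz i| ≤ κ
  inner : i ≠ 0 → |s.vz i - l.vz (i + 1)| ≤ κ
  other : ∀ j, 1 ≤ j → j < m → j ≠ i → j ≠ i + 1 → s.vz j = l.vz j
  push₁ : i = 0 → |s.v₁ 0 - (l.v₁ 0 + (l.vz 1 - l.vz 0) / 2)| ≤ κ
  push₂ : i = 0 → |s.v₂ 0 - (l.v₂ 0 + (l.vz 1 - l.vz 0) / 2)| ≤ κ
  keep : i ≠ 0 → s.v₁ 0 = l.v₁ 0 ∧ s.v₂ 0 = l.v₂ 0
  arm₁ : ∀ j, 1 ≤ j → j ≤ n → s.v₁ j = l.v₁ j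
  arm₂ : ∀ j, 1 ≤ j → j ≤ n → s.v₂ j = l.v₂ j
  pos : s.y₁ = l.y₁ ∧ s.y₂ = l.y₂ ∧ s.z = l.z

end Snapshot

/-- The state of the train: the balls `m - 1, …, r + 1` have already passed on their velocity, and
ball `r` is moving with unit speed (unless `r = 0`). -/
structure Train (m : ℕ) (Q : ℕ → ℝ) (e t : ℝ) (r : ℕ) (z v : ℕ → ℝ) : Prop where
  lt : r < m
  head : r ≠ 0 → |v r - 1| ≤ e ∧ |z r - (Q (m - 1) + t)| ≤ e * (1 + t)
  rest : ∀ i, 1 ≤ i → i < m → i ≠ r → |v i| ≤ e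
  before : ∀ i, 1 ≤ i → i < r → |z i - Q i| ≤ e * (1 + t)
  after : ∀ i, r < i → i < m → |z i - Q (i - 1)| ≤ e * (1 + t)

/-- The reduced position from which the apex starts towards the `(j + 1)`-st hit of the second
arm. -/
noncomputable def detour (s₀ : Snapshot) (j : ℕ) : ℝ :=
  if j = 0 then s₀.y₂ 0 + (s₀.y₁ 1 - s₀.y₁ 0) else s₀.y₂ j

/-- Upper bound for the time of the `(j + 1)`-st hit of the first arm. -/
noncomputable def firstHitBound (m : ℕ) (s₀ : Snapshot) (j : ℕ) : ℝ :=
  m - 1 + if j = 0 then 2 * (s₀.y₁ 1 - s₀.y₁ 0) else 4 / 3 * 4 ^ j - 2 / 3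

/-- Upper bound for the time of the `j`-th hit of the second arm. -/
noncomputable def secondHitBound (m : ℕ) (j : ℕ) : ℝ := m - 1 + (2 / 3 * 4 ^ j - 2 / 3)

/-- The apex has not been reached by the train. -/
structure Idle (s₀ : Snapshot) (e t : ℝ) (s : Snapshot) (r a b : ℕ) : Prop where
  hr : r ≠ 0
  ha : a = 0
  hb : b = 0
  vel₁ : |s.v₁ 0| ≤ e
  vel₂ : |s.v₂ 0| ≤ e
  pos₁ : |s.y₁ 0 - s₀.y₁ 0| ≤ e * (1 + t)
  pos₂ : |s.y₂ 0 - s₀.y₂ 0| ≤ e * (1 + t)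

/-- The apex has been hit by the train but has not reached any arm. -/
structure Start (m : ℕ) (s₀ : Snapshot) (e t : ℝ) (s : Snapshot) (r a b : ℕ) (τ : ℝ) : Prop where
  hr : r = 0
  ha : a = 0
  hb : b = 0
  vel₁ : |s.v₁ 0 - 1 / 2| ≤ e
  vel₂ : |s.v₂ 0 - 1 / 2| ≤ e
  pos₁ : |s.y₁ 0 - (s₀.y₁ 0 + (t - τ) * (1 / 2))| ≤ e * (1 + t)
  pos₂ : |s.y₂ 0 - (s₀.y₂ 0 + (t - τ) * (1 / 2))| ≤ e * (1 + t)
  time : τ ≤ m - 1 + e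

/-- The apex moves towards the second arm after the `(j + 1)`-st hit of the first one. -/
structure TowardSecond (n m : ℕ) (s₀ : Snapshot) (e t : ℝ) (s : Snapshot) (r a b : ℕ) (τ : ℝ)
    (j : ℕ) : Prop where
  hr : r = 0
  ha : a = j + 1
  hb : b = j
  vel₁ : |s.v₁ 0| ≤ e
  vel₂ : |s.v₂ 0 - secondSpeed (j + 1)| ≤ e
  pos₁ : |s.y₁ 0 - s₀.y₁ (j + 1)| ≤ e * (1 + t)
  pos₂ : |s.y₂ 0 - (detour s₀ j + (t - τ) * secondSpeed (j + 1))| ≤ e * (1 + t)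
  time : τ ≤ firstHitBound m s₀ j + e
  last : j + 1 = n → |s.y₁ 1 - s.y₁ 0 - (t - τ) * firstSpeed n| ≤ 2 * (e * (1 + t))

/-- The gaps of the arms after the last hit of the second arm at time `τ`. -/
structure Departing (n : ℕ) (ρ e t : ℝ) (s : Snapshot) (τ : ℝ) : Prop where
  second : |s.y₂ 1 - s.y₂ 0 - (t - τ) * secondSpeed n| ≤ 2 * (e * (1 + t))
  first : ∃ g, 0 ≤ g ∧ (n = 1 → g ≤ 2 / 3 + e) ∧ (n ≠ 1 → 2 * ρ⁻¹ - e ≤ g) ∧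
    |s.y₁ 1 - s.y₁ 0 - (g + (t - τ) * (firstSpeed n - firstSpeed (n + 1)))| ≤ 2 * (e * (1 + t))
  arm₁ : ∀ k, 1 ≤ k → k < n →
    (t - τ) * (2 / 4 ^ n) - 2 * (e * (1 + t)) ≤ s.y₁ (k + 1) - s.y₁ k
  arm₂ : ∀ k, 1 ≤ k → k < n →
    (t - τ) * (2 / 4 ^ n) - 2 * (e * (1 + t)) ≤ s.y₂ (k + 1) - s.y₂ k

/-- The apex moves towards the first arm after the `j`-th hit of the second one. -/
structure TowardFirst (n m : ℕ) (ρ : ℝ) (s₀ : Snapshot) (e t : ℝ) (s : Snapshot) (r a b : ℕ)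
    (τ : ℝ) (j : ℕ) : Prop where
  hr : r = 0
  ha : a = j
  hb : b = j
  hj : 1 ≤ j
  vel₁ : |s.v₁ 0 - firstSpeed (j + 1)| ≤ e
  vel₂ : |s.v₂ 0| ≤ e
  pos₁ : |s.y₁ 0 - (s₀.y₁ j + (t - τ) * firstSpeed (j + 1))| ≤ e * (1 + t)
  pos₂ : |s.y₂ 0 - s₀.y₂ j| ≤ e * (1 + t)
  time : τ ≤ secondHitBound m j + e
  last : j = n → Departing n ρ e t s τ

/-- The state of the whole system at time `t`, up to the error `e`. -/
structure Relay (n m : ℕ) (ρ : ℝ) (s₀ : Snapshot) (e t : ℝ) (s : Snapshot) (r : ℕ)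
    (g₁ g₂ : ℕ → ℕ) (τ : ℝ) : Prop where
  time : τ ≤ t
  train : Train m s₀.z e t r s.z s.vz
  arm₁ : Chain n s₀.y₁ firstSpeed e t g₁ s.y₁ s.v₁
  arm₂ : Chain n s₀.y₂ secondSpeed e t g₂ s.y₂ s.v₂
  apex : Idle s₀ e t s r (g₁ 0) (g₂ 0) ∨ Start m s₀ e t s r (g₁ 0) (g₂ 0) τ ∨
    (∃ j, TowardSecond n m s₀ e t s r (g₁ 0) (g₂ 0) τ j) ∨
    ∃ j, TowardFirst n m ρ s₀ e t s r (g₁ 0) (g₂ 0) τ j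

lemma abs_drift' {y v c e s t : ℝ} (hst : s ≤ t) (h1 : |y - c| ≤ e * (1 + s))
    (h2 : |v| ≤ e) : |(y + (t - s) * v) - c| ≤ e * (1 + t) := by
  have := abs_drift hst h1 (p := 0) (by simpa using h2)
  simpa using this

lemma abs_drift_from {y v c p e s t τ : ℝ} (hst : s ≤ t)
    (h1 : |y - (c + (s - τ) * p)| ≤ e * (1 + s))
    (h2 : |v - p| ≤ e) : |(y + (t - s) * v) - (c + (t - τ) * p)| ≤ e * (1 + t) := by
  have := abs_drift hst h1 h2
  rwa [show c + (s - τ) * p + (t - s) * p = c + (t - τ) * p by ring] at this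

lemma abs_drift_gap {y y' v v' c p p' e s t τ : ℝ} (hst : s ≤ t)
    (h1 : |y' - y - (c + (s - τ) * (p' - p))| ≤ 2 * (e * (1 + s)))
    (h2 : |v - p| ≤ e) (h2' : |v' - p'| ≤ e) :
    |(y' + (t - s) * v') - (y + (t - s) * v) - (c + (t - τ) * (p' - p))| ≤
      2 * (e * (1 + t)) := by
  have h : |(v' - v) - (p' - p)| ≤ 2 * e := by
    rw [abs_le] at *; constructor <;> linarith [h2.1, h2.2, h2'.1, h2'.2]
  have := abs_drift (e := 2 * e) hst (h1.trans_eq (by ring)) h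
  rw [show c + (s - τ) * (p' - p) + (t - s) * (p' - p) = c + (t - τ) * (p' - p) by ring] at this
  rw [show y' + (t - s) * v' - (y + (t - s) * v) = y' - y + (t - s) * (v' - v) by ring]
  exact this.trans_eq (by ring)

lemma Train.drift {m : ℕ} {Q : ℕ → ℝ} {e t : ℝ} {r : ℕ} {z v z' : ℕ → ℝ}
    (H : Train m Q e t r z v) {t' : ℝ} (ht : t ≤ t') (hz : ∀ i, z' i = z i + (t' - t) * v i) :
    Train m Q e t' r z' v where
  lt := H.lt
  head hr := by
    obtain ⟨h1, h2⟩ := H.head hr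
    refine ⟨h1, ?_⟩
    have := abs_drift ht h2 h1
    rw [hz]
    rwa [show Q (m - 1) + t + (t' - t) * 1 = Q (m - 1) + t' by ring] at this
  rest := H.rest
  before i h1 h2 := by
    rw [hz]; exact abs_drift' ht (H.before i h1 h2) (H.rest i h1 (h2.trans H.lt) h2.ne)
  after i h1 h2 := by
    rw [hz]; exact abs_drift' ht (H.after i h1 h2) (H.rest i (by omega) h2 h1.ne')

lemma Train.mono {m : ℕ} {Q : ℕ → ℝ} {e t : ℝ} {r : ℕ} {z v : ℕ → ℝ}
    (H : Train m Q e t r z v) {e' : ℝ} (he : e ≤ e') (ht : 0 ≤ t) : Train m Q e' t r z v where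
  lt := H.lt
  head hr := ⟨(H.head hr).1.trans he,
    (H.head hr).2.trans (mul_le_mul_of_nonneg_right he (by linarith))⟩
  rest i h1 h2 h3 := (H.rest i h1 h2 h3).trans he
  before i h1 h2 := (H.before i h1 h2).trans (mul_le_mul_of_nonneg_right he (by linarith))
  after i h1 h2 := (H.after i h1 h2).trans (mul_le_mul_of_nonneg_right he (by linarith))

lemma Train.congr {m : ℕ} {Q : ℕ → ℝ} {e t : ℝ} {r : ℕ} {z v : ℕ → ℝ}
    (H : Train m Q e t r z v) {v' : ℕ → ℝ} (hv : ∀ i, 1 ≤ i → i < m → v' i = v i) :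
    Train m Q e t r z v' where
  lt := H.lt
  head hr := by rw [hv r (by omega) H.lt]; exact H.head hr
  rest i h1 h2 h3 := by rw [hv i h1 h2]; exact H.rest i h1 h2 h3
  before := H.before
  after := H.after

lemma Chain.arm_drift {n : ℕ} {P V : ℕ → ℝ} {e t t' τ : ℝ} {g : ℕ → ℕ} {y v : ℕ → ℝ}
    (H : Chain n P V e t g y v) (hV : SpeedProfile n V) (ht : t ≤ t') (hfull : g 0 = n)
    {k : ℕ} (hk : 1 ≤ k) (hkn : k < n)
    (h : (t - τ) * (2 / 4 ^ n) - 2 * (e * (1 + t)) ≤ y (k + 1) - y k) :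
    (t' - τ) * (2 / 4 ^ n) - 2 * (e * (1 + t')) ≤
      y (k + 1) + (t' - t) * v (k + 1) - (y k + (t' - t) * v k) := by
  obtain ⟨k, rfl⟩ : ∃ l, k = l + 1 := ⟨k - 1, by omega⟩
  have f := H.eq_of_full hfull
  have f0 := f k (by omega)
  have f1 := f (k + 1) (by omega)
  have f2 := f (k + 1 + 1) (by omega)
  have m0 := abs_le.1 (H.move k (by omega) (by omega))
  have m1 := abs_le.1 (H.move (k + 1) (by omega) (by omega))
  have hg := hV.gap (g (k + 1)) (by omega) (by omega)
  rw [show g k = g (k + 1) + 1 by omega] at m0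
  have h1 : (2 / 4 ^ n - 2 * e) ≤ v (k + 1 + 1) - v (k + 1) := by
    linarith [m0.1, m0.2, m1.1, m1.2]
  have h2 := mul_le_mul_of_nonneg_left h1 (sub_nonneg.2 ht)
  nlinarith

lemma Chain.vel_one {n : ℕ} {P V : ℕ → ℝ} {e t : ℝ} {g : ℕ → ℕ} {y v : ℕ → ℝ}
    (H : Chain n P V e t g y v) (hn : 0 < n) (hfull : g 0 = n) : |v 1 - V n| ≤ e := by
  have f := H.eq_of_full hfull 1 hn
  have := H.move 0 hn (by rw [zero_add]; omega)
  rwa [zero_add, hfull] at this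

namespace Relay

variable {n m : ℕ} {ρ : ℝ} {s₀ s : Snapshot} {e t τ : ℝ} {r : ℕ} {g₁ g₂ : ℕ → ℕ}

lemma drift (H : Relay n m ρ s₀ e t s r g₁ g₂ τ) (hn : 0 < n) {t' : ℝ} (ht : t ≤ t') :
    Relay n m ρ s₀ e t' (s.move (t' - t)) r g₁ g₂ τ where
  time := H.time.trans ht
  train := H.train.drift ht fun _ => rfl
  arm₁ := H.arm₁.drift ht fun _ => rfl
  arm₂ := H.arm₂.drift ht fun _ => rfl
  apex := by
    rcases H.apex with A | A | ⟨j, A⟩ | ⟨j, A⟩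
    · exact .inl ⟨A.hr, A.ha, A.hb, A.vel₁, A.vel₂, abs_drift' ht A.pos₁ A.vel₁,
        abs_drift' ht A.pos₂ A.vel₂⟩
    · exact .inr (.inl ⟨A.hr, A.ha, A.hb, A.vel₁, A.vel₂, abs_drift_from ht A.pos₁ A.vel₁,
        abs_drift_from ht A.pos₂ A.vel₂, A.time⟩)
    · refine .inr (.inr (.inl ⟨j, A.hr, A.ha, A.hb, A.vel₁, A.vel₂, abs_drift' ht A.pos₁ A.vel₁,
        abs_drift_from ht A.pos₂ A.vel₂, A.time, fun hj => ?_⟩))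
      have := abs_drift_gap (c := 0) (p := 0) (p' := firstSpeed n) (τ := τ) ht
        (by simpa using A.last hj) (by simpa using A.vel₁)
        (H.arm₁.vel_one hn (A.ha.trans hj))
      simpa [Snapshot.move] using this
    · refine .inr (.inr (.inr ⟨j, A.hr, A.ha, A.hb, A.hj, A.vel₁, A.vel₂,
        abs_drift_from ht A.pos₁ A.vel₁, abs_drift' ht A.pos₂ A.vel₂, A.time, fun hj => ?_⟩))
      obtain ⟨D1, ⟨g, D2, D3, D4, D5⟩, D6, D7⟩ := A.last hj
      refine ⟨?_, ⟨g, D2, D3, D4, ?_⟩, fun k hk hkn => ?_, fun k hk hkn => ?_⟩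
      · have := abs_drift_gap (c := 0) (p := 0) (p' := secondSpeed n) (τ := τ) ht
          (by simpa using D1) (by simpa using A.vel₂) (H.arm₂.vel_one hn (A.hb.trans hj))
        simpa [Snapshot.move] using this
      · exact abs_drift_gap ht D5 (by rw [← hj]; exact A.vel₁)
          (H.arm₁.vel_one hn (A.ha.trans hj))
      · exact H.arm₁.arm_drift (firstSpeed_profile hn) ht (A.ha.trans hj) hk hkn (D6 k hk hkn)
      · exact H.arm₂.arm_drift (secondSpeed_profile n) ht (A.hb.trans hj) hk hkn (D7 k hk hkn)

/-- The state of the apex is not affected by changes of the velocities of the other balls, and the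
error may be enlarged. -/
lemma apex_congr (H : Relay n m ρ s₀ e t s r g₁ g₂ τ) {e' : ℝ} (he : e ≤ e') (ht : 0 ≤ t)
    {s' : Snapshot} (hs₁ : s'.y₁ = s.y₁) (hs₂ : s'.y₂ = s.y₂) (hv₁ : s'.v₁ 0 = s.v₁ 0)
    (hv₂ : s'.v₂ 0 = s.v₂ 0) :
    Idle s₀ e' t s' r (g₁ 0) (g₂ 0) ∨ Start m s₀ e' t s' r (g₁ 0) (g₂ 0) τ ∨
    (∃ j, TowardSecond n m s₀ e' t s' r (g₁ 0) (g₂ 0) τ j) ∨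
    ∃ j, TowardFirst n m ρ s₀ e' t s' r (g₁ 0) (g₂ 0) τ j := by
  have hE : e * (1 + t) ≤ e' * (1 + t) := mul_le_mul_of_nonneg_right he (by linarith)
  rcases H.apex with A | A | ⟨j, A⟩ | ⟨j, A⟩
  · left
    constructor <;> try simp only [hs₁, hs₂, hv₁, hv₂]
    exacts [A.hr, A.ha, A.hb, A.vel₁.trans he, A.vel₂.trans he, A.pos₁.trans hE, A.pos₂.trans hE]
  · right; left
    constructor <;> try simp only [hs₁, hs₂, hv₁, hv₂]
    exacts [A.hr, A.ha, A.hb, A.vel₁.trans he, A.vel₂.trans he, A.pos₁.trans hE, A.pos₂.trans hE,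
      A.time.trans (by linarith)]
  · right; right; left
    refine ⟨j, ?_⟩
    constructor <;> try simp only [hs₁, hs₂, hv₁, hv₂]
    exacts [A.hr, A.ha, A.hb, A.vel₁.trans he, A.vel₂.trans he, A.pos₁.trans hE, A.pos₂.trans hE,
      A.time.trans (by linarith), fun hj => (A.last hj).trans (by linarith)]
  · right; right; right
    refine ⟨j, ?_⟩
    constructor <;> try simp only [hs₁, hs₂, hv₁, hv₂]
    · exact A.hr
    · exact A.ha
    · exact A.hb
    · exact A.hj
    · exact A.vel₁.trans he
    · exact A.vel₂.trans he
    · exact A.pos₁.trans hE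
    · exact A.pos₂.trans hE
    · exact A.time.trans (by linarith)
    · intro hj
      obtain ⟨D1, ⟨g, D2, D3, D4, D5⟩, D6, D7⟩ := A.last hj
      constructor <;> try simp only [hs₁, hs₂]
      · exact D1.trans (by linarith)
      · exact ⟨g, D2, fun h => (D3 h).trans (by linarith), fun h => le_trans (by linarith) (D4 h),
          D5.trans (by linarith)⟩
      · exact fun k hk hkn => le_trans (by linarith) (D6 k hk hkn)
      · exact fun k hk hkn => le_trans (by linarith) (D7 k hk hkn)

end Relay

/-- The error `e` at time `t` is small, and `e'` is a sufficiently enlarged error. -/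
structure Admissible (n : ℕ) (ρ κ e e' t : ℝ) : Prop where
  pos : 0 < n
  two_le : 2 ≤ ρ
  nonneg : 0 ≤ κ
  le : κ ≤ e
  time : 0 ≤ t
  small : 100 * 4 ^ n * (e * (1 + t)) ≤ ρ⁻¹
  large : 100 * 4 ^ n * (e * (1 + t)) ≤ e'

namespace Admissible

variable {n : ℕ} {ρ κ e e' t : ℝ}

lemma err_nonneg (A : Admissible n ρ κ e e' t) : 0 ≤ e := A.nonneg.trans A.le

lemma le_mul (A : Admissible n ρ κ e e' t) : e ≤ e * (1 + t) :=
  le_mul_of_one_le_right A.err_nonneg (by linarith [A.time])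

lemma mul_nonneg (A : Admissible n ρ κ e e' t) : 0 ≤ e * (1 + t) := A.err_nonneg.trans A.le_mul

lemma inv_le (A : Admissible n ρ κ e e' t) : ρ⁻¹ ≤ 1 / 2 := by
  rw [one_div]; exact inv_anti₀ (by norm_num) A.two_le

lemma four_le_pow (A : Admissible n ρ κ e e' t) : (4 : ℝ) ≤ 4 ^ n := by
  simpa using pow_le_pow_right₀ (by norm_num : (1 : ℝ) ≤ 4) A.pos

lemma mul_le_inv (A : Admissible n ρ κ e e' t) : 400 * (e * (1 + t)) ≤ ρ⁻¹ := by
  have := mul_le_mul_of_nonneg_right A.four_le_pow A.mul_nonneg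
  linarith [A.small]

lemma mul_le_large (A : Admissible n ρ κ e e' t) : 400 * (e * (1 + t)) ≤ e' := by
  have := mul_le_mul_of_nonneg_right A.four_le_pow A.mul_nonneg
  linarith [A.large]

lemma mul_le_pow (A : Admissible n ρ κ e e' t) : 200 * (e * (1 + t)) ≤ 1 / 4 ^ n := by
  have : (0 : ℝ) < 4 ^ n := by positivity
  rw [le_div_iff₀ this]
  linarith [A.small, A.inv_le]

lemma large_nonneg (A : Admissible n ρ κ e e' t) : 0 ≤ e' := by
  linarith [A.mul_le_large, A.mul_nonneg]

lemma large_le_mul (A : Admissible n ρ κ e e' t) : e' ≤ e' * (1 + t) :=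
  le_mul_of_one_le_right A.large_nonneg (by linarith [A.time])

lemma le_large (A : Admissible n ρ κ e e' t) : e ≤ e' := by
  linarith [A.mul_le_large, A.le_mul, A.mul_nonneg]

end Admissible

lemma secondSpeed_eq (j : ℕ) : secondSpeed (j + 1 + 1) = firstSpeed (j + 1 + 1) / 2 := by
  simp only [secondSpeed, firstSpeed]
  rw [if_neg (by omega)]; ring

lemma firstSpeed_eq (j : ℕ) : firstSpeed (j + 1 + 1) = secondSpeed (j + 1) / 2 := by
  simp only [secondSpeed, firstSpeed]
  rw [if_neg (by omega)]
  field_simp; ring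

lemma firstSpeed_gap {n j : ℕ} (hj : 1 ≤ j) (hjn : j ≤ n) :
    1 / 2 / 4 ^ n ≤ firstSpeed j - firstSpeed (j + 1) := by
  have h4 : (4 : ℝ) ^ j ≤ 4 ^ n := pow_le_pow_right₀ (by norm_num) hjn
  have h6 : (1 / 2 : ℝ) / 4 ^ n ≤ 1 / 2 / 4 ^ j :=
    div_le_div_of_nonneg_left (by norm_num) (by positivity) h4
  refine h6.trans ?_
  obtain ⟨j, rfl⟩ : ∃ i, j = i + 1 := ⟨j - 1, by omega⟩
  rcases j with _ | j
  · norm_num [firstSpeed]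
  · simp only [firstSpeed]
    rw [if_neg (by omega), if_neg (by omega)]
    have : (6 : ℝ) / 4 ^ (j + 1 + 1) - 6 / 4 ^ (j + 1 + 1 + 1) = 9 * (1 / 2 / 4 ^ (j + 1 + 1)) := by
      field_simp; ring
    rw [this]
    have : (0 : ℝ) < 1 / 2 / 4 ^ (j + 1 + 1) := by positivity
    linarith

lemma firstSpeed_succ_lower {n j : ℕ} (hj : 1 ≤ j) (hjn : j ≤ n) :
    1 / 4 ^ n ≤ firstSpeed (j + 1) := by
  have h4 : (4 : ℝ) ^ j ≤ 4 ^ n := pow_le_pow_right₀ (by norm_num) hjn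
  have h6 : (1 : ℝ) / 4 ^ n ≤ 1 / 4 ^ j :=
    div_le_div_of_nonneg_left (by norm_num) (by positivity) h4
  refine h6.trans ?_
  simp only [firstSpeed]
  rw [if_neg (by omega), pow_succ, div_le_div_iff₀ (by positivity) (by positivity)]
  have : (0 : ℝ) < 4 ^ j := by positivity
  linarith

namespace Chain

variable {n : ℕ} {P V : ℕ → ℝ} {ρ κ e e' t : ℝ} {h : ℕ → ℕ} {y v : ℕ → ℝ}

/-- The apex does not hit an arm when it rests. -/
lemma not_hit_of_rest (H : Chain n P V e t h y v) (A : Admissible n ρ κ e e' t)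
    (hV : SpeedProfile n V) (hP : ∀ k < n, ρ⁻¹ ≤ P (k + 1) - P k) (hv : |v 0| ≤ e)
    (hy : |y 0 - P (h 0)| ≤ e * (1 + t)) (hgap : |y 1 - y 0| ≤ κ) (happ : v 1 - v 0 ≤ κ) :
    False := by
  have b0 := H.bound 0 (by omega)
  have b1 := H.bound 1 A.pos
  have s := H.step 0 A.pos
  rw [zero_add] at s
  have i1 := A.mul_le_inv
  have i2 := A.mul_le_pow
  have i3 := A.le_mul
  have i4 := A.le
  have hv' := abs_le.1 hv
  have hy' := abs_le.1 hy
  have hg := abs_le.1 hgap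
  have hp : (0 : ℝ) < 1 / 4 ^ n := by have := pow_pos (by norm_num : (0 : ℝ) < 4) n; positivity
  have hr : 0 < ρ⁻¹ := inv_pos.2 (by linarith [A.two_le])
  rcases Nat.lt_or_ge (h 1) (h 0) with c | c
  · have m := abs_le.1 (H.move 0 A.pos (by rw [zero_add]; omega))
    rw [zero_add] at m
    have l := hV.lower (h 0) (by omega) (by omega)
    have : (2 : ℝ) / 4 ^ n = 2 * (1 / 4 ^ n) := by ring
    linarith [m.1, m.2]
  · have r := abs_le.1 (H.rest 0 A.pos (by rw [zero_add]; omega)).2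
    rw [zero_add, show 1 + h 1 = h 0 + 1 by omega] at r
    have := hP (h 0) (by omega)
    linarith [r.1, r.2]

/-- If the apex is slower than the last pulse it can only hit a resting ball. -/
lemma rest_of_hit (H : Chain n P V e t h y v) (A : Admissible n ρ κ e e' t)
    (hv : h 0 ≠ 0 → v 0 ≤ V (h 0) - 1 / 2 / 4 ^ n + e) (happ : v 1 - v 0 ≤ κ) :
    h 0 = h 1 ∧ h 0 + 1 ≤ n ∧ |v 1| ≤ e ∧ |y 1 - P (h 0 + 1)| ≤ e * (1 + t) := by
  have b1 := H.bound 1 A.pos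
  have s := H.step 0 A.pos
  rw [zero_add] at s
  have i2 := A.mul_le_pow
  have i3 := A.le_mul
  have i4 := A.le
  have hp : (0 : ℝ) < 1 / 4 ^ n := by have := pow_pos (by norm_num : (0 : ℝ) < 4) n; positivity
  rcases Nat.lt_or_ge (h 1) (h 0) with c | c
  · exfalso
    have m := abs_le.1 (H.move 0 A.pos (by rw [zero_add]; omega))
    rw [zero_add] at m
    have l := hv (by omega)
    have : (1 : ℝ) / 2 / 4 ^ n = 1 / 2 * (1 / 4 ^ n) := by ring
    linarith [m.1, m.2]
  · have e1 : h 0 = h 1 := by omega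
    have r := H.rest 0 A.pos (by rw [zero_add]; omega)
    rw [zero_add, show 1 + h 1 = h 0 + 1 by omega] at r
    exact ⟨e1, by omega, r.1, r.2⟩

/-- The apex passes a new pulse to the first ball of an arm. -/
lemma pass_zero (H : Chain n P V e t h y v) (A : Admissible n ρ κ e e' t) (h01 : h 0 = h 1)
    {v' : ℕ → ℝ} (h1 : |v' 1 - V (h 0 + 1)| ≤ e') (hv : ∀ j ≤ n, j ≠ 0 → j ≠ 1 → v' j = v j) :
    Chain n P V e' t (Function.update h 0 (h 0 + 1)) y v' :=
  H.pass A.pos h01 (fun h => absurd rfl h) A.le_large A.time h1 (fun h => absurd rfl h)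
    fun j _ hj h0 h1 => hv j hj h0 h1

/-- Before any pulse has entered an arm, the speed profile is irrelevant. -/
lemma of_zero (H : Chain n P V e t h y v) (h0 : h 0 = 0) (V' : ℕ → ℝ) :
    Chain n P V' e t h y v := by
  have key : ∀ k ≤ n, h k = 0 := by
    intro k
    induction k with
    | zero => intro _; exact h0
    | succ k ih =>
      intro hk
      have := ih (by omega)
      have := H.step k (by omega)
      omega
  refine ⟨H.bound, H.step, fun k hk hm => ?_, H.rest⟩
  have := key k hk.le
  omega

end Chain

section Timing

variable {n m : ℕ} {ρ : ℝ} {s₀ s : Snapshot} {e t τ : ℝ} {r a b j : ℕ}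

lemma Start.time_le (A : Start m s₀ e t s r a b τ) {δ : ℝ} (h : s.y₁ 0 ≤ s₀.y₁ 1 + δ) :
    t ≤ firstHitBound m s₀ 0 + e + 2 * (δ + e * (1 + t)) := by
  have h1 := abs_le.1 A.pos₁
  have h2 := A.time
  simp only [firstHitBound, if_true]
  linarith [h1.1]

lemma TowardSecond.travel_le (A : TowardSecond n m s₀ e t s r a b τ j) {δ : ℝ}
    (h : s.y₂ 0 ≤ s₀.y₂ (j + 1) + δ) :
    t - τ ≤ 4 ^ (j + 1) / 3 * (s₀.y₂ (j + 1) - detour s₀ j + (δ + e * (1 + t))) := by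
  have h1 := (abs_le.1 A.pos₂).1
  have hp : (0 : ℝ) < 4 ^ (j + 1) := by positivity
  have h3 : (t - τ) * secondSpeed (j + 1) ≤
      s₀.y₂ (j + 1) - detour s₀ j + (δ + e * (1 + t)) := by linarith
  simp only [secondSpeed] at h3
  have h4 := mul_le_mul_of_nonneg_left h3 (by positivity : (0 : ℝ) ≤ 4 ^ (j + 1) / 3)
  rwa [show (4 : ℝ) ^ (j + 1) / 3 * ((t - τ) * (3 / 4 ^ (j + 1))) = t - τ by field_simp] at h4

lemma TowardSecond.time_le (A : TowardSecond n m s₀ e t s r a b τ j) {δ : ℝ}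
    (h₀ : s₀.Spaced n m ρ) (hj : j < n) (h : s.y₂ 0 ≤ s₀.y₂ (j + 1) + δ) :
    t ≤ secondHitBound m (j + 1) + e + 4 ^ (j + 1) / 3 * (δ + e * (1 + t)) := by
  have h1 := A.travel_le h
  have h2 := A.time
  rcases j with _ | j
  · have g1 := h₀.arm₁ 0 hj
    have g2 := h₀.arm₂ 0 hj
    simp only [firstHitBound, secondHitBound, detour, if_true] at *
    norm_num at *
    linarith
  · have g2 := h₀.arm₂ (j + 1) hj
    simp only [firstHitBound, secondHitBound, detour, Nat.succ_ne_zero, if_false] at *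
    have hp : (0 : ℝ) < 4 ^ (j + 1) := by positivity
    have h3 := mul_le_mul_of_nonneg_left g2.2 (by positivity : (0 : ℝ) ≤ 4 ^ (j + 1 + 1) / 3)
    rw [pow_succ (4 : ℝ) (j + 1)] at *
    linarith

lemma TowardFirst.time_le (A : TowardFirst n m ρ s₀ e t s r a b τ j) {δ : ℝ}
    (h₀ : s₀.Spaced n m ρ) (hj : j < n) (h : s.y₁ 0 ≤ s₀.y₁ (j + 1) + δ) :
    t ≤ firstHitBound m s₀ j + e + 4 ^ (j + 1) / 6 * (δ + e * (1 + t)) := by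
  have h1 := (abs_le.1 A.pos₁).1
  have h2 := A.time
  have h4 := A.hj
  have g := h₀.arm₁ j hj
  have hp : (0 : ℝ) < 4 ^ (j + 1) := by positivity
  have h3 : (t - τ) * firstSpeed (j + 1) ≤ 1 + (δ + e * (1 + t)) := by linarith
  simp only [firstSpeed] at h3
  rw [if_neg (by omega)] at h3
  have h5 := mul_le_mul_of_nonneg_left h3 (by positivity : (0 : ℝ) ≤ 4 ^ (j + 1) / 6)
  rw [show (4 : ℝ) ^ (j + 1) / 6 * ((t - τ) * (6 / 4 ^ (j + 1))) = t - τ by field_simp] at h5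
  simp only [firstHitBound, secondHitBound] at *
  rw [if_neg (by omega)]
  rw [pow_succ (4 : ℝ) j] at *
  linarith

end Timing

namespace Relay

variable {n m : ℕ} {ρ κ : ℝ} {s₀ l s : Snapshot} {e e' t τ : ℝ} {r : ℕ} {g₁ g₂ : ℕ → ℕ}

/-- A collision inside the first arm. -/
lemma hit₁ (H : Relay n m ρ s₀ e t l r g₁ g₂ τ) (A : Admissible n ρ κ e e' t)
    (h₀ : s₀.Spaced n m ρ) {k : ℕ} (K : Snapshot.HitArm n m κ l s (k + 1)) :
    Relay n m ρ s₀ e' t s r (Function.update g₁ (k + 1) (g₁ (k + 1) + 1)) g₂ τ where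
  time := H.time
  train := by
    rw [K.pos.2.2]
    exact (H.train.mono A.le_large A.time).congr K.train
  arm₁ := by
    rw [K.pos.1]
    refine H.arm₁.hit (firstSpeed_profile A.pos) (fun k hk => (h₀.arm₁ k hk).1) A.le ?_ ?_ A.time
      A.err_nonneg K.lt K.contact K.approach K.outer K.inner (fun j _ h2 h3 h4 =>
        K.other₁ j h2 h3 h4) ?_
    · have : (2 : ℝ) / 4 ^ n = 2 * (1 / 4 ^ n) := by ring
      have hp : (0 : ℝ) < 1 / 4 ^ n := by
        have := pow_pos (by norm_num : (0 : ℝ) < 4) n; positivity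
      linarith [A.mul_le_pow, A.le_mul, A.err_nonneg]
    · have hr : 0 < ρ⁻¹ := inv_pos.2 (by linarith [A.two_le])
      linarith [A.mul_le_inv, A.mul_nonneg]
    · linarith [A.mul_le_large, A.le_mul, A.err_nonneg]
  arm₂ := by
    rw [K.pos.2.1]
    exact (H.arm₂.mono A.le_large A.time).congr fun j h1 h2 => K.other₂ j h1 h2
  apex := by
    rw [Function.update_of_ne (by omega)]
    exact H.apex_congr A.le_large A.time K.pos.1 K.pos.2.1 (K.other₁ 0 (by omega) (by omega)
      (by omega)) (K.apex (by omega))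

/-- A collision inside the second arm. -/
lemma hit₂ (H : Relay n m ρ s₀ e t l r g₁ g₂ τ) (A : Admissible n ρ κ e e' t)
    (h₀ : s₀.Spaced n m ρ) {k : ℕ} (K : Snapshot.HitArm n m κ l.swap s.swap (k + 1)) :
    Relay n m ρ s₀ e' t s r g₁ (Function.update g₂ (k + 1) (g₂ (k + 1) + 1)) τ where
  time := H.time
  train := by
    have : s.z = l.z := K.pos.2.2
    rw [this]
    exact (H.train.mono A.le_large A.time).congr K.train
  arm₁ := by
    have : s.y₁ = l.y₁ := K.pos.2.1
    rw [this]
    exact (H.arm₁.mono A.le_large A.time).congr fun j h1 h2 => K.other₂ j h1 h2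
  arm₂ := by
    have : s.y₂ = l.y₂ := K.pos.1
    rw [this]
    refine H.arm₂.hit (secondSpeed_profile n) (fun k hk => (h₀.arm₂ k hk).1) A.le ?_ ?_ A.time
      A.err_nonneg K.lt K.contact K.approach K.outer K.inner (fun j _ h2 h3 h4 =>
        K.other₁ j h2 h3 h4) ?_
    · have : (2 : ℝ) / 4 ^ n = 2 * (1 / 4 ^ n) := by ring
      have hp : (0 : ℝ) < 1 / 4 ^ n := by
        have := pow_pos (by norm_num : (0 : ℝ) < 4) n; positivity
      linarith [A.mul_le_pow, A.le_mul, A.err_nonneg]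
    · have hr : 0 < ρ⁻¹ := inv_pos.2 (by linarith [A.two_le])
      linarith [A.mul_le_inv, A.mul_nonneg]
    · linarith [A.mul_le_large, A.le_mul, A.err_nonneg]
  apex := by
    rw [Function.update_of_ne (by omega)]
    exact H.apex_congr A.le_large A.time K.pos.2.1 K.pos.1 (K.apex (by omega))
      (K.other₁ 0 (by omega) (by omega) (by omega))

/-- The apex hits the first arm. -/
lemma hit_zero₁ (H : Relay n m ρ s₀ e t l r g₁ g₂ τ) (A : Admissible n ρ κ e e' t)
    (h₀ : s₀.Spaced n m ρ) (K : Snapshot.HitArm n m κ l s 0) :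
    Relay n m ρ s₀ e' t s r (Function.update g₁ 0 (g₁ 0 + 1)) g₂ t := by
  obtain ⟨K1, K2, K3⟩ := K.pos
  have hgap := K.contact
  have happ := K.approach
  have hout := K.outer
  have hin := K.inner
  have hturn := K.turn rfl
  simp only [zero_add] at hgap happ hout hin
  have hP := fun k hk => (h₀.arm₁ k hk).1
  have aP := A.mul_le_pow
  have aE := A.le_mul
  have ae := A.err_nonneg
  have aκ := A.le
  have aL := A.mul_le_large
  have aL' := A.large_le_mul
  have t1 : (2 : ℝ) / 4 ^ n = 2 * (1 / 4 ^ n) := by ring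
  have t2 : (1 : ℝ) / 2 / 4 ^ n = 1 / 2 * (1 / 4 ^ n) := by ring
  have key : g₁ 0 = g₁ 1 → |l.v₁ 0 - firstSpeed (g₁ 0 + 1)| ≤ e →
      TowardSecond n m s₀ e' t s r (g₁ 0 + 1) (g₂ 0) t (g₂ 0) →
      Relay n m ρ s₀ e' t s r (Function.update g₁ 0 (g₁ 0 + 1)) g₂ t := by
    intro h01 hv hapex
    refine ⟨le_rfl, ?_, ?_, ?_, ?_⟩
    · rw [K3]; exact (H.train.mono A.le_large A.time).congr K.train
    · rw [K1]
      refine H.arm₁.pass_zero A h01 ?_ K.other₁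
      rw [abs_le] at hout hv ⊢
      constructor <;> linarith [hout.1, hout.2, hv.1, hv.2]
    · rw [K2]; exact (H.arm₂.mono A.le_large A.time).congr K.other₂
    · rw [Function.update_self]
      exact .inr (.inr (.inl ⟨_, hapex⟩))
  rw [abs_le] at hgap hout hin hturn
  rcases H.apex with B | B | ⟨j, B⟩ | ⟨j, B⟩
  · exact (H.arm₁.not_hit_of_rest A (firstSpeed_profile A.pos) hP B.vel₁
      (by rw [B.ha]; exact B.pos₁)
      K.contact happ).elim
  · obtain ⟨h01, hlt, hv1, hy1⟩ := H.arm₁.rest_of_hit A (fun h => absurd B.ha h) happ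
    have b1 := abs_le.1 B.vel₁
    have b2 := abs_le.1 B.vel₂
    have p1 := abs_le.1 B.pos₁
    have p2 := abs_le.1 B.pos₂
    rw [B.ha, zero_add] at hlt hy1
    rw [abs_le] at hv1 hy1
    refine key h01 (by rw [B.ha]; simpa [firstSpeed] using B.vel₁) ?_
    have tm := B.time_le (δ := 2 * (e * (1 + t))) (by linarith [hgap.1, hy1.2])
    rw [B.ha, B.hb]
    refine ⟨B.hr, rfl, rfl, ?_, ?_, ?_, ?_, by linarith, fun h => ?_⟩
    · rw [abs_le]; constructor <;> linarith [hin.1, hin.2]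
    · rw [abs_le]; simp only [secondSpeed]; norm_num
      constructor <;> linarith [hturn.1, hturn.2]
    · rw [abs_le, K1]; simp only [zero_add]; constructor <;> linarith [hgap.1, hgap.2]
    · rw [abs_le, K2]; simp only [detour, if_true, sub_self, zero_mul]
      constructor <;> linarith [hgap.1, hgap.2]
    · rw [abs_le, K1]; simp only [sub_self, zero_mul]; constructor <;> linarith [hgap.1, hgap.2]
  · exact (H.arm₁.not_hit_of_rest A (firstSpeed_profile A.pos) hP B.vel₁
      (by rw [B.ha]; exact B.pos₁)
      K.contact happ).elim
  · have b1 := abs_le.1 B.vel₁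
    have b2 := abs_le.1 B.vel₂
    have p1 := abs_le.1 B.pos₁
    have p2 := abs_le.1 B.pos₂
    have hjn : j ≤ n := by have := H.arm₁.bound 0 (by omega); have := B.ha; omega
    obtain ⟨h01, hlt, hv1, hy1⟩ := H.arm₁.rest_of_hit A (fun h => by
      rw [B.ha]
      have := firstSpeed_gap B.hj hjn
      linarith [b1.2]) happ
    rw [B.ha] at hlt hy1
    rw [abs_le] at hv1 hy1
    refine key h01 (by rw [B.ha]; exact B.vel₁) ?_
    have tm := B.time_le (δ := 2 * (e * (1 + t))) h₀ (by omega) (by linarith [hgap.1, hy1.2])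
    have h4 : (4 : ℝ) ^ (j + 1) ≤ 4 ^ n := pow_le_pow_right₀ (by norm_num) hlt
    have h5 : (4 : ℝ) ^ (j + 1) / 6 * (2 * (e * (1 + t)) + e * (1 + t)) ≤
        4 ^ n * (e * (1 + t)) := by
      have q1 := mul_le_mul_of_nonneg_right h4 A.mul_nonneg
      have q2 := mul_nonneg (by positivity : (0 : ℝ) ≤ 4 ^ n) A.mul_nonneg
      rw [show (4 : ℝ) ^ (j + 1) / 6 * (2 * (e * (1 + t)) + e * (1 + t)) =
        1 / 2 * (4 ^ (j + 1) * (e * (1 + t))) by ring]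
      linarith
    obtain ⟨i, rfl⟩ : ∃ i, j = i + 1 := ⟨j - 1, by have := B.hj; omega⟩
    rw [B.ha, B.hb]
    refine ⟨B.hr, rfl, rfl, ?_, ?_, ?_, ?_, ?_, fun h => ?_⟩
    · rw [abs_le]; constructor <;> linarith [hin.1, hin.2]
    · rw [abs_le, secondSpeed_eq]; constructor <;> linarith [hturn.1, hturn.2]
    · rw [abs_le, K1]; constructor <;> linarith [hgap.1, hgap.2]
    · rw [abs_le, K2]; simp only [detour, Nat.succ_ne_zero, if_false, sub_self, zero_mul]
      constructor <;> linarith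
    · have := A.large
      have := mul_le_mul_of_nonneg_right A.four_le_pow A.mul_nonneg
      linarith
    · rw [abs_le, K1]; simp only [sub_self, zero_mul]; constructor <;> linarith [hgap.1, hgap.2]

end Relay

namespace Relay

variable {n m : ℕ} {ρ κ : ℝ} {s₀ l s : Snapshot} {e e' t τ : ℝ} {r : ℕ} {g₁ g₂ : ℕ → ℕ}

/-- The roles of the arms may be exchanged until one of them is hit. -/
lemma swap_of_start (H : Relay n m ρ s₀ e t s r g₁ g₂ τ)
    (B : Start m s₀ e t s r (g₁ 0) (g₂ 0) τ) :
    Relay n m ρ s₀.swap e t s.swap r g₂ g₁ τ where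
  time := H.time
  train := H.train
  arm₁ := H.arm₂.of_zero B.hb _
  arm₂ := H.arm₁.of_zero B.ha _
  apex := .inr (.inl ⟨B.hr, B.hb, B.ha, B.vel₂, B.vel₁, B.pos₂, B.pos₁, B.time⟩)

/-- The apex hits the second arm. -/
lemma hit_zero₂ (H : Relay n m ρ s₀ e t l r g₁ g₂ τ) (A : Admissible n ρ κ e e' t)
    (h₀ : s₀.Spaced n m ρ) (hs : s.Separated n m e')
    (K : Snapshot.HitArm n m κ l.swap s.swap 0) :
    Relay n m ρ s₀ e' t s r g₁ (Function.update g₂ 0 (g₂ 0 + 1)) t ∨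
      Relay n m ρ s₀.swap e' t s.swap r (Function.update g₂ 0 (g₂ 0 + 1)) g₁ t := by
  obtain ⟨K1, K2, K3⟩ : s.y₂ = l.y₂ ∧ s.y₁ = l.y₁ ∧ s.z = l.z := K.pos
  have hgap : |l.y₂ (0 + 1) - l.y₂ 0| ≤ κ := K.contact
  have happ : l.v₂ (0 + 1) - l.v₂ 0 ≤ κ := K.approach
  have hout : |s.v₂ (0 + 1) - l.v₂ 0| ≤ κ := K.outer
  have hin : |s.v₂ 0 - l.v₂ (0 + 1)| ≤ κ := K.inner
  have hturn : |s.v₁ 0 - (l.v₁ 0 + (l.v₂ 0 - l.v₂ 1) / 2)| ≤ κ := K.turn rfl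
  simp only [zero_add] at hgap happ hout hin
  have hP := fun k hk => (h₀.arm₂ k hk).1
  have aP := A.mul_le_pow
  have aE := A.le_mul
  have ae := A.err_nonneg
  have aκ := A.le
  have aL := A.mul_le_large
  have aL' := A.large_le_mul
  have t1 : (2 : ℝ) / 4 ^ n = 2 * (1 / 4 ^ n) := by ring
  have t2 : (1 : ℝ) / 2 / 4 ^ n = 1 / 2 * (1 / 4 ^ n) := by ring
  have hp : (0 : ℝ) < 1 / 4 ^ n := by
    have := pow_pos (by norm_num : (0 : ℝ) < 4) n; positivity
  have hgap0 := hgap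
  rw [abs_le] at hgap hout hin hturn
  rcases H.apex with B | B | ⟨j, B⟩ | ⟨j, B⟩
  · exact (H.arm₂.not_hit_of_rest A (secondSpeed_profile n) hP B.vel₂ (by rw [B.hb]; exact B.pos₂)
      hgap0 happ).elim
  · exact .inr ((H.swap_of_start B).hit_zero₁ A h₀.swap K)
  · left
    have b1 := abs_le.1 B.vel₁
    have b2 := abs_le.1 B.vel₂
    have p1 := abs_le.1 B.pos₁
    have p2 := abs_le.1 B.pos₂
    have hjn : j + 1 ≤ n := by have := H.arm₁.bound 0 (by omega); have := B.ha; omega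
    obtain ⟨h01, hlt, hv1, hy1⟩ := H.arm₂.rest_of_hit A (fun h => by
      rw [B.hb] at h ⊢
      have := (secondSpeed_profile n).gap j (by omega) hjn
      linarith [b2.2]) happ
    rw [B.hb] at hlt hy1
    have tr := B.travel_le (δ := 2 * (e * (1 + t)))
      (by rw [abs_le] at hy1; linarith [hgap.1, hy1.2])
    have tm := B.time_le (δ := 2 * (e * (1 + t))) h₀ (by omega)
      (by rw [abs_le] at hy1; linarith [hgap.1, hy1.2])
    have h4 : (4 : ℝ) ^ (j + 1) ≤ 4 ^ n := pow_le_pow_right₀ (by norm_num) hlt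
    have h5 : (4 : ℝ) ^ (j + 1) / 3 * (2 * (e * (1 + t)) + e * (1 + t)) ≤
        4 ^ n * (e * (1 + t)) := by
      rw [show (4 : ℝ) ^ (j + 1) / 3 * (2 * (e * (1 + t)) + e * (1 + t)) =
        4 ^ (j + 1) * (e * (1 + t)) by ring]
      exact mul_le_mul_of_nonneg_right h4 A.mul_nonneg
    refine ⟨le_rfl, ?_, ?_, ?_, ?_⟩
    · rw [K3]; exact (H.train.mono A.le_large A.time).congr K.train
    · rw [K2]; exact (H.arm₁.mono A.le_large A.time).congr K.other₂
    · rw [K1]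
      refine H.arm₂.pass_zero A h01 ?_ K.other₁
      rw [B.hb, abs_le]
      constructor <;> linarith [hout.1, hout.2, b2.1, b2.2]
    · rw [Function.update_self, B.ha, B.hb]
      rw [abs_le] at hv1 hy1
      refine .inr (.inr (.inr ⟨j + 1, B.hr, rfl, rfl, by omega, ?_, ?_, ?_, ?_, ?_, fun h => ?_⟩))
      · rw [abs_le, firstSpeed_eq]; constructor <;> linarith [hturn.1, hturn.2]
      · rw [abs_le]; constructor <;> linarith [hin.1, hin.2]
      · rw [abs_le, K2]; simp only [sub_self, zero_mul]
        constructor <;> linarith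
      · rw [abs_le, K1]; constructor <;> linarith [hgap.1, hgap.2]
      · have := A.large
        have := mul_le_mul_of_nonneg_right A.four_le_pow A.mul_nonneg
        linarith
      · have hl := abs_le.1 (B.last h)
        have hE := A.mul_nonneg
        refine ⟨?_, ⟨(t - τ) * firstSpeed n, ?_, fun hn => ?_, fun hn => ?_, ?_⟩,
          fun k hk hkn => ?_, fun k hk hkn => ?_⟩
        · rw [K1, sub_self, zero_mul, abs_le]; constructor <;> linarith [hgap.1, hgap.2]
        · have := (firstSpeed_profile A.pos).lower n A.pos le_rfl
          exact mul_nonneg (sub_nonneg.2 H.time) (by linarith)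
        · obtain rfl : j = 0 := by omega
          subst hn
          have q1 := h₀.arm₁ 0 (by omega)
          have q2 := h₀.arm₂ 0 (by omega)
          have hr : 0 < ρ⁻¹ := inv_pos.2 (by linarith [A.two_le])
          simp only [detour, firstSpeed, if_true] at tr ⊢
          norm_num at tr q1 q2 ⊢
          linarith
        · obtain ⟨i, rfl⟩ : ∃ i, j = i + 1 := ⟨j - 1, by omega⟩
          have q2 := h₀.arm₂ (i + 1) (by omega)
          have hv : firstSpeed n = 2 * secondSpeed (i + 1 + 1) := by
            rw [secondSpeed_eq, ← h]; ring
          simp only [detour, Nat.succ_ne_zero, if_false] at p2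
          rw [hv]
          linarith [p2.2, hy1.1, hgap.2, q2.1]
        · rw [K2, abs_le]; simp only [sub_self, zero_mul, add_zero]
          constructor <;> linarith [hl.1, hl.2]
        · have := hs.arm₁ k hkn
          rw [sub_self, zero_mul]
          linarith
        · have := hs.arm₂ k hkn
          rw [sub_self, zero_mul]
          linarith
  · exact (H.arm₂.not_hit_of_rest A (secondSpeed_profile n) hP B.vel₂ (by rw [B.hb]; exact B.pos₂)
      hgap0 happ).elim

/-- The velocity of the apex along the train. -/
lemma apex_vel (H : Relay n m ρ s₀ e t l r g₁ g₂ τ) (A : Admissible n ρ κ e e' t) (hr : r = 0) :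
    1 / 4 ^ n - 2 * e ≤ l.v₁ 0 + l.v₂ 0 := by
  have hp : (0 : ℝ) < 1 / 4 ^ n := by
    have := pow_pos (by norm_num : (0 : ℝ) < 4) n; positivity
  have t1 : (2 : ℝ) / 4 ^ n = 2 * (1 / 4 ^ n) := by ring
  have t3 : (1 : ℝ) / 4 ^ n ≤ 1 / 4 :=
    div_le_div_of_nonneg_left (by norm_num) (by norm_num) A.four_le_pow
  have bd := H.arm₁.bound 0 (by omega)
  rcases H.apex with B | B | ⟨j, B⟩ | ⟨j, B⟩
  · exact absurd hr B.hr
  · have b1 := abs_le.1 B.vel₁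
    have b2 := abs_le.1 B.vel₂
    linarith [b1.1, b2.1]
  · have b1 := abs_le.1 B.vel₁
    have b2 := abs_le.1 B.vel₂
    have := B.ha
    have := (secondSpeed_profile n).lower (j + 1) (by omega) (by omega)
    linarith [b1.1, b2.1]
  · have b1 := abs_le.1 B.vel₁
    have b2 := abs_le.1 B.vel₂
    have := B.ha
    have := firstSpeed_succ_lower (n := n) B.hj (by omega)
    linarith [b1.1, b2.1]

/-- A collision in the train. -/
lemma hit_train (H : Relay n m ρ s₀ e t l r g₁ g₂ τ) (A : Admissible n ρ κ e e' t)
    (h₀ : s₀.Spaced n m ρ) (hl : l.Linked) {i : ℕ} (K : Snapshot.HitTrain n m κ l s i) :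
    r = i + 1 ∧ Relay n m ρ s₀ e' t s i g₁ g₂ t := by
  obtain ⟨K1, K2, K3⟩ := K.pos
  have hgap := abs_le.1 K.contact
  have happ := K.approach
  have hout := abs_le.1 K.outer
  have hlt := K.lt
  have aP := A.mul_le_pow
  have aI := A.mul_le_inv
  have aE := A.le_mul
  have ae := A.err_nonneg
  have aκ := A.le
  have aL := A.mul_le_large
  have aL' := A.large_le_mul
  have hr : 0 < ρ⁻¹ := inv_pos.2 (by linarith [A.two_le])
  have aV := A.inv_le
  have hp : (0 : ℝ) < 1 / 4 ^ n := by
    have := pow_pos (by norm_num : (0 : ℝ) < 4) n; positivity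
  by_cases hr0 : r = 0
  · exfalso
    subst hr0
    rcases i with _ | i
    · have h1 := abs_le.1 (H.train.rest 1 le_rfl hlt (by omega))
      have h2 := H.apex_vel A rfl
      have h3 := hl.vel
      simp only [zero_add] at happ
      linarith [h1.2]
    · have h1 := abs_le.1 (H.train.after (i + 1) (by omega) (by omega))
      have h2 := abs_le.1 (H.train.after (i + 1 + 1) (by omega) (by omega))
      have h3 := (h₀.train i (by omega)).1
      simp only [Nat.add_sub_cancel] at h1 h2
      linarith [h1.1, h2.2, hgap.2]
  obtain ⟨hd1, hd2⟩ := H.train.head hr0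
  rw [abs_le] at hd1 hd2
  have B : Idle s₀ e t l r (g₁ 0) (g₂ 0) := by
    rcases H.apex with B | B | ⟨j, B⟩ | ⟨j, B⟩
    · exact B
    all_goals exact absurd B.hr hr0
  have b1 := abs_le.1 B.vel₁
  have b2 := abs_le.1 B.vel₂
  have p1 := abs_le.1 B.pos₁
  have p2 := abs_le.1 B.pos₂
  have z0 : |l.z 0 - s₀.z 0| ≤ 2 * (e * (1 + t)) := by
    rw [hl.pos, h₀.linked, abs_le]
    constructor <;> linarith
  have hzi : ∀ k < r, |l.z k - s₀.z k| ≤ 2 * (e * (1 + t)) := by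
    intro k hk
    rcases k with _ | k
    · exact z0
    · exact (H.train.before (k + 1) (by omega) hk).trans (by linarith)
  rcases lt_trichotomy (i + 1) r with c | c | c
  · exfalso
    have h1 := abs_le.1 (hzi i (by omega))
    have h2 := abs_le.1 (hzi (i + 1) c)
    have h3 := (h₀.train i (by omega)).1
    linarith [h1.1, h2.2, hgap.2]
  · subst c
    refine ⟨rfl, ?_⟩
    have hi := abs_le.1 (hzi i (by omega))
    have hvi : |l.vz i| ≤ 2 * e := by
      rcases i with _ | i
      · rw [hl.vel, abs_le]; constructor <;> linarith
      · exact (H.train.rest (i + 1) (by omega) (by omega) (by omega)).trans (by linarith)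
    rw [abs_le] at hvi
    refine ⟨le_rfl, ⟨by omega, fun hi0 => ?_, fun j h1 h2 h3 => ?_, fun j h1 h2 => ?_,
      fun j h1 h2 => ?_⟩, ?_, ?_, ?_⟩
    · have hin := abs_le.1 (K.inner hi0)
      rw [K3, abs_le, abs_le]
      refine ⟨⟨?_, ?_⟩, ?_, ?_⟩ <;> linarith [hin.1, hin.2, hgap.1, hgap.2]
    · by_cases hj : j = i + 1
      · subst hj; rw [abs_le]; constructor <;> linarith [hout.1, hout.2]
      · rw [K.other j h1 h2 h3 hj]
        exact (H.train.rest j h1 h2 hj).trans A.le_large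
    · rw [K3]
      exact (H.train.before j h1 (by omega)).trans (by linarith)
    · rw [K3]
      by_cases hj : j = i + 1
      · subst hj
        simp only [Nat.add_sub_cancel]
        rw [abs_le]; constructor <;> linarith [hi.1, hi.2, hgap.1, hgap.2]
      · exact (H.train.after j (by omega) h2).trans (by linarith)
    · rw [K1]; exact (H.arm₁.mono A.le_large A.time).congr K.arm₁
    · rw [K2]; exact (H.arm₂.mono A.le_large A.time).congr K.arm₂
    · by_cases hi0 : i = 0
      · subst hi0
        right; left
        have q1 := abs_le.1 (K.push₁ rfl)
        have q2 := abs_le.1 (K.push₂ rfl)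
        simp only [zero_add] at *
        refine ⟨rfl, B.ha, B.hb, ?_, ?_, ?_, ?_, ?_⟩
        · rw [abs_le]; constructor <;> linarith [q1.1, q1.2]
        · rw [abs_le]; constructor <;> linarith [q2.1, q2.2]
        · rw [K1, abs_le, sub_self, zero_mul]; constructor <;> linarith
        · rw [K2, abs_le, sub_self, zero_mul]; constructor <;> linarith
        · have tel : ∀ k, k < m → s₀.z 0 - s₀.z k ≤ k := by
            intro k
            induction k with
            | zero => intro _; simp
            | succ k ih =>
              intro hk
              have := ih (by omega)
              have := (h₀.train k hk).2
              push_cast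
              linarith
          have := tel (m - 1) (by omega)
          have hm : ((m - 1 : ℕ) : ℝ) = m - 1 := by rw [Nat.cast_sub (by omega)]; simp
          rw [hm] at this
          linarith [hd2.2, hgap.1, hi.2]
      · left
        obtain ⟨k1, k2⟩ := K.keep hi0
        refine ⟨hi0, B.ha, B.hb, ?_, ?_, ?_, ?_⟩
        · rw [k1]; exact B.vel₁.trans A.le_large
        · rw [k2]; exact B.vel₂.trans A.le_large
        · rw [K1]; exact B.pos₁.trans (by linarith)
        · rw [K2]; exact B.pos₂.trans (by linarith)
  · exfalso
    by_cases hir : i = r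
    · subst hir
      have h1 := abs_le.1 (H.train.rest (i + 1) (by omega) hlt (by omega))
      have := A.inv_le
      linarith [h1.1, h1.2]
    · obtain ⟨i, rfl⟩ : ∃ k, i = k + 1 := ⟨i - 1, by omega⟩
      have h1 := abs_le.1 (H.train.after (i + 1) (by omega) (by omega))
      have h2 := abs_le.1 (H.train.after (i + 1 + 1) (by omega) (by omega))
      have h3 := (h₀.train i (by omega)).1
      simp only [Nat.add_sub_cancel] at h1 h2
      linarith [h1.1, h2.2, hgap.2]

end Relay

/-- Induction along a real interval. -/
lemma forall_mem_Icc_of_left_right {a b : ℝ} {P : ℝ → Prop} (ha : P a)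
    (right : ∀ t, a ≤ t → t < b → P t → ∃ δ > 0, ∀ t', t < t' → t' < t + δ → t' ≤ b → P t')
    (left : ∀ t, a < t → t ≤ b → (∀ s, a ≤ s → s < t → P s) → P t) :
    ∀ t, a ≤ t → t ≤ b → P t := by
  by_contra! hcon
  obtain ⟨t₁, h1, h2, h3⟩ := hcon
  set B : Set ℝ := {t | a ≤ t ∧ t ≤ b ∧ ¬ P t} with hB
  have hne : B.Nonempty := ⟨t₁, h1, h2, h3⟩
  have hbdd : BddBelow B := ⟨a, fun t ht => ht.1⟩
  set c := sInf B with hc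
  have hac : a ≤ c := le_csInf hne fun t ht => ht.1
  have hcb : c ≤ b := (csInf_le hbdd ⟨h1, h2, h3⟩).trans h2
  have hlt : ∀ s, a ≤ s → s < c → P s := by
    intro s hs hsc
    by_contra hP
    exact absurd (csInf_le hbdd ⟨hs, by linarith, hP⟩) (not_le.2 hsc)
  have hPc : P c := by
    rcases hac.eq_or_lt with h | h
    · rwa [← h]
    · exact left c h hcb hlt
  rcases hcb.eq_or_lt with h | h
  · have : c ≤ t₁ := csInf_le hbdd ⟨h1, h2, h3⟩
    have : t₁ = c := le_antisymm (by linarith) this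
    rw [this] at h3
    exact h3 hPc
  · obtain ⟨δ, hδ, hext⟩ := right c hac h hPc
    obtain ⟨t, ht, htc⟩ := exists_lt_of_csInf_lt hne (show sInf B < c + δ by linarith)
    have hct : c ≤ t := csInf_le hbdd ht
    rcases hct.eq_or_lt with h' | h'
    · rw [← h'] at ht; exact ht.2.2 hPc
    · exact ht.2.2 (hext t h' htc ht.2.1)

namespace Snapshot

lemma HitTrain.swap {n m : ℕ} {κ : ℝ} {l s : Snapshot} {i : ℕ} (K : HitTrain n m κ l s i) :
    HitTrain n m κ l.swap s.swap i :=
  ⟨K.lt, K.contact, K.approach, K.outer, K.inner, K.other, K.push₂, K.push₁,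
    fun h => (K.keep h).symm, K.arm₂, K.arm₁, ⟨K.pos.2.1, K.pos.1, K.pos.2.2⟩⟩

/-- The snapshots before and after an instant at which a collision may take place. -/
def Collides (n m : ℕ) (κ : ℝ) (l s : Snapshot) : Prop :=
  (∃ k, HitArm n m κ l s k) ∨ (∃ k, HitArm n m κ l.swap s.swap k) ∨ ∃ i, HitTrain n m κ l s i

lemma Collides.swap {n m : ℕ} {κ : ℝ} {l s : Snapshot} (K : Collides n m κ l s) :
    Collides n m κ l.swap s.swap := by
  rcases K with ⟨k, K⟩ | ⟨k, K⟩ | ⟨i, K⟩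
  · exact .inr (.inl ⟨k, K⟩)
  · exact .inl ⟨k, K⟩
  · exact .inr (.inr ⟨i, K.swap⟩)

lemma Spaced.train_le {n m : ℕ} {ρ : ℝ} {s : Snapshot} (h : s.Spaced n m ρ) (i : ℕ) :
    ∀ k, i + k < m → s.z i - s.z (i + k) ≤ k := by
  intro k
  induction k with
  | zero => intro _; simp
  | succ k ih =>
    intro hk
    have h1 := ih (by omega)
    have h2 := (h.train (i + k) (by omega)).2
    rw [show i + (k + 1) = i + k + 1 by ring]
    push_cast
    linarith

lemma Spaced.arm₁_ge {n m : ℕ} {ρ : ℝ} {s : Snapshot} (h : s.Spaced n m ρ) (hρ : 0 ≤ ρ⁻¹) :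
    ∀ k, 0 < k → k ≤ n → s.y₁ 0 + ρ⁻¹ ≤ s.y₁ k := by
  intro k
  induction k with
  | zero => intro h; omega
  | succ k ih =>
    intro _ hk
    have h2 := (h.arm₁ k (by omega)).1
    rcases Nat.eq_zero_or_pos k with h0 | h0
    · subst h0; linarith
    · linarith [ih h0 (by omega)]

/-- Properties of the snapshot `s` reached from `s₀` after all collisions. -/
structure Final (n m : ℕ) (ρ : ℝ) (s₀ s : Snapshot) : Prop where
  apex₁ : s₀.y₁ 0 ≤ s.y₁ 0
  apex₂ : s₀.y₂ 0 ≤ s.y₂ 0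
  arm₁ : ∀ k < n, 11 / 16 * ρ⁻¹ ≤ s.y₁ (k + 1) - s.y₁ k
  arm₂ : ∀ k < n, 11 / 16 * ρ⁻¹ ≤ s.y₂ (k + 1) - s.y₂ k
  train : ∀ i, i + 1 < m → 11 / 16 * ρ⁻¹ ≤ s.z i - s.z (i + 1)
  ratio : s.y₁ 1 - s.y₁ 0 ≤ 2 / 3 * (s.y₂ 1 - s.y₂ 0) ∨
    s.y₂ 1 - s.y₂ 0 ≤ 2 / 3 * (s.y₁ 1 - s.y₁ 0)

lemma Final.swap {n m : ℕ} {ρ : ℝ} {s₀ s : Snapshot} (h : Final n m ρ s₀ s) :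
    Final n m ρ s₀.swap s.swap :=
  ⟨h.apex₂, h.apex₁, h.arm₂, h.arm₁, h.train, h.ratio.symm⟩

end Snapshot

/-- The number of collisions recorded by a state. -/
def relayCount (n m r : ℕ) (g₁ g₂ : ℕ → ℕ) : ℕ :=
  m - 1 - r + ∑ k ∈ Finset.range n, g₁ k + ∑ k ∈ Finset.range n, g₂ k

lemma sum_update_succ {n k : ℕ} (hk : k < n) (g : ℕ → ℕ) :
    ∑ i ∈ Finset.range n, Function.update g k (g k + 1) i = ∑ i ∈ Finset.range n, g i + 1 := by
  rw [Finset.sum_update_of_mem (Finset.mem_range.2 hk),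
    ← Finset.sum_erase_add (Finset.range n) g (Finset.mem_range.2 hk),
    Finset.sdiff_singleton_eq_erase]
  ring

namespace Relay

variable {n m : ℕ} {ρ κ : ℝ} {s₀ l s : Snapshot} {e e' t τ : ℝ} {r : ℕ} {g₁ g₂ : ℕ → ℕ}

/-- Every collision continues the relay. -/
lemma collide (H : Relay n m ρ s₀ e t l r g₁ g₂ τ) (A : Admissible n ρ κ e e' t)
    (h₀ : s₀.Spaced n m ρ) (hl : l.Linked) (hs : s.Separated n m κ)
    (K : Snapshot.Collides n m κ l s) :
    ∃ r' g₁' g₂' τ', relayCount n m r' g₁' g₂' = relayCount n m r g₁ g₂ + 1 ∧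
      (Relay n m ρ s₀ e' t s r' g₁' g₂' τ' ∨ Relay n m ρ s₀.swap e' t s.swap r' g₁' g₂' τ') := by
  have hs' : s.Separated n m e' := by
    have := A.le.trans A.le_large
    exact ⟨fun k hk => by linarith [hs.arm₁ k hk], fun k hk => by linarith [hs.arm₂ k hk],
      fun k hk => by linarith [hs.train k hk]⟩
  rcases K with ⟨k, K⟩ | ⟨k, K⟩ | ⟨i, K⟩
  · rcases k with _ | k
    · refine ⟨_, _, _, _, ?_, .inl (H.hit_zero₁ A h₀ K)⟩
      unfold relayCount; rw [sum_update_succ K.lt]; ring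
    · refine ⟨_, _, _, _, ?_, .inl (H.hit₁ A h₀ K)⟩
      unfold relayCount; rw [sum_update_succ K.lt]; ring
  · rcases k with _ | k
    · rcases H.hit_zero₂ A h₀ hs' K with H' | H'
      · refine ⟨_, _, _, _, ?_, .inl H'⟩
        unfold relayCount; rw [sum_update_succ K.lt]; ring
      · refine ⟨_, _, _, _, ?_, .inr H'⟩
        unfold relayCount; rw [sum_update_succ K.lt]; ring
    · refine ⟨_, _, _, _, ?_, .inl (H.hit₂ A h₀ K)⟩
      unfold relayCount; rw [sum_update_succ K.lt]; ring
  · obtain ⟨hr, H'⟩ := H.hit_train A h₀ hl K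
    refine ⟨_, _, _, _, ?_, .inl H'⟩
    have := H.train.lt
    unfold relayCount; omega

lemma count_le (H : Relay n m ρ s₀ e t s r g₁ g₂ τ) :
    relayCount n m r g₁ g₂ ≤ m - 1 + 2 * (n * n) := by
  have h1 := H.arm₁.sum_le
  have h2 := H.arm₂.sum_le
  unfold relayCount
  omega

/-- After a sufficiently long time all collisions have taken place. -/
lemma completed (H : Relay n m ρ s₀ e t s r g₁ g₂ τ) (A : Admissible n ρ κ e e' t)
    (h₀ : s₀.Spaced n m ρ) (hs : s.Separated n m κ) (hl : s.Linked) (hκ : n * κ ≤ e)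
    (ht : (m : ℝ) + 4 ^ n - 1 / 4 ≤ t) : TowardFirst n m ρ s₀ e t s r (g₁ 0) (g₂ 0) τ n := by
  have aP := A.mul_le_pow
  have aI := A.mul_le_inv
  have aV := A.inv_le
  have aE := A.le_mul
  have ae := A.err_nonneg
  have aκ := A.le
  have a4 := A.four_le_pow
  have aM := A.mul_nonneg
  have hn := A.pos
  have h4 : ∀ j, j + 1 ≤ n → (4 : ℝ) ^ (j + 1) ≤ 4 ^ n := fun j hj =>
    pow_le_pow_right₀ (by norm_num) hj
  have hsmall : ∀ j, j + 1 ≤ n → (4 : ℝ) ^ (j + 1) * (e * (1 + t)) ≤ 1 / 200 := by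
    intro j hj
    have h := mul_le_mul_of_nonneg_right (h4 j hj) aM
    have := A.small
    linarith
  have b1 := H.arm₁.bound 0 (by omega)
  have b2 := H.arm₂.bound 0 (by omega)
  rcases H.apex with B | B | ⟨j, B⟩ | ⟨j, B⟩
  · exfalso
    have hr := B.hr
    have hrm := H.train.lt
    obtain ⟨i, rfl⟩ : ∃ i, r = i + 1 := ⟨r - 1, by omega⟩
    have p1 := abs_le.1 B.pos₁
    have p2 := abs_le.1 B.pos₂
    have hd := abs_le.1 (H.train.head hr).2
    have hz : |s.z i - s₀.z i| ≤ 2 * (e * (1 + t)) := by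
      rcases i with _ | i
      · rw [hl.pos, h₀.linked, abs_le]; constructor <;> linarith
      · exact (H.train.before (i + 1) (by omega) (by omega)).trans (by linarith)
    have hz' := abs_le.1 hz
    have hg := hs.train i (by omega)
    have htel := h₀.train_le i (m - 1 - i) (by omega)
    rw [show i + (m - 1 - i) = m - 1 by omega] at htel
    have hm : ((m - 1 - i : ℕ) : ℝ) ≤ m := by exact_mod_cast (by omega)
    linarith [hd.1, hz'.2]
  · exfalso
    have hap := H.arm₁.apex_le A.nonneg hs.arm₁ (by rw [B.ha]; exact hn)
    rw [B.ha, zero_add] at hap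
    have tm := B.time_le (δ := 2 * (e * (1 + t))) (by linarith)
    have := (h₀.arm₁ 0 hn).2
    simp only [firstHitBound, if_true, zero_add] at tm this
    linarith
  · exfalso
    have hjn : j + 1 ≤ n := by have := B.ha; omega
    have hap := H.arm₂.apex_le A.nonneg hs.arm₂ (by rw [B.hb]; omega)
    rw [B.hb] at hap
    have tm := B.time_le (δ := 2 * (e * (1 + t))) h₀ (by omega) (by linarith)
    have := hsmall j hjn
    have := h4 j hjn
    simp only [secondHitBound] at tm
    linarith
  · have hjn : j ≤ n := by have := B.ha; omega
    rcases hjn.eq_or_lt with h | h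
    · rwa [h] at B
    · exfalso
      have hap := H.arm₁.apex_le A.nonneg hs.arm₁ (by rw [B.ha]; omega)
      rw [B.ha] at hap
      have tm := B.time_le (δ := 2 * (e * (1 + t))) h₀ h (by linarith)
      have := hsmall j h
      have h5 := h4 j h
      have := B.hj
      simp only [firstHitBound] at tm
      rw [if_neg (by omega)] at tm
      rw [pow_succ (4 : ℝ) j] at *
      linarith

/-- The state after all collisions. -/
lemma final (H : Relay n m ρ s₀ e t s r g₁ g₂ τ) (A : Admissible n ρ κ e e' t)
    (h₀ : s₀.Spaced n m ρ) (hs : s.Separated n m κ) (hl : s.Linked) (hκ : n * κ ≤ e)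
    (ht : (m : ℝ) + 4 ^ n ≤ t) : Snapshot.Final n m ρ s₀ s := by
  have B := H.completed A h₀ hs hl hκ (by linarith)
  obtain ⟨D1, ⟨g, D2, D3, D4, D5⟩, D6, D7⟩ := B.last rfl
  rw [abs_le] at D1 D5
  have aP := A.mul_le_pow
  have aI := A.mul_le_inv
  have aV := A.inv_le
  have aE := A.le_mul
  have ae := A.err_nonneg
  have a4 := A.four_le_pow
  have aM := A.mul_nonneg
  have hn := A.pos
  have hr : 0 < ρ⁻¹ := inv_pos.2 (by linarith [A.two_le])
  have p1 := abs_le.1 B.pos₁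
  have p2 := abs_le.1 B.pos₂
  have hr0 := B.hr
  have hτ := B.time
  simp only [secondHitBound] at hτ
  obtain ⟨d, hd⟩ : ∃ d, d = t - τ := ⟨_, rfl⟩
  rw [← hd] at D1 D5 p1
  simp only [← hd] at D6 D7
  have hp : (0 : ℝ) < 4 ^ n := by positivity
  have hsq : 4 ^ n / 3 + 5 / 3 - e ≤ d := by linarith
  obtain ⟨q, hq⟩ : ∃ q : ℝ, 1 / 4 ^ n = q := ⟨_, rfl⟩
  have hq0 : 0 < q := by rw [← hq]; positivity
  have hq4 : q ≤ 1 / 4 := by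
    rw [← hq]; exact div_le_div_of_nonneg_left (by norm_num) (by norm_num) a4
  have hdq : 1 / 3 + (5 / 3 - e) * q ≤ d * q := by
    have h := mul_le_mul_of_nonneg_right hsq hq0.le
    have : (4 : ℝ) ^ n * q = 1 := by rw [← hq]; field_simp
    nlinarith
  have hdq' : 1 / 3 + q ≤ d * q := by nlinarith
  have f2 : secondSpeed n = 3 * q := by rw [← hq]; unfold secondSpeed; ring
  have f0 : (2 : ℝ) / 4 ^ n = 2 * q := by rw [← hq]; ring
  rw [f2] at D1
  rw [hq] at aP
  have hd0 : 0 ≤ d := by linarith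
  have y1 := h₀.arm₁_ge hr.le n hn le_rfl
  have y2 : s₀.y₂ 0 + ρ⁻¹ ≤ s₀.y₂ n := h₀.swap.arm₁_ge hr.le n hn le_rfl
  have hfs := firstSpeed_succ_lower hn le_rfl
  rw [hq] at hfs
  have hfd := mul_nonneg hd0 (hq0.le.trans hfs)
  have hgap₂ : 1 ≤ s.y₂ 1 - s.y₂ 0 := by linarith [D1.1]
  have hone : n = 1 → d * (firstSpeed n - firstSpeed (n + 1)) = 1 / 2 * (d * q) := by
    intro h
    rw [← hq, h]
    norm_num [firstSpeed]; ring
  have htwo : n ≠ 1 → d * (firstSpeed n - firstSpeed (n + 1)) = 9 / 2 * (d * q) := by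
    intro h
    simp only [firstSpeed]
    rw [if_neg h, if_neg (by omega), pow_succ, ← hq]
    field_simp; ring
  have hgap₁ : 11 / 32 ≤ s.y₁ 1 - s.y₁ 0 := by
    by_cases h : n = 1
    · have := hone h
      have hqq : q = 1 / 4 := by rw [← hq, h]; norm_num
      have hd7 : 1 / 3 + (5 / 3 - e) * (1 / 4) ≤ d * q := by rw [hqq] at hdq ⊢; exact hdq
      linarith [D5.1]
    · have := htwo h
      linarith [D5.1]
  refine ⟨by linarith, by linarith, fun k hk => ?_, fun k hk => ?_, fun i hi => ?_, ?_⟩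
  · rcases Nat.eq_zero_or_pos k with h | h
    · subst h; linarith
    · have := D6 k h hk
      rw [f0] at this
      linarith
  · rcases Nat.eq_zero_or_pos k with h | h
    · subst h; linarith
    · have := D7 k h hk
      rw [f0] at this
      linarith
  · have z1 := abs_le.1 (H.train.after (i + 1) (by omega) hi)
    rw [Nat.add_sub_cancel] at z1
    rcases i with _ | i
    · rw [hl.pos]
      have := h₀.linked
      linarith [z1.2]
    · have z2 := abs_le.1 (H.train.after (i + 1) (by omega) (by omega))
      rw [Nat.add_sub_cancel] at z2
      have := (h₀.train i (by omega)).1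
      linarith [z1.2, z2.1]
  · by_cases h : n = 1
    · left
      have := hone h
      have := D3 h
      have hqq : q = 1 / 4 := by rw [← hq, h]; norm_num
      linarith [D5.2, D1.1]
    · right
      have := htwo h
      have := D4 h
      linarith [D5.1, D1.2]

end Relay

/-- The motion of the reduced coordinates during the time interval `[0, T]`: `S t` and `L t` are the
snapshots with the right and the left velocities, and `C` contains the times of the collisions. -/
structure Evolution (n m : ℕ) (κ T : ℝ) (C : Set ℝ) (S L : ℝ → Snapshot) : Prop where
  right : ∀ t, 0 ≤ t → t < T →
    ∃ δ > 0, ∀ t', t < t' → t' < t + δ → t' ≤ T → S t' = (S t).move (t' - t)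
  left : ∀ t, 0 < t → t ≤ T → ∃ s, 0 ≤ s ∧ s < t ∧ L t = (S s).move (t - s)
  linked_left : ∀ t, 0 < t → t ≤ T → (L t).Linked
  linked : ∀ t, 0 ≤ t → t ≤ T → (S t).Linked
  separated : ∀ t, 0 ≤ t → t ≤ T → (S t).Separated n m κ
  jump : ∀ t, 0 < t → t ≤ T → S t = L t ∨ (t ∈ C ∧ Snapshot.Collides n m κ (L t) (S t))

/-- Only the last ball of the train moves. -/
structure Snapshot.Launch (n m : ℕ) (κ : ℝ) (s : Snapshot) : Prop where
  arm₁ : ∀ k, 1 ≤ k → k ≤ n → |s.v₁ k| ≤ κ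
  arm₂ : ∀ k, 1 ≤ k → k ≤ n → |s.v₂ k| ≤ κ
  train : ∀ i, 1 ≤ i → i + 1 < m → |s.vz i| ≤ κ
  head : m ≠ 1 → |s.vz (m - 1) - 1| ≤ κ ∧ |s.v₁ 0| ≤ κ ∧ |s.v₂ 0| ≤ κ
  single : m = 1 → |s.v₁ 0 - 1 / 2| ≤ κ ∧ |s.v₂ 0 - 1 / 2| ≤ κ

/-- A relay together with the set of times of the collisions recorded by it. -/
def Progress (n m : ℕ) (ρ K κ : ℝ) (C : Set ℝ) (s₀ : Snapshot) (u t : ℝ) (s : Snapshot) : Prop :=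
  ∃ (r : ℕ) (g₁ g₂ : ℕ → ℕ) (τ : ℝ) (F : Finset ℝ), ↑F ⊆ C ∩ Set.Ioc 0 u ∧
    F.card = relayCount n m r g₁ g₂ ∧
    (Relay n m ρ s₀ (K ^ (F.card + 1) * κ) t s r g₁ g₂ τ ∨
      Relay n m ρ s₀.swap (K ^ (F.card + 1) * κ) t s.swap r g₁ g₂ τ)

lemma admissible_pow {n m c : ℕ} {ρ κ K T t : ℝ} (hn : 0 < n) (hρ : 2 ≤ ρ) (hκ : 0 ≤ κ)
    (hK : 100 * 4 ^ n * (1 + T) ≤ K) (hs : K ^ (m - 1 + 2 * (n * n) + 2) * κ ≤ ρ⁻¹)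
    (ht : 0 ≤ t) (htT : t ≤ T) (hc : c ≤ m - 1 + 2 * (n * n)) :
    Admissible n ρ κ (K ^ (c + 1) * κ) (K ^ (c + 2) * κ) t ∧ n * κ ≤ K ^ (c + 1) * κ := by
  have h4 : (1 : ℝ) ≤ 4 ^ n := one_le_pow₀ (by norm_num)
  have hnp : (n : ℝ) ≤ 4 ^ n := by
    exact_mod_cast (Nat.lt_pow_self (by norm_num)).le
  have hKn : (4 : ℝ) ^ n ≤ K := by nlinarith
  have hK1 : 1 ≤ K := h4.trans hKn
  have hpow : K ≤ K ^ (c + 1) := le_self_pow₀ hK1 (by omega)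
  have hl : 100 * 4 ^ n * (K ^ (c + 1) * κ * (1 + t)) ≤ K ^ (c + 2) * κ := by
    have h1 : 100 * 4 ^ n * (1 + t) ≤ K :=
      (mul_le_mul_of_nonneg_left (by linarith) (by positivity)).trans hK
    have h2 := mul_le_mul_of_nonneg_right h1 (show 0 ≤ K ^ (c + 1) * κ by positivity)
    calc _ = 100 * 4 ^ n * (1 + t) * (K ^ (c + 1) * κ) := by ring
      _ ≤ _ := h2
      _ = _ := by ring
  refine ⟨⟨hn, hρ, hκ, le_mul_of_one_le_left hκ (hK1.trans hpow), ht, hl.trans (le_trans ?_ hs),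
    hl⟩, mul_le_mul_of_nonneg_right (hnp.trans (hKn.trans hpow)) hκ⟩
  exact mul_le_mul_of_nonneg_right (pow_le_pow_right₀ hK1 (by omega)) hκ

namespace Progress

variable {n m : ℕ} {ρ K κ u t T : ℝ} {C : Set ℝ} {s₀ s l : Snapshot}

lemma start (hm : 0 < m) (hκ : 0 ≤ κ) (hK : 1 ≤ K) (hs : s.Launch n m κ) :
    Progress n m ρ K κ C s 0 0 s := by
  have hKκ : κ ≤ K * κ := le_mul_of_one_le_left hκ hK
  have h0 : 0 ≤ K * κ := hκ.trans hKκ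
  refine ⟨m - 1, fun _ => 0, fun _ => 0, 0, ∅, by simp, by simp [relayCount], .inl ?_⟩
  have hapex : m ≠ 1 ∨ m = 1 := ne_or_eq m 1
  simp only [Finset.card_empty, zero_add, pow_one]
  refine ⟨le_rfl, ⟨by omega, fun hr => ?_, fun i h1 h2 h3 => ?_, ?_, ?_⟩,
    ⟨fun k hk => by simpa using hk, fun k _ => by simp, fun k _ h => by simp at h,
      fun k hk _ => ?_⟩,
    ⟨fun k hk => by simpa using hk, fun k _ => by simp, fun k _ h => by simp at h,
      fun k hk _ => ?_⟩,
    ?_⟩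
  · exact ⟨(hs.head (by omega)).1.trans hKκ, by simpa using h0⟩
  · exact (hs.train i h1 (by omega)).trans hKκ
  · intro i _ _; simpa using h0
  · intro i h1 h2; omega
  · exact ⟨(hs.arm₁ (k + 1) (by omega) (by omega)).trans hKκ, by simpa using h0⟩
  · exact ⟨(hs.arm₂ (k + 1) (by omega) (by omega)).trans hKκ, by simpa using h0⟩
  · rcases hapex with h | h
    · obtain ⟨-, h1, h2⟩ := hs.head h
      exact .inl ⟨by omega, rfl, rfl, h1.trans hKκ, h2.trans hKκ, by simpa using h0,
        by simpa using h0⟩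
    · obtain ⟨h1, h2⟩ := hs.single h
      exact .inr (.inl ⟨by omega, rfl, rfl, h1.trans hKκ, h2.trans hKκ, by simpa using h0,
        by simpa using h0, by rw [h]; simpa using h0⟩)

lemma move (H : Progress n m ρ K κ C s₀ u t s) (hn : 0 < n) {t' : ℝ} (ht : t ≤ t') :
    Progress n m ρ K κ C s₀ u t' (s.move (t' - t)) := by
  obtain ⟨r, g₁, g₂, τ, F, h1, h2, h3⟩ := H
  exact ⟨r, g₁, g₂, τ, F, h1, h2, h3.imp (fun h => h.drift hn ht) (fun h => h.drift hn ht)⟩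

lemma weaken (H : Progress n m ρ K κ C s₀ u t s) {u' : ℝ} (hu : u ≤ u') :
    Progress n m ρ K κ C s₀ u' t s := by
  obtain ⟨r, g₁, g₂, τ, F, h1, h2, h3⟩ := H
  exact ⟨r, g₁, g₂, τ, F, h1.trans (Set.inter_subset_inter_right _ (Set.Ioc_subset_Ioc_right hu)),
    h2, h3⟩

lemma collide (H : Progress n m ρ K κ C s₀ u t l) (hut : u < t) (ht : 0 < t) (htT : t ≤ T)
    (htC : t ∈ C) (hn : 0 < n) (hρ : 2 ≤ ρ) (hκ : 0 ≤ κ)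
    (hK : 100 * 4 ^ n * (1 + T) ≤ K) (hsm : K ^ (m - 1 + 2 * (n * n) + 2) * κ ≤ ρ⁻¹)
    (h₀ : s₀.Spaced n m ρ) (hl : l.Linked) (hs : s.Separated n m κ)
    (J : Snapshot.Collides n m κ l s) : Progress n m ρ K κ C s₀ t t s := by
  obtain ⟨r, g₁, g₂, τ, F, h1, h2, h3⟩ := H
  have hF : t ∉ F := fun h => by have := (h1 h).2.2; linarith
  have hsub : ↑(insert t F) ⊆ C ∩ Set.Ioc 0 t := by
    rw [Finset.coe_insert]
    refine Set.insert_subset ⟨htC, ht, le_rfl⟩ (h1.trans ?_)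
    exact Set.inter_subset_inter_right _ (Set.Ioc_subset_Ioc_right hut.le)
  have hcard := Finset.card_insert_of_notMem hF
  rcases h3 with h3 | h3
  · have A := (admissible_pow hn hρ hκ hK hsm ht.le htT (h2 ▸ h3.count_le)).1
    obtain ⟨r', g₁', g₂', τ', hc, hR⟩ := h3.collide A h₀ hl hs J
    exact ⟨r', g₁', g₂', τ', insert t F, hsub, by rw [hcard, h2, hc], by rw [hcard]; exact hR⟩
  · have A := (admissible_pow hn hρ hκ hK hsm ht.le htT (h2 ▸ h3.count_le)).1
    obtain ⟨r', g₁', g₂', τ', hc, hR⟩ := h3.collide A h₀.swap hl.swap hs.swap J.swap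
    exact ⟨r', g₁', g₂', τ', insert t F, hsub, by rw [hcard, h2, hc], by rw [hcard]; exact hR.symm⟩

end Progress

namespace Evolution

variable {n m : ℕ} {ρ K κ T : ℝ} {C : Set ℝ} {S L : ℝ → Snapshot}

lemma progress (E : Evolution n m κ T C S L) (hm : 0 < m) (hn : 0 < n) (hρ : 2 ≤ ρ) (hκ : 0 ≤ κ)
    (hK : 100 * 4 ^ n * (1 + T) ≤ K) (hsm : K ^ (m - 1 + 2 * (n * n) + 2) * κ ≤ ρ⁻¹)
    (h₀ : (S 0).Spaced n m ρ) (h₁ : (S 0).Launch n m κ) :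
    ∀ t, 0 ≤ t → t ≤ T → Progress n m ρ K κ C (S 0) t t (S t) := by
  intro t h0 hT
  have hK1 : 1 ≤ K := by
    have h4 : (1 : ℝ) ≤ 4 ^ n := one_le_pow₀ (by norm_num)
    nlinarith
  refine forall_mem_Icc_of_left_right (P := fun t => Progress n m ρ K κ C (S 0) t t (S t))
    (Progress.start hm hκ hK1 h₁) ?_ ?_ t h0 hT
  · intro t ht htT H
    obtain ⟨δ, hδ, h⟩ := E.right t ht htT
    refine ⟨δ, hδ, fun t' h1 h2 h3 => ?_⟩
    rw [h t' h1 h2 h3]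
    exact (H.move hn h1.le).weaken h1.le
  · intro t ht htT H
    obtain ⟨s, hs, hst, hL⟩ := E.left t ht htT
    have HL := (H s hs hst).move hn hst.le
    rw [← hL] at HL
    rcases E.jump t ht htT with h | ⟨hC, h⟩
    · rw [h]; exact HL.weaken hst.le
    · exact HL.collide hst ht htT hC hn hρ hκ hK hsm h₀ (E.linked_left t ht htT)
        (E.separated t ht.le htT) h

/-- After the time `m + 4 ^ n` all collisions have taken place. -/
theorem outcome (E : Evolution n m κ T C S L) (hm : 0 < m) (hn : 0 < n) (hρ : 2 ≤ ρ) (hκ : 0 ≤ κ)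
    (hK : 100 * 4 ^ n * (1 + T) ≤ K) (hsm : K ^ (m - 1 + 2 * (n * n) + 2) * κ ≤ ρ⁻¹)
    (h₀ : (S 0).Spaced n m ρ) (h₁ : (S 0).Launch n m κ) (hT : (m : ℝ) + 4 ^ n ≤ T) :
    (∃ F : Finset ℝ, ↑F ⊆ C ∩ Set.Ioo 0 T ∧ F.card = m - 1 + n * (n + 1)) ∧
      Snapshot.Final n m ρ (S 0) (S T) := by
  have h4 : (1 : ℝ) ≤ 4 ^ n := one_le_pow₀ (by norm_num)
  have hmr : (0 : ℝ) ≤ m := Nat.cast_nonneg m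
  have hP := E.progress hm hn hρ hκ hK hsm h₀ h₁
  constructor
  · obtain ⟨r, g₁, g₂, τ, F, h1, h2, h3⟩ := hP (T - 1 / 4) (by linarith) (by linarith)
    have hl := E.linked (T - 1 / 4) (by linarith) (by linarith)
    have hs := E.separated (T - 1 / 4) (by linarith) (by linarith)
    refine ⟨F, h1.trans (Set.inter_subset_inter_right _ fun x hx => ⟨hx.1, by linarith [hx.2]⟩), ?_⟩
    have key : ∀ {s₀ s : Snapshot}, s₀.Spaced n m ρ → s.Linked → s.Separated n m κ →
        Relay n m ρ s₀ (K ^ (F.card + 1) * κ) (T - 1 / 4) s r g₁ g₂ τ →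
        F.card = m - 1 + n * (n + 1) := by
      intro s₀ s h₀ hl hs h3
      obtain ⟨A, hn'⟩ := admissible_pow hn hρ hκ hK hsm (t := T - 1 / 4) (by linarith)
        (by linarith) (h2 ▸ h3.count_le)
      have B := h3.completed A h₀ hs hl hn' (by linarith)
      have e1 := h3.arm₁.sum_of_full B.ha
      have e2 := h3.arm₂.sum_of_full B.hb
      rw [h2, relayCount, B.hr]
      omega
    rcases h3 with h3 | h3
    exacts [key h₀ hl hs h3, key h₀.swap hl.swap hs.swap h3]
  · obtain ⟨r, g₁, g₂, τ, F, h1, h2, h3⟩ := hP T (by linarith) le_rfl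
    have hl := E.linked T (by linarith) le_rfl
    have hs := E.separated T (by linarith) le_rfl
    rcases h3 with h3 | h3
    · obtain ⟨A, hn'⟩ := admissible_pow hn hρ hκ hK hsm (t := T) (by linarith)
        le_rfl (h2 ▸ h3.count_le)
      exact h3.final A h₀ hs hl hn' hT
    · obtain ⟨A, hn'⟩ := admissible_pow hn hρ hκ hK hsm (t := T) (by linarith)
        le_rfl (h2 ▸ h3.count_le)
      exact (h3.final A h₀.swap hs.swap hl.swap hn' hT).swap

end Evolution

namespace BallSystem

variable {ι : Type} {d : ℕ} (S : BallSystem ι d Set.univ)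

lemma exists_right [Finite ι] (t : ℝ) :
    ∃ δ > 0, (∀ i, ∀ s, t ≤ s → s < t + δ → S.x i s = S.x i t + (s - t) • S.vr i t) ∧
      ∀ i, ∀ s, t ≤ s → s < t + δ → S.vr i s = S.vr i t := by
  have h := fun i => S.right_lin i t (Set.mem_univ t)
  choose δ hδ h using h
  obtain ⟨δ₀, hδ₀, hle⟩ : ∃ δ₀ > 0, ∀ i, δ₀ ≤ δ i := by
    rcases isEmpty_or_nonempty ι with he | he
    · exact ⟨1, one_pos, fun i => he.elim i⟩
    · obtain ⟨i, hi⟩ := Finite.exists_min δ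
      exact ⟨δ i, hδ i, hi⟩
  have hx : ∀ i, ∀ s, t ≤ s → s < t + δ₀ → S.x i s = S.x i t + (s - t) • S.vr i t :=
    fun i s h1 h2 => h i s ⟨⟨h1, by linarith [hle i]⟩, Set.mem_univ s⟩
  refine ⟨δ₀, hδ₀, hx, fun i s h1 h2 => ?_⟩
  obtain ⟨η, hη, hs⟩ := S.right_lin i s (Set.mem_univ s)
  obtain ⟨s', h3, h4, h5⟩ : ∃ s', s < s' ∧ s' < t + δ₀ ∧ s' ≤ s + η :=
    ⟨s + min η ((t + δ₀ - s) / 2), by simp [hη, h2], by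
      linarith [min_le_right η ((t + δ₀ - s) / 2)], by linarith [min_le_left η ((t + δ₀ - s) / 2)]⟩
  have e1 := hs s' ⟨⟨h3.le, h5⟩, Set.mem_univ s'⟩
  rw [hx i s' (by linarith) h4, hx i s h1 h2] at e1
  have e2 : (s' - s) • S.vr i s = (s' - s) • S.vr i t := by
    rw [← sub_eq_zero]
    have := sub_eq_zero.2 e1.symm
    rw [← this]; module
  exact smul_right_injective _ (sub_ne_zero.2 h3.ne') e2

lemma exists_left [Finite ι] (t : ℝ) :
    ∃ δ > 0, (∀ i, ∀ s, t - δ < s → s ≤ t → S.x i s = S.x i t + (s - t) • S.vl i t) ∧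
      ∀ i, ∀ s, t - δ < s → s < t → S.vr i s = S.vl i t := by
  have h := fun i => S.left_lin i t (Set.mem_univ t)
  choose δ hδ h using h
  obtain ⟨δ₀, hδ₀, hle⟩ : ∃ δ₀ > 0, ∀ i, δ₀ ≤ δ i := by
    rcases isEmpty_or_nonempty ι with he | he
    · exact ⟨1, one_pos, fun i => he.elim i⟩
    · obtain ⟨i, hi⟩ := Finite.exists_min δ
      exact ⟨δ i, hδ i, hi⟩
  have hx : ∀ i, ∀ s, t - δ₀ < s → s ≤ t → S.x i s = S.x i t + (s - t) • S.vl i t :=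
    fun i s h1 h2 => h i s ⟨⟨by linarith [hle i], h2⟩, Set.mem_univ s⟩
  refine ⟨δ₀, hδ₀, hx, fun i s h1 h2 => ?_⟩
  obtain ⟨η, hη, hs⟩ := S.right_lin i s (Set.mem_univ s)
  obtain ⟨s', h3, h4, h5⟩ : ∃ s', s < s' ∧ s' ≤ t ∧ s' ≤ s + η :=
    ⟨s + min η (t - s), by simp [hη, h2], by
      linarith [min_le_right η (t - s)], by linarith [min_le_left η (t - s)]⟩
  have e1 := hs s' ⟨⟨h3.le, h5⟩, Set.mem_univ s'⟩
  rw [hx i s' (by linarith) h4, hx i s h1 h2.le] at e1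
  have e2 : (s' - s) • S.vr i s = (s' - s) • S.vl i t := by
    rw [← sub_eq_zero]
    have := sub_eq_zero.2 e1.symm
    rw [← this]; module
  exact smul_right_injective _ (sub_ne_zero.2 h3.ne') e2

/-- The balls `i` and `j`, and no others, collide at time `t`. -/
structure Bounce (t : ℝ) (i j : ι) : Prop where
  ne : i ≠ j
  contact : ‖S.x i t - S.x j t‖ = 2
  change : S.vr i t ≠ S.vl i t
  change' : S.vr j t ≠ S.vl j t
  other : ∀ k, k ≠ i → k ≠ j → S.vr k t = S.vl k t
  eq : S.vr i t = S.vl i t -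
    ⟪S.vl i t - S.vl j t, (2⁻¹ : ℝ) • (S.x i t - S.x j t)⟫ • ((2⁻¹ : ℝ) • (S.x i t - S.x j t))
  eq' : S.vr j t = S.vl j t +
    ⟪S.vl i t - S.vl j t, (2⁻¹ : ℝ) • (S.x i t - S.x j t)⟫ • ((2⁻¹ : ℝ) • (S.x i t - S.x j t))

variable {S} in
lemma Bounce.symm {t : ℝ} {i j : ι} (B : S.Bounce t i j) : S.Bounce t j i := by
  have key : ⟪S.vl j t - S.vl i t, (2⁻¹ : ℝ) • (S.x j t - S.x i t)⟫ •
      ((2⁻¹ : ℝ) • (S.x j t - S.x i t)) =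
      -(⟪S.vl i t - S.vl j t, (2⁻¹ : ℝ) • (S.x i t - S.x j t)⟫ •
      ((2⁻¹ : ℝ) • (S.x i t - S.x j t))) := by
    rw [← neg_sub (S.x i t), ← neg_sub (S.vl i t), smul_neg, inner_neg_neg, smul_neg]
  refine ⟨B.ne.symm, by rw [norm_sub_rev]; exact B.contact, B.change', B.change,
    fun k h1 h2 => B.other k h2 h1, ?_, ?_⟩
  · rw [key, sub_neg_eq_add]; exact B.eq'
  · rw [key, ← sub_eq_add_neg]; exact B.eq

lemma eq_or_bounce (t : ℝ) : (∀ i, S.vr i t = S.vl i t) ∨ ∃ i j, S.Bounce t i j := by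
  by_cases h : ∀ i, S.vr i t = S.vl i t
  · exact .inl h
  · right
    push Not at h
    obtain ⟨i, hi⟩ := h
    obtain ⟨j, h1, h2, h3, -, h5, h6, h7⟩ := S.collision_rule i t (Set.mem_univ t)
      ⟨t - 1, Set.mem_univ _, by linarith⟩ hi
    exact ⟨i, j, h1.symm, h2, hi, h3, h5, h6, h7⟩

variable {S} in
lemma Bounce.mem_collisions [DecidableEq ι] {t : ℝ} {i j : ι} (B : S.Bounce t i j) :
    (t, ({i, j} : Finset ι)) ∈ S.collisions :=
  ⟨Set.mem_univ t, ⟨t - 1, Set.mem_univ _, by simp⟩, i, j, B.ne, rfl, B.contact, B.change,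
    B.change'⟩

variable {S} in
lemma Bounce.approach [Finite ι] {t : ℝ} {i j : ι} (B : S.Bounce t i j) :
    ⟪S.vl i t - S.vl j t, S.x i t - S.x j t⟫ ≤ 0 := by
  obtain ⟨δ, hδ, hx, -⟩ := S.exists_left t
  set x := S.x i t - S.x j t with hxd
  set v := S.vl i t - S.vl j t with hvd
  by_contra! hpos
  obtain ⟨h, h0, h1, h2⟩ : ∃ h, 0 < h ∧ h < δ ∧ h * ‖v‖ ^ 2 < 2 * ⟪v, x⟫ := by
    refine ⟨min (δ / 2) (⟪v, x⟫ / (1 + ‖v‖ ^ 2)), by positivity,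
      (min_le_left _ _).trans_lt (by linarith), ?_⟩
    have h3 : min (δ / 2) (⟪v, x⟫ / (1 + ‖v‖ ^ 2)) * (1 + ‖v‖ ^ 2) ≤ ⟪v, x⟫ := by
      rw [← le_div_iff₀ (by positivity)]; exact min_le_right _ _
    have h4 : 0 < min (δ / 2) (⟪v, x⟫ / (1 + ‖v‖ ^ 2)) := by positivity
    linarith
  have e1 := S.dist_ge i j B.ne (t - h) (Set.mem_univ _)
  rw [hx i (t - h) (by linarith) (by linarith), hx j (t - h) (by linarith) (by linarith),
    show S.x i t + (t - h - t) • S.vl i t - (S.x j t + (t - h - t) • S.vl j t) = x - h • v by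
      rw [hxd, hvd]; module] at e1
  have e2 : ‖x - h • v‖ ^ 2 = ‖x‖ ^ 2 - 2 * (h * ⟪v, x⟫) + h ^ 2 * ‖v‖ ^ 2 := by
    rw [norm_sub_sq_real, inner_smul_right, norm_smul, real_inner_comm, mul_pow, Real.norm_eq_abs,
      sq_abs]
  rw [B.contact] at e2
  have e3 : (2 : ℝ) ^ 2 ≤ ‖x - h • v‖ ^ 2 := pow_le_pow_left₀ (by norm_num) e1 2
  nlinarith

variable {S} in
lemma Bounce.energy [Fintype ι] {t : ℝ} {i j : ι} (B : S.Bounce t i j) :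
    ∑ k, ‖S.vr k t‖ ^ 2 = ∑ k, ‖S.vl k t‖ ^ 2 := by
  classical
  rw [Fintype.sum_eq_add_sum_compl i, Fintype.sum_eq_add_sum_compl i]
  have hj : j ∈ ({i}ᶜ : Finset ι) := by simpa using B.ne.symm
  rw [← Finset.add_sum_erase _ _ hj, ← Finset.add_sum_erase _ _ hj, ← add_assoc, ← add_assoc]
  congr 1
  · obtain ⟨u, hu⟩ : ∃ u, u = (2⁻¹ : ℝ) • (S.x i t - S.x j t) := ⟨_, rfl⟩
    have hu1 : ‖u‖ = 1 := by rw [hu, norm_smul, B.contact]; norm_num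
    obtain ⟨c, hc⟩ : ∃ c, c = ⟪S.vl i t - S.vl j t, u⟫ := ⟨_, rfl⟩
    rw [B.eq, B.eq', ← hu, ← hc, norm_sub_sq_real, norm_add_sq_real, inner_smul_right,
      inner_smul_right, norm_smul, hu1, mul_one, Real.norm_eq_abs, sq_abs]
    rw [inner_sub_left] at hc
    linear_combination (2 * c) * hc
  · refine Finset.sum_congr rfl fun k hk => ?_
    simp only [Finset.mem_erase, Finset.mem_compl, Finset.mem_singleton] at hk
    rw [B.other k hk.2 hk.1]

lemma energy_left [Fintype ι] (t : ℝ) : ∑ k, ‖S.vr k t‖ ^ 2 = ∑ k, ‖S.vl k t‖ ^ 2 := by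
  rcases S.eq_or_bounce t with h | ⟨i, j, B⟩
  · simp only [h]
  · exact B.energy

lemma norm_vr_le [Fintype ι] (i : ι) (t : ℝ) : ‖S.vr i t‖ ≤ S.speedNorm t :=
  Real.le_sqrt_of_sq_le
    (Finset.single_le_sum (f := fun k => ‖S.vr k t‖ ^ 2) (fun _ _ => by positivity)
      (Finset.mem_univ i))

lemma norm_vl_le [Fintype ι] (i : ι) (t : ℝ) : ‖S.vl i t‖ ≤ S.speedNorm t := by
  refine Real.le_sqrt_of_sq_le ?_
  rw [S.energy_left]
  exact Finset.single_le_sum (f := fun k => ‖S.vl k t‖ ^ 2) (fun _ _ => by positivity)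
    (Finset.mem_univ i)

/-- The energy is conserved, and no ball moves faster than the initial speed of the system. -/
lemma conservation [Fintype ι] {t₀ t : ℝ} (ht : t₀ ≤ t) :
    S.speedNorm t = S.speedNorm t₀ ∧ ∀ i, ‖S.x i t - S.x i t₀‖ ≤ S.speedNorm t₀ * (t - t₀) := by
  refine forall_mem_Icc_of_left_right (b := t) (P := fun t => S.speedNorm t = S.speedNorm t₀ ∧
    ∀ i, ‖S.x i t - S.x i t₀‖ ≤ S.speedNorm t₀ * (t - t₀)) (by simp) ?_ ?_ t ht le_rfl
  · intro s hs _ ⟨h1, h2⟩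
    obtain ⟨δ, hδ, hx, hv⟩ := S.exists_right s
    refine ⟨δ, hδ, fun s' h3 h4 _ => ⟨?_, fun i => ?_⟩⟩
    · rw [← h1]; unfold speedNorm; simp only [hv _ s' h3.le h4]
    · rw [hx i s' h3.le h4, add_sub_right_comm]
      refine (norm_add_le _ _).trans ?_
      rw [norm_smul, Real.norm_eq_abs, abs_of_pos (by linarith)]
      have h5 := S.norm_vr_le i s
      rw [h1] at h5
      have h6 := mul_le_mul_of_nonneg_left h5 (show 0 ≤ s' - s by linarith)
      linarith [h2 i]
  · intro s hs _ H
    obtain ⟨δ, hδ, hx, hv⟩ := S.exists_left s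
    obtain ⟨s', h1, h2, h3⟩ : ∃ s', t₀ ≤ s' ∧ s - δ < s' ∧ s' < s :=
      ⟨max t₀ (s - δ / 2), le_max_left _ _, by linarith [le_max_right t₀ (s - δ / 2)], by
        simp [hs, hδ]⟩
    obtain ⟨H1, H2⟩ := H s' h1 h3
    have hE : S.speedNorm s = S.speedNorm t₀ := by
      rw [← H1]
      unfold speedNorm
      rw [S.energy_left s]
      simp only [hv _ s' h2 h3]
    refine ⟨hE, fun i => ?_⟩
    have h5 := S.norm_vl_le i s
    rw [hE] at h5
    rw [show S.x i s - S.x i t₀ = S.x i s' - S.x i t₀ + (s - s') • S.vl i s by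
      rw [hx i s' h2 h3.le]; module]
    refine (norm_add_le _ _).trans ?_
    rw [norm_smul, Real.norm_eq_abs, abs_of_pos (by linarith)]
    have h6 := mul_le_mul_of_nonneg_left h5 (show 0 ≤ s - s' by linarith)
    linarith [H2 i]

end BallSystem

section Geometry

variable {E : Type*} [NormedAddCommGroup E] [InnerProductSpace ℝ E]

lemma two_sub_sq_le_inner {w x : E} {η : ℝ} (hw : ‖w‖ = 1) (h : ‖x - (2 : ℝ) • w‖ ≤ 2 * η)
    (hx : 2 ≤ ‖x‖) : -η ^ 2 ≤ ⟪w, x⟫ - 2 := by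
  have h1 : ‖x - (2 : ℝ) • w‖ ^ 2 ≤ (2 * η) ^ 2 := pow_le_pow_left₀ (norm_nonneg _) h 2
  have h2 : (2 : ℝ) ^ 2 ≤ ‖x‖ ^ 2 := pow_le_pow_left₀ (by norm_num) hx 2
  rw [norm_sub_sq_real, inner_smul_right, norm_smul, hw, real_inner_comm] at h1
  norm_num at h1 h2
  nlinarith

lemma norm_smul_sub_smul_lt {w w' X Y : E} {α β η : ℝ} (hη : η < 1 / 2)
    (hX : ‖X - α • w‖ ≤ η) (hY : ‖Y - β • w'‖ ≤ η) (h : ‖X - Y‖ = 2) :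
    ‖α • w - β • w'‖ < 3 := by
  have h1 : ‖(X - Y) - (X - α • w) + (Y - β • w')‖ ≤ ‖X - Y‖ + ‖X - α • w‖ + ‖Y - β • w'‖ :=
    (norm_add_le _ _).trans (add_le_add_left (norm_sub_le _ _) _)
  rw [show (X - Y) - (X - α • w) + (Y - β • w') = α • w - β • w' by abel] at h1
  linarith

lemma lt_add_two_of_contact {w X Y : E} {a b : ℕ} {η : ℝ} (hη : η < 1 / 2) (hw : ‖w‖ = 1)
    (hX : ‖X - (2 * a : ℝ) • w‖ ≤ η) (hY : ‖Y - (2 * b : ℝ) • w‖ ≤ η) (h : ‖X - Y‖ = 2) :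
    a < b + 2 ∧ b < a + 2 := by
  have h1 := norm_smul_sub_smul_lt hη hX hY h
  rw [← sub_smul, norm_smul, hw, mul_one, Real.norm_eq_abs, abs_lt] at h1
  constructor
  · have : (a : ℝ) < b + 2 := by linarith
    exact_mod_cast this
  · have : (b : ℝ) < a + 2 := by linarith
    exact_mod_cast this

lemma not_contact {w w' X Y : E} {a b : ℕ} {η : ℝ} (hη : η < 1 / 2) (hw : ‖w‖ = 1)
    (hw' : ‖w'‖ = 1) (hww : ⟪w, w'⟫ = -(1 / 2)) (hX : ‖X - (2 * a : ℝ) • w‖ ≤ η)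
    (hY : ‖Y - (2 * b : ℝ) • w'‖ ≤ η) (ha : 1 ≤ a) (hb : 1 ≤ b) : ‖X - Y‖ ≠ 2 := by
  intro h
  have h1 := norm_smul_sub_smul_lt hη hX hY h
  have h2 : ‖(2 * a : ℝ) • w - (2 * b : ℝ) • w'‖ ^ 2 < 3 ^ 2 :=
    pow_lt_pow_left₀ h1 (norm_nonneg _) (by norm_num)
  rw [norm_sub_sq_real, inner_smul_right, real_inner_smul_left, norm_smul, norm_smul, hw, hw', hww,
    Real.norm_eq_abs, Real.norm_eq_abs, mul_one, mul_one, sq_abs, sq_abs] at h2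
  have ha' : (1 : ℝ) ≤ a := by exact_mod_cast ha
  have hb' : (1 : ℝ) ≤ b := by exact_mod_cast hb
  nlinarith

end Geometry

namespace BallSystem

variable {ι : Type} {d : ℕ} {S : BallSystem ι d Set.univ}

lemma Bounce.norm_half {t : ℝ} {i j : ι} (B : S.Bounce t i j) :
    ‖(2⁻¹ : ℝ) • (S.x i t - S.x j t)‖ = 1 := by
  rw [norm_smul, B.contact]; norm_num

lemma Bounce.contact_le {t η : ℝ} {i j : ι} {w : EuclideanSpace ℝ (Fin d)} (B : S.Bounce t i j)
    (hw : ‖w‖ = 1) (h : ‖S.x i t - S.x j t - (2 : ℝ) • w‖ ≤ 2 * η) :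
    |⟪w, S.x i t - S.x j t⟫ - 2| ≤ η ^ 2 := by
  have h1 := two_sub_sq_le_inner hw h B.contact.ge
  have h2 := real_inner_le_norm w (S.x i t - S.x j t)
  rw [hw, B.contact] at h2
  rw [abs_le]
  constructor <;> nlinarith

lemma Bounce.norm_half_sub {t η : ℝ} {i j : ι} {w : EuclideanSpace ℝ (Fin d)}
    (h : ‖S.x i t - S.x j t - (2 : ℝ) • w‖ ≤ 2 * η) :
    ‖(2⁻¹ : ℝ) • (S.x i t - S.x j t) - w‖ ≤ η := by
  have : (2⁻¹ : ℝ) • (S.x i t - S.x j t) - w =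
      (2⁻¹ : ℝ) • (S.x i t - S.x j t - (2 : ℝ) • w) := by module
  rw [this, norm_smul]
  norm_num
  linarith

lemma Bounce.norm_vl_sub {Λ t : ℝ} (hV : ∀ k, ‖S.vl k t‖ ≤ Λ) (i j : ι) :
    ‖S.vl i t - S.vl j t‖ ≤ 2 * Λ :=
  (norm_sub_le _ _).trans (by linarith [hV i, hV j])

lemma Bounce.approach_le [Finite ι] {t η Λ : ℝ} {i j : ι} {w : EuclideanSpace ℝ (Fin d)}
    (B : S.Bounce t i j) (h : ‖S.x i t - S.x j t - (2 : ℝ) • w‖ ≤ 2 * η)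
    (hV : ∀ k, ‖S.vl k t‖ ≤ Λ) : ⟪w, S.vl i t⟫ - ⟪w, S.vl j t⟫ ≤ 2 * Λ * η := by
  have h1 := B.approach
  obtain ⟨u, hu⟩ : ∃ u, u = (2⁻¹ : ℝ) • (S.x i t - S.x j t) := ⟨_, rfl⟩
  have h2 : ⟪S.vl i t - S.vl j t, u⟫ ≤ 0 := by rw [hu, inner_smul_right]; linarith
  have h3 := Bounce.norm_half_sub h
  rw [← hu] at h3
  have h4 := neg_le_of_abs_le (abs_real_inner_le_norm (S.vl i t - S.vl j t) (u - w))
  have h5 := mul_le_mul (Bounce.norm_vl_sub hV i j) h3 (norm_nonneg _)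
    (by linarith [norm_nonneg (S.vl i t), hV i])
  rw [inner_sub_right] at h4
  rw [← inner_sub_right, real_inner_comm]
  linarith

/-- The exchanged momentum is almost parallel to `w`. -/
lemma Bounce.impulse {t η Λ : ℝ} {i j : ι} {w w' : EuclideanSpace ℝ (Fin d)} (B : S.Bounce t i j)
    (hw : ‖w‖ = 1) (hw' : ‖w'‖ = 1) (h : ‖S.x i t - S.x j t - (2 : ℝ) • w‖ ≤ 2 * η)
    (hV : ∀ k, ‖S.vl k t‖ ≤ Λ) :
    |⟪w', S.vr i t⟫ - (⟪w', S.vl i t⟫ - (⟪w, S.vl i t⟫ - ⟪w, S.vl j t⟫) * ⟪w', w⟫)| ≤ 4 * Λ * η ∧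
    |⟪w', S.vr j t⟫ - (⟪w', S.vl j t⟫ + (⟪w, S.vl i t⟫ - ⟪w, S.vl j t⟫) * ⟪w', w⟫)| ≤
      4 * Λ * η := by
  have hu1 := B.norm_half
  have hv := Bounce.norm_vl_sub hV i j
  have h3 := Bounce.norm_half_sub h
  have e1 := B.eq
  have e2 := B.eq'
  obtain ⟨u, hu⟩ : ∃ u, u = (2⁻¹ : ℝ) • (S.x i t - S.x j t) := ⟨_, rfl⟩
  rw [← hu] at hu1 h3 e1 e2
  have hΛ : 0 ≤ 2 * Λ := (norm_nonneg _).trans hv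
  have hη : 0 ≤ η := (norm_nonneg _).trans h3
  have key : |⟪S.vl i t - S.vl j t, u⟫ * ⟪w', u⟫ - ⟪S.vl i t - S.vl j t, w⟫ * ⟪w', w⟫| ≤
      4 * Λ * η := by
    have a1 : |⟪S.vl i t - S.vl j t, u⟫| ≤ 2 * Λ := by
      have := abs_real_inner_le_norm (S.vl i t - S.vl j t) u
      rw [hu1] at this; linarith
    have a2 : |⟪w', u - w⟫| ≤ η := by
      have := abs_real_inner_le_norm w' (u - w)
      rw [hw'] at this; linarith
    have a3 : |⟪S.vl i t - S.vl j t, u - w⟫| ≤ 2 * Λ * η :=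
      (abs_real_inner_le_norm _ _).trans (mul_le_mul hv h3 (norm_nonneg _) hΛ)
    have a4 : |⟪w', w⟫| ≤ 1 := by
      have := abs_real_inner_le_norm w' w
      rw [hw, hw'] at this; linarith
    have a5 := mul_le_mul a1 a2 (abs_nonneg _) hΛ
    have a6 := mul_le_mul a3 a4 (abs_nonneg _) (by positivity)
    rw [← abs_mul] at a5 a6
    have a7 := abs_add_le (⟪S.vl i t - S.vl j t, u⟫ * ⟪w', u - w⟫)
      (⟪S.vl i t - S.vl j t, u - w⟫ * ⟪w', w⟫)
    rw [inner_sub_right, inner_sub_right] at a7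
    rw [inner_sub_right] at a5 a6
    refine le_trans (le_of_eq ?_) (a7.trans (by linarith))
    congr 1; ring
  have hc : ⟪w, S.vl i t⟫ - ⟪w, S.vl j t⟫ = ⟪S.vl i t - S.vl j t, w⟫ := by
    rw [← inner_sub_right, real_inner_comm]
  rw [hc, e1, e2, inner_sub_right, inner_add_right, inner_smul_right]
  constructor
  · rw [abs_sub_comm] at key
    refine le_trans (le_of_eq ?_) key
    congr 1; ring
  · refine le_trans (le_of_eq ?_) key
    congr 1; ring

end BallSystem

/-- Two arms `p`, `q` and a train `a` of balls with the common first ball `p 0 = q 0 = a 0`,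
together with the directions of the arms and of the train. -/
structure Layout {ι : Type} {d : ℕ} (n m : ℕ) (p q a : ℕ → ι)
    (e f g : EuclideanSpace ℝ (Fin d)) : Prop where
  norm_e : ‖e‖ = 1
  norm_f : ‖f‖ = 1
  inner_ef : ⟪e, f⟫ = -(1 / 2)
  sum : g = e + f
  p_zero : p 0 = a 0
  q_zero : q 0 = a 0
  p_inj : ∀ j ≤ n, ∀ k ≤ n, p j = p k → j = k
  q_inj : ∀ j ≤ n, ∀ k ≤ n, q j = q k → j = k
  a_inj : ∀ j < m, ∀ k < m, a j = a k → j = k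
  p_ne_q : ∀ j k, 1 ≤ j → 1 ≤ k → p j ≠ q k
  p_ne_a : ∀ j k, 1 ≤ j → p j ≠ a k
  q_ne_a : ∀ j k, 1 ≤ j → q j ≠ a k
  cover : ∀ i, (∃ k ≤ n, i = p k) ∨ (∃ k ≤ n, i = q k) ∨ ∃ k < m, i = a k

namespace Layout

variable {ι : Type} {d n m : ℕ} {p q a : ℕ → ι} {e f g : EuclideanSpace ℝ (Fin d)}

lemma swap (Y : Layout n m p q a e f g) : Layout n m q p a f e g where
  norm_e := Y.norm_f
  norm_f := Y.norm_e
  inner_ef := by rw [real_inner_comm]; exact Y.inner_ef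
  sum := by rw [Y.sum, add_comm]
  p_zero := Y.q_zero
  q_zero := Y.p_zero
  p_inj := Y.q_inj
  q_inj := Y.p_inj
  a_inj := Y.a_inj
  p_ne_q j k hj hk := (Y.p_ne_q k j hk hj).symm
  p_ne_a := Y.q_ne_a
  q_ne_a := Y.p_ne_a
  cover i := by
    rcases Y.cover i with h | h | h
    exacts [.inr (.inl h), .inl h, .inr (.inr h)]

lemma inner_eg (Y : Layout n m p q a e f g) : ⟪e, g⟫ = 1 / 2 := by
  rw [Y.sum, inner_add_right, real_inner_self_eq_norm_sq, Y.norm_e, Y.inner_ef]; norm_num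

lemma norm_g (Y : Layout n m p q a e f g) : ‖g‖ = 1 := by
  have h : ‖g‖ ^ 2 = 1 := by
    rw [Y.sum, norm_add_sq_real, Y.norm_e, Y.norm_f, Y.inner_ef]; norm_num
  have h0 := norm_nonneg g
  nlinarith

end Layout

namespace BallSystem

variable {ι : Type} {d : ℕ} (S : BallSystem ι d Set.univ)

/-- All balls are close to their ideal positions. -/
structure Nearby (n m : ℕ) (p q a : ℕ → ι) (e f g : EuclideanSpace ℝ (Fin d)) (η t : ℝ) :
    Prop where
  p : ∀ k ≤ n, ‖S.x (p k) t - (2 * k : ℝ) • e‖ ≤ η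
  q : ∀ k ≤ n, ‖S.x (q k) t - (2 * k : ℝ) • f‖ ≤ η
  a : ∀ k < m, ‖S.x (a k) t - (2 * k : ℝ) • -g‖ ≤ η

/-- The reduced coordinates of the system, with velocities `V`. -/
noncomputable def snap (p q a : ℕ → ι) (e f g : EuclideanSpace ℝ (Fin d)) (ε Λ : ℝ)
    (V : ι → ℝ → EuclideanSpace ℝ (Fin d)) (t : ℝ) : Snapshot where
  y₁ k := (⟪e, S.x (p k) t⟫ - 2 * k) / ε
  v₁ k := ⟪e, V (p k) t⟫ / Λ
  y₂ k := (⟪f, S.x (q k) t⟫ - 2 * k) / ε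
  v₂ k := ⟪f, V (q k) t⟫ / Λ
  z k := (⟪g, S.x (a k) t⟫ + 2 * k) / ε
  vz k := ⟪g, V (a k) t⟫ / Λ

variable {S} {n m : ℕ} {p q a : ℕ → ι} {e f g : EuclideanSpace ℝ (Fin d)} {ε Λ η κ t : ℝ}

lemma Nearby.swap (N : S.Nearby n m p q a e f g η t) : S.Nearby n m q p a f e g η t :=
  ⟨N.q, N.p, N.a⟩

lemma Nearby.arm (N : S.Nearby n m p q a e f g η t) {k : ℕ} (hk : k < n) :
    ‖S.x (p (k + 1)) t - S.x (p k) t - (2 : ℝ) • e‖ ≤ 2 * η := by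
  have h := norm_sub_le (S.x (p (k + 1)) t - (2 * (k + 1 : ℕ) : ℝ) • e)
    (S.x (p k) t - (2 * k : ℝ) • e)
  rw [show S.x (p (k + 1)) t - (2 * (k + 1 : ℕ) : ℝ) • e - (S.x (p k) t - (2 * k : ℝ) • e) =
    S.x (p (k + 1)) t - S.x (p k) t - (2 : ℝ) • e by push_cast; module] at h
  linarith [N.p (k + 1) hk, N.p k hk.le]

lemma Nearby.train (N : S.Nearby n m p q a e f g η t) {k : ℕ} (hk : k + 1 < m) :
    ‖S.x (a k) t - S.x (a (k + 1)) t - (2 : ℝ) • g‖ ≤ 2 * η := by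
  have h := norm_sub_le (S.x (a k) t - (2 * k : ℝ) • -g)
    (S.x (a (k + 1)) t - (2 * (k + 1 : ℕ) : ℝ) • -g)
  rw [show S.x (a k) t - (2 * k : ℝ) • -g - (S.x (a (k + 1)) t - (2 * (k + 1 : ℕ) : ℝ) • -g) =
    S.x (a k) t - S.x (a (k + 1)) t - (2 : ℝ) • g by push_cast; module] at h
  linarith [N.a (k + 1) hk, N.a k (by omega)]

lemma Bounce.arm_cases {j k : ℕ} (B : S.Bounce t (p j) (p k)) (Y : Layout n m p q a e f g)
    (N : S.Nearby n m p q a e f g η t) (hη : η < 1 / 2) (hj : j ≤ n) (hk : k ≤ n) :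
    ∃ l < n, S.Bounce t (p (l + 1)) (p l) := by
  have h := lt_add_two_of_contact hη Y.norm_e (N.p j hj) (N.p k hk) B.contact
  have hne : j ≠ k := fun h => B.ne (by rw [h])
  rcases (show j = k + 1 ∨ k = j + 1 by omega) with h | h
  · rw [h] at B; exact ⟨k, by omega, B⟩
  · rw [h] at B; exact ⟨j, by omega, B.symm⟩

lemma Bounce.train_cases {j k : ℕ} (B : S.Bounce t (a j) (a k)) (Y : Layout n m p q a e f g)
    (N : S.Nearby n m p q a e f g η t) (hη : η < 1 / 2) (hj : j < m) (hk : k < m) :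
    ∃ l, l + 1 < m ∧ S.Bounce t (a l) (a (l + 1)) := by
  have h := lt_add_two_of_contact hη (by rw [norm_neg]; exact Y.norm_g) (N.a j hj) (N.a k hk)
    B.contact
  have hne : j ≠ k := fun h => B.ne (by rw [h])
  rcases (show j = k + 1 ∨ k = j + 1 by omega) with h | h
  · rw [h] at B; exact ⟨k, by omega, B.symm⟩
  · rw [h] at B; exact ⟨j, by omega, B⟩

/-- Only neighbouring balls of an arm or of the train collide. -/
lemma Bounce.cases {i j : ι} (B : S.Bounce t i j) (Y : Layout n m p q a e f g)
    (N : S.Nearby n m p q a e f g η t) (hη : η < 1 / 2) (hm : 0 < m) :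
    (∃ l < n, S.Bounce t (p (l + 1)) (p l)) ∨ (∃ l < n, S.Bounce t (q (l + 1)) (q l)) ∨
      ∃ l, l + 1 < m ∧ S.Bounce t (a l) (a (l + 1)) := by
  have ng : ‖-g‖ = 1 := by rw [norm_neg]; exact Y.norm_g
  have eg : ⟪e, -g⟫ = -(1 / 2) := by rw [inner_neg_right, Y.inner_eg]
  have fg : ⟪f, -g⟫ = -(1 / 2) := by rw [inner_neg_right, Y.swap.inner_eg]
  have pq : ∀ {j k : ℕ}, j ≤ n → k ≤ n → S.Bounce t (p j) (q k) →
      (∃ l < n, S.Bounce t (p (l + 1)) (p l)) ∨ (∃ l < n, S.Bounce t (q (l + 1)) (q l)) := by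
    intro j k hj hk B
    rcases Nat.eq_zero_or_pos j with h | h
    · rw [h, Y.p_zero, ← Y.q_zero] at B
      exact .inr (B.arm_cases Y.swap N.swap hη (by omega) hk)
    rcases Nat.eq_zero_or_pos k with h' | h'
    · rw [h', Y.q_zero, ← Y.p_zero] at B
      exact .inl (B.arm_cases Y N hη hj (by omega))
    exact absurd B.contact
      (not_contact hη Y.norm_e Y.norm_f Y.inner_ef (N.p j hj) (N.q k hk) h h')
  have pa : ∀ {j k : ℕ}, j ≤ n → k < m → S.Bounce t (p j) (a k) →
      (∃ l < n, S.Bounce t (p (l + 1)) (p l)) ∨ ∃ l, l + 1 < m ∧ S.Bounce t (a l) (a (l + 1)) := by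
    intro j k hj hk B
    rcases Nat.eq_zero_or_pos j with h | h
    · rw [h, Y.p_zero] at B
      exact .inr (B.train_cases Y N hη hm hk)
    rcases Nat.eq_zero_or_pos k with h' | h'
    · rw [h', ← Y.p_zero] at B
      exact .inl (B.arm_cases Y N hη hj (by omega))
    exact absurd B.contact (not_contact hη Y.norm_e ng eg (N.p j hj) (N.a k hk) h h')
  have qa : ∀ {j k : ℕ}, j ≤ n → k < m → S.Bounce t (q j) (a k) →
      (∃ l < n, S.Bounce t (q (l + 1)) (q l)) ∨ ∃ l, l + 1 < m ∧ S.Bounce t (a l) (a (l + 1)) := by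
    intro j k hj hk B
    rcases Nat.eq_zero_or_pos j with h | h
    · rw [h, Y.q_zero] at B
      exact .inr (B.train_cases Y N hη hm hk)
    rcases Nat.eq_zero_or_pos k with h' | h'
    · rw [h', ← Y.q_zero] at B
      exact .inl (B.arm_cases Y.swap N.swap hη hj (by omega))
    exact absurd B.contact (not_contact hη Y.norm_f ng fg (N.q j hj) (N.a k hk) h h')
  rcases Y.cover i with ⟨k, hk, rfl⟩ | ⟨k, hk, rfl⟩ | ⟨k, hk, rfl⟩ <;>
    rcases Y.cover j with ⟨l, hl, rfl⟩ | ⟨l, hl, rfl⟩ | ⟨l, hl, rfl⟩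
  · exact .inl (B.arm_cases Y N hη hk hl)
  · exact (pq hk hl B).elim .inl (.inr ∘ .inl)
  · exact (pa hk hl B).elim .inl (.inr ∘ .inr)
  · exact (pq hl hk B.symm).elim .inl (.inr ∘ .inl)
  · exact .inr (.inl (B.arm_cases Y.swap N.swap hη hk hl))
  · exact .inr (qa hk hl B)
  · exact (pa hl hk B.symm).elim .inl (.inr ∘ .inr)
  · exact .inr (qa hl hk B.symm)
  · exact .inr (.inr (B.train_cases Y N hη hk hl))

lemma abs_div_le {x y z : ℝ} (hy : 0 < y) (h : |x| ≤ z * y) : |x / y| ≤ z := by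
  rw [abs_div, abs_of_pos hy, div_le_iff₀ hy]; exact h

lemma Bounce.hitArm [Finite ι] {k : ℕ} (B : S.Bounce t (p (k + 1)) (p k)) (hk : k < n)
    (Y : Layout n m p q a e f g) (N : S.Nearby n m p q a e f g η t) (hV : ∀ k, ‖S.vl k t‖ ≤ Λ)
    (hε : 0 < ε) (hΛ : 0 < Λ) (hη : 4 * η ≤ κ) (hη' : η ^ 2 ≤ κ * ε) :
    Snapshot.HitArm n m κ (S.snap p q a e f g ε Λ S.vl t) (S.snap p q a e f g ε Λ S.vr t) k := by
  have hη0 : 0 ≤ η := (norm_nonneg _).trans (N.p 0 (by omega))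
  have hκ : 4 * Λ * η ≤ κ * Λ := by nlinarith
  have other : ∀ i, i ≠ p (k + 1) → i ≠ p k → S.vr i t = S.vl i t := B.other
  have ea := B.approach_le (N.arm hk) hV
  have hee : ⟪e, e⟫ = (1 : ℝ) := by rw [real_inner_self_eq_norm_sq, Y.norm_e]; norm_num
  have hfe : ⟪f, e⟫ = -(1 / 2 : ℝ) := by rw [real_inner_comm]; exact Y.inner_ef
  obtain ⟨i1, i2⟩ := B.impulse Y.norm_e Y.norm_e (N.arm hk) hV
  have i3 := (B.impulse Y.norm_e Y.norm_f (N.arm hk) hV).2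
  rw [hee] at i1 i2
  rw [hfe] at i3
  constructor
  · exact hk
  · have h := (B.contact_le Y.norm_e (N.arm hk)).trans hη'
    rw [inner_sub_right] at h
    have := abs_div_le hε h
    convert this using 2
    simp only [snap]
    push_cast; ring
  · simp only [snap]
    rw [← sub_div, div_le_iff₀ hΛ]
    nlinarith
  · have := abs_div_le hΛ (i1.trans hκ)
    convert this using 2
    simp only [snap]; ring
  · have := abs_div_le hΛ (i2.trans hκ)
    convert this using 2
    simp only [snap]; ring
  · intro j hj h1 h2
    simp only [snap]
    rw [other _ (fun h => h2 (Y.p_inj j hj (k + 1) hk h)) fun h => h1 (Y.p_inj j hj k hk.le h)]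
  · intro j hj1 hj
    simp only [snap]
    rw [other _ (Y.p_ne_q (k + 1) j (by omega) hj1).symm]
    rcases Nat.eq_zero_or_pos k with h | h
    · rw [h, Y.p_zero]; exact Y.q_ne_a j 0 hj1
    · exact (Y.p_ne_q k j h hj1).symm
  · intro h
    simp only [snap]
    rw [Y.q_zero, other _ (Y.p_ne_a (k + 1) 0 (by omega)).symm (Y.p_ne_a k 0 (by omega)).symm]
  · rintro rfl
    have := abs_div_le hΛ (i3.trans hκ)
    convert this using 2
    simp only [snap, Y.p_zero, Y.q_zero]; ring
  · intro i h1 h2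
    simp only [snap]
    rw [other _ (Y.p_ne_a (k + 1) i (by omega)).symm]
    rcases Nat.eq_zero_or_pos k with h | h
    · rw [h, Y.p_zero]; intro h; have := Y.a_inj i h2 0 (by omega) h; omega
    · exact (Y.p_ne_a k i h).symm
  · exact ⟨rfl, rfl, rfl⟩

lemma Bounce.hitTrain [Finite ι] {k : ℕ} (B : S.Bounce t (a k) (a (k + 1))) (hk : k + 1 < m)
    (Y : Layout n m p q a e f g) (N : S.Nearby n m p q a e f g η t) (hV : ∀ k, ‖S.vl k t‖ ≤ Λ)
    (hε : 0 < ε) (hΛ : 0 < Λ) (hη : 4 * η ≤ κ) (hη' : η ^ 2 ≤ κ * ε) :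
    Snapshot.HitTrain n m κ (S.snap p q a e f g ε Λ S.vl t)
      (S.snap p q a e f g ε Λ S.vr t) k := by
  have hη0 : 0 ≤ η := (norm_nonneg _).trans (N.p 0 (by omega))
  have hκ : 4 * Λ * η ≤ κ * Λ := by nlinarith
  have other : ∀ i, i ≠ a k → i ≠ a (k + 1) → S.vr i t = S.vl i t := B.other
  have ea := B.approach_le (N.train hk) hV
  have hgg : ⟪g, g⟫ = (1 : ℝ) := by rw [real_inner_self_eq_norm_sq, Y.norm_g]; norm_num
  obtain ⟨i1, i2⟩ := B.impulse Y.norm_g Y.norm_g (N.train hk) hV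
  have i3 := (B.impulse Y.norm_g Y.norm_e (N.train hk) hV).1
  have i4 := (B.impulse Y.norm_g Y.norm_f (N.train hk) hV).1
  rw [hgg] at i1 i2
  rw [Y.inner_eg] at i3
  rw [Y.swap.inner_eg] at i4
  constructor
  · exact hk
  · have h := (B.contact_le Y.norm_g (N.train hk)).trans hη'
    rw [inner_sub_right] at h
    have := abs_div_le hε h
    convert this using 2
    simp only [snap]
    push_cast; ring
  · simp only [snap]
    rw [← sub_div, div_le_iff₀ hΛ]
    nlinarith
  · have := abs_div_le hΛ (i2.trans hκ)
    convert this using 2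
    simp only [snap]; ring
  · intro _
    have := abs_div_le hΛ (i1.trans hκ)
    convert this using 2
    simp only [snap]; ring
  · intro j _ hj h1 h2
    simp only [snap]
    rw [other _ (fun h => h1 (Y.a_inj j hj k (by omega) h))
      fun h => h2 (Y.a_inj j hj (k + 1) hk h)]
  · rintro rfl
    have := abs_div_le hΛ (i3.trans hκ)
    convert this using 2
    simp only [snap, Y.p_zero]; ring
  · rintro rfl
    have := abs_div_le hΛ (i4.trans hκ)
    convert this using 2
    simp only [snap, Y.q_zero]; ring
  · intro h
    have hne : S.vr (a 0) t = S.vl (a 0) t :=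
      other _ (fun h' => h (Y.a_inj 0 (by omega) k (by omega) h').symm)
        fun h' => absurd (Y.a_inj 0 (by omega) (k + 1) hk h') (by omega)
    simp only [snap, Y.p_zero, Y.q_zero, hne, and_self]
  · intro j hj1 _
    simp only [snap]
    rw [other _ (Y.p_ne_a j k hj1) (Y.p_ne_a j (k + 1) hj1)]
  · intro j hj1 _
    simp only [snap]
    rw [other _ (Y.q_ne_a j k hj1) (Y.q_ne_a j (k + 1) hj1)]
  · exact ⟨rfl, rfl, rfl⟩

lemma Bounce.collides [Finite ι] {i j : ι} (B : S.Bounce t i j) (hm : 0 < m)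
    (Y : Layout n m p q a e f g) (N : S.Nearby n m p q a e f g η t) (hV : ∀ k, ‖S.vl k t‖ ≤ Λ)
    (hε : 0 < ε) (hΛ : 0 < Λ) (hη : 4 * η ≤ κ) (hη' : η ^ 2 ≤ κ * ε) (hη'' : η < 1 / 2) :
    Snapshot.Collides n m κ (S.snap p q a e f g ε Λ S.vl t)
      (S.snap p q a e f g ε Λ S.vr t) := by
  rcases B.cases Y N hη'' hm with ⟨l, hl, B⟩ | ⟨l, hl, B⟩ | ⟨l, hl, B⟩
  · exact .inl ⟨l, B.hitArm hl Y N hV hε hΛ hη hη'⟩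
  · exact .inr (.inl ⟨l, B.hitArm hl Y.swap N.swap hV hε hΛ hη hη'⟩)
  · exact .inr (.inr ⟨l, B.hitTrain hl Y N hV hε hΛ hη hη'⟩)

lemma Nearby.arm_ge (N : S.Nearby n m p q a e f g η t) (Y : Layout n m p q a e f g) (hε : 0 < ε)
    (hη' : η ^ 2 ≤ κ * ε) {k : ℕ} (hk : k < n) (V : ι → ℝ → EuclideanSpace ℝ (Fin d)) :
    -κ ≤ (S.snap p q a e f g ε Λ V t).y₁ (k + 1) - (S.snap p q a e f g ε Λ V t).y₁ k := by
  have hne : p (k + 1) ≠ p k := fun h => absurd (Y.p_inj (k + 1) hk k hk.le h) (by omega)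
  have h := two_sub_sq_le_inner Y.norm_e (N.arm hk) (S.dist_ge _ _ hne t (Set.mem_univ t))
  rw [inner_sub_right] at h
  simp only [snap]
  rw [← sub_div, le_div_iff₀ hε]
  push_cast
  linarith

lemma Nearby.separated (N : S.Nearby n m p q a e f g η t) (Y : Layout n m p q a e f g)
    (hε : 0 < ε) (hη' : η ^ 2 ≤ κ * ε) (V : ι → ℝ → EuclideanSpace ℝ (Fin d)) :
    (S.snap p q a e f g ε Λ V t).Separated n m κ := by
  refine ⟨fun k hk => N.arm_ge (Λ := Λ) Y hε hη' hk V,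
    fun k hk => N.swap.arm_ge (Λ := Λ) Y.swap hε hη' hk V, fun k hk => ?_⟩
  have hne : a k ≠ a (k + 1) :=
    fun h => absurd (Y.a_inj k (by omega) (k + 1) hk h) (by omega)
  have h := two_sub_sq_le_inner Y.norm_g (N.train hk) (S.dist_ge _ _ hne t (Set.mem_univ t))
  rw [inner_sub_right] at h
  simp only [snap]
  rw [← sub_div, le_div_iff₀ hε]
  push_cast
  linarith

lemma snap_linked (Y : Layout n m p q a e f g) (V : ι → ℝ → EuclideanSpace ℝ (Fin d)) :
    (S.snap p q a e f g ε Λ V t).Linked := by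
  constructor <;> simp only [snap, Y.p_zero, Y.q_zero, Y.sum, inner_add_left] <;> push_cast <;> ring

lemma snap_move {V : ι → ℝ → EuclideanSpace ℝ (Fin d)} {t' δ : ℝ} (hε : 0 < ε) (hΛ : 0 < Λ)
    (hδ : t' - t = δ * (ε / Λ)) (hx : ∀ i, S.x i t' = S.x i t + (t' - t) • S.vr i t)
    (hV : ∀ i, V i t' = S.vr i t) :
    S.snap p q a e f g ε Λ V t' = (S.snap p q a e f g ε Λ S.vr t).move δ := by
  simp only [snap, Snapshot.move, hx, hV, inner_add_right, inner_smul_right, hδ, Snapshot.mk.injEq,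
    true_and, and_true]
  refine ⟨?_, ?_, ?_⟩ <;> ext k <;> field_simp <;> ring

/-- The reduced coordinates of a system whose balls stay close to their ideal positions evolve as
required. -/
lemma evolution [Fintype ι] (Y : Layout n m p q a e f g) (hm : 0 < m) {t₀ T : ℝ}
    (N : ∀ t, t₀ ≤ t → t ≤ t₀ + T * (ε / Λ) → S.Nearby n m p q a e f g η t)
    (hΛ₀ : S.speedNorm t₀ = Λ) (hε : 0 < ε) (hΛ : 0 < Λ) (hη : 4 * η ≤ κ) (hη' : η ^ 2 ≤ κ * ε)
    (hη'' : η < 1 / 2) :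
    Evolution n m κ T {s | ∃ i j, S.Bounce (t₀ + s * (ε / Λ)) i j}
      (fun s => S.snap p q a e f g ε Λ S.vr (t₀ + s * (ε / Λ)))
      (fun s => S.snap p q a e f g ε Λ S.vl (t₀ + s * (ε / Λ))) := by
  have hq : 0 < ε / Λ := div_pos hε hΛ
  have hN : ∀ s, 0 ≤ s → s ≤ T → S.Nearby n m p q a e f g η (t₀ + s * (ε / Λ)) := fun s h0 h1 =>
    N _ (by nlinarith) (by nlinarith)
  refine ⟨fun s h0 h1 => ?_, fun s h0 h1 => ?_, fun s h0 h1 => snap_linked Y _,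
    fun s h0 h1 => snap_linked Y _, fun s h0 h1 => (hN s h0 h1).separated Y hε hη' _,
    fun s h0 h1 => ?_⟩
  · obtain ⟨δ, hδ, hx, hv⟩ := S.exists_right (t₀ + s * (ε / Λ))
    refine ⟨δ / (ε / Λ), div_pos hδ hq, fun s' h3 h4 _ => ?_⟩
    have h5 : t₀ + s * (ε / Λ) ≤ t₀ + s' * (ε / Λ) := by nlinarith
    have h6 : t₀ + s' * (ε / Λ) < t₀ + s * (ε / Λ) + δ := by
      rw [← sub_lt_iff_lt_add', lt_div_iff₀ hq] at h4
      linarith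
    exact snap_move hε hΛ (by ring) (fun i => hx i _ h5 h6) fun i => hv i _ h5 h6
  · obtain ⟨δ, hδ, hx, hv⟩ := S.exists_left (t₀ + s * (ε / Λ))
    obtain ⟨s', h2, h3, h4⟩ : ∃ s', 0 ≤ s' ∧ s' < s ∧ (s - s') * (ε / Λ) < δ := by
      refine ⟨max 0 (s - δ / (ε / Λ) / 2), le_max_left _ _, by simp [h0]; positivity, ?_⟩
      rw [← lt_div_iff₀ hq]
      have : 0 < δ / (ε / Λ) := div_pos hδ hq
      linarith [le_max_right 0 (s - δ / (ε / Λ) / 2)]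
    have h5 : t₀ + s' * (ε / Λ) < t₀ + s * (ε / Λ) := by nlinarith
    have h6 : t₀ + s * (ε / Λ) - δ < t₀ + s' * (ε / Λ) := by linarith
    refine ⟨s', h2, h3, snap_move hε hΛ (by ring) (fun i => ?_)
      fun i => (hv i _ h6 h5).symm⟩
    rw [hv i _ h6 h5, hx i _ h6 h5.le]
    module
  · rcases S.eq_or_bounce (t₀ + s * (ε / Λ)) with h | ⟨i, j, B⟩
    · left
      simp only [snap, h]
    · right
      have hE := (S.conservation (t₀ := t₀) (t := t₀ + s * (ε / Λ)) (by nlinarith)).1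
      exact ⟨⟨i, j, B⟩, B.collides hm Y (hN s h0.le h1)
        (fun k => (S.norm_vl_le k _).trans_eq (hE.trans hΛ₀)) hε hΛ hη hη' hη''⟩

end BallSystem

/-- An orthonormal basis of the plane. -/
structure Frame {d : ℕ} (w u : EuclideanSpace ℝ (Fin d)) : Prop where
  norm_side : ‖u‖ = 1
  norm_le : ∀ x, ‖x‖ ≤ |⟪w, x⟫| + |⟪u, x⟫|
  inner : ⟪u, w⟫ = 0

lemma Frame.neg {d : ℕ} {w u : EuclideanSpace ℝ (Fin d)} (h : Frame w u) : Frame (-w) u :=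
  ⟨h.norm_side, fun x => by rw [inner_neg_left, abs_neg]; exact h.norm_le x,
    by rw [inner_neg_right, h.inner, neg_zero]⟩

/-- Points with nearly ideal gaps that start close to the origin and stay close to the axis are
close to their ideal positions. -/
lemma Frame.norm_sub_le {d : ℕ} {w u : EuclideanSpace ℝ (Fin d)} (h : Frame w u) (hw : ‖w‖ = 1)
    {x : ℕ → EuclideanSpace ℝ (Fin d)} {ε : ℝ} {n : ℕ} (h₀ : |⟪w, x 0⟫| ≤ ε)
    (hgap : ∀ k < n, 0 ≤ ⟪w, x (k + 1) - x k⟫ - 2 ∧ ⟪w, x (k + 1) - x k⟫ - 2 ≤ ε)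
    (hside : ∀ k ≤ n, |⟪u, x k⟫| ≤ 2 * ε) :
    ∀ k ≤ n, ‖x k - (2 * k : ℝ) • w‖ ≤ (k + 3) * ε := by
  have key : ∀ k ≤ n, -ε ≤ ⟪w, x k⟫ - 2 * k ∧ ⟪w, x k⟫ - 2 * k ≤ (k + 1) * ε := by
    intro k
    induction k with
    | zero => intro _; have := abs_le.1 h₀; constructor <;> push_cast <;> linarith
    | succ k ih =>
      intro hk
      have h1 := ih (by omega)
      have h2 := hgap k hk
      rw [inner_sub_right] at h2
      push_cast
      constructor <;> linarith
  intro k hk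
  have hε : 0 ≤ ε := (abs_nonneg _).trans h₀
  have hkε : 0 ≤ (k : ℝ) * ε := by positivity
  have h1 := h.norm_le (x k - (2 * k : ℝ) • w)
  rw [inner_sub_right, inner_sub_right, inner_smul_right, inner_smul_right, h.inner,
    real_inner_self_eq_norm_sq, hw] at h1
  have h2 := key k hk
  have h3 : |⟪w, x k⟫ - 2 * k * 1 ^ 2| ≤ (k + 1) * ε := abs_le.2 ⟨by linarith, by linarith⟩
  have h4 := hside k hk
  rw [mul_zero, sub_zero] at h1
  linarith

namespace BallSystem

/-- The initial conditions in terms of the two arms and the train. -/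
structure Prepared {ι : Type} {d : ℕ} (S : BallSystem ι d Set.univ) (n m : ℕ) (p q a : ℕ → ι)
    (e f g e' f' g' : EuclideanSpace ℝ (Fin d)) (ε ρ t : ℝ) : Prop where
  apex₁ : 0 ≤ ⟪e, S.x (p 0) t⟫
  apex₂ : 0 ≤ ⟪f, S.x (q 0) t⟫
  head : ⟪g, S.x (a 0) t⟫ ≤ ε
  side₁ : ∀ k ≤ n, |⟪e', S.x (p k) t⟫| ≤ ε
  side₂ : ∀ k ≤ n, |⟪f', S.x (q k) t⟫| ≤ ε
  side : ∀ k, 1 ≤ k → k < m → |⟪g', S.x (a k) t⟫| ≤ ε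
  arm₁ : ∀ k < n, ε * ρ⁻¹ ≤ ⟪e, S.x (p (k + 1)) t - S.x (p k) t⟫ - 2 ∧
    ⟪e, S.x (p (k + 1)) t - S.x (p k) t⟫ - 2 ≤ ε
  arm₂ : ∀ k < n, ε * ρ⁻¹ ≤ ⟪f, S.x (q (k + 1)) t - S.x (q k) t⟫ - 2 ∧
    ⟪f, S.x (q (k + 1)) t - S.x (q k) t⟫ - 2 ≤ ε
  train : ∀ k, k + 1 < m → ε * ρ⁻¹ ≤ ⟪g, S.x (a k) t - S.x (a (k + 1)) t⟫ - 2 ∧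
    ⟪g, S.x (a k) t - S.x (a (k + 1)) t⟫ - 2 ≤ ε
  ratio :
    (⟪e, S.x (p 1) t - S.x (p 0) t⟫ - 2) / (⟪f, S.x (q 1) t - S.x (q 0) t⟫ - 2) ≤ 2 / 3 ∨
    (⟪f, S.x (q 1) t - S.x (q 0) t⟫ - 2) / (⟪e, S.x (p 1) t - S.x (p 0) t⟫ - 2) ≤ 2 / 3

variable {ι : Type} {d : ℕ} {S : BallSystem ι d Set.univ} {n m : ℕ} {p q a : ℕ → ι}
  {e f g e' f' g' : EuclideanSpace ℝ (Fin d)} {ε ρ Λ κ η t₀ t T : ℝ}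

lemma Prepared.norm_le (P : S.Prepared n m p q a e f g e' f' g' ε ρ t₀)
    (Y : Layout n m p q a e f g) (Fe : Frame e e') (Ff : Frame f f') (Fg : Frame g g')
    (hε : 0 < ε) (hρ : 0 < ρ) (hm : 0 < m) : S.Nearby n m p q a e f g ((n + m + 3) * ε) t₀ := by
  have hgap : 0 ≤ ε * ρ⁻¹ := by positivity
  have hhead := P.head
  have ha1 := P.apex₁
  have ha2 := P.apex₂
  rw [Y.sum, inner_add_left] at hhead
  rw [Y.p_zero] at ha1
  rw [Y.q_zero] at ha2
  have hns := P.side₁ 0 (by omega)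
  rw [Y.p_zero] at hns
  have hn0 : ‖S.x (a 0) t₀‖ ≤ 2 * ε := by
    have := Fe.norm_le (S.x (a 0) t₀)
    rw [abs_of_nonneg ha1] at this
    linarith
  have hn1 : ∀ k ≤ n, ((k : ℝ) + 3) * ε ≤ (n + m + 3) * ε := fun k hk => by
    have : (k : ℝ) ≤ n := by exact_mod_cast hk
    have : (0 : ℝ) ≤ m := Nat.cast_nonneg m
    gcongr
    linarith
  refine ⟨fun k hk => ?_, fun k hk => ?_, fun k hk => ?_⟩
  · refine (Fe.norm_sub_le Y.norm_e (x := fun k => S.x (p k) t₀) (ε := ε) (n := n) ?_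
      (fun k hk => ⟨hgap.trans (P.arm₁ k hk).1, (P.arm₁ k hk).2⟩)
      (fun k hk => (P.side₁ k hk).trans (by linarith)) k hk).trans (hn1 k hk)
    simp only [Y.p_zero]
    rw [abs_of_nonneg ha1]
    linarith
  · refine (Ff.norm_sub_le Y.norm_f (x := fun k => S.x (q k) t₀) (ε := ε) (n := n) ?_
      (fun k hk => ⟨hgap.trans (P.arm₂ k hk).1, (P.arm₂ k hk).2⟩)
      (fun k hk => (P.side₂ k hk).trans (by linarith)) k hk).trans (hn1 k hk)
    simp only [Y.q_zero]
    rw [abs_of_nonneg ha2]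
    linarith
  · refine (Fg.neg.norm_sub_le (by rw [norm_neg, Y.norm_g]) (x := fun k => S.x (a k) t₀)
      (ε := ε) (n := m - 1) ?_ (fun k hk => ?_) (fun k hk => ?_) k (by omega)).trans ?_
    · rw [inner_neg_left, abs_neg, Y.sum, inner_add_left, abs_of_nonneg (by linarith)]
      exact hhead
    · have h := P.train k (by omega)
      rw [show ⟪-g, S.x (a (k + 1)) t₀ - S.x (a k) t₀⟫ = ⟪g, S.x (a k) t₀ - S.x (a (k + 1)) t₀⟫ by
        rw [inner_neg_left, ← inner_neg_right, neg_sub]]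
      exact ⟨hgap.trans h.1, h.2⟩
    · rcases k.eq_zero_or_pos with rfl | hk0
      · refine (abs_real_inner_le_norm _ _).trans ?_
        rw [Fg.norm_side, one_mul]
        exact hn0
      · exact (P.side k hk0 (by omega)).trans (by linarith)
    · have : (k : ℝ) ≤ m := by exact_mod_cast hk.le
      have : (0 : ℝ) ≤ n := Nat.cast_nonneg n
      gcongr
      linarith

lemma norm_sub_le_mul [Fintype ι] (hΛ₀ : S.speedNorm t₀ = Λ) (hΛ : 0 < Λ) (h0 : t₀ ≤ t)
    (h1 : t ≤ t₀ + T * (ε / Λ)) (i : ι) : ‖S.x i t - S.x i t₀‖ ≤ T * ε := by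
  refine ((S.conservation h0).2 i).trans ?_
  rw [hΛ₀]
  calc Λ * (t - t₀) ≤ Λ * (T * (ε / Λ)) := by gcongr; linarith
    _ = T * ε := by field_simp

lemma abs_inner_sub_le [Fintype ι] {w : EuclideanSpace ℝ (Fin d)} (hw : ‖w‖ = 1)
    (hΛ₀ : S.speedNorm t₀ = Λ) (hΛ : 0 < Λ) (h0 : t₀ ≤ t) (h1 : t ≤ t₀ + T * (ε / Λ)) (i : ι) :
    |⟪w, S.x i t⟫ - ⟪w, S.x i t₀⟫| ≤ T * ε := by
  rw [← inner_sub_right]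
  refine (abs_real_inner_le_norm _ _).trans ?_
  rw [hw, one_mul]
  exact norm_sub_le_mul hΛ₀ hΛ h0 h1 i

lemma Nearby.later [Fintype ι] (N : S.Nearby n m p q a e f g η t₀) (hΛ₀ : S.speedNorm t₀ = Λ)
    (hΛ : 0 < Λ) (h0 : t₀ ≤ t) (h1 : t ≤ t₀ + T * (ε / Λ)) :
    S.Nearby n m p q a e f g (η + T * ε) t := by
  have key : ∀ i y, ‖S.x i t₀ - y‖ ≤ η → ‖S.x i t - y‖ ≤ η + T * ε := fun i y h => by
    have := norm_sub_le_norm_sub_add_norm_sub (S.x i t) (S.x i t₀) y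
    linarith [norm_sub_le_mul hΛ₀ hΛ h0 h1 i]
  exact ⟨fun k hk => key _ _ (N.p k hk), fun k hk => key _ _ (N.q k hk),
    fun k hk => key _ _ (N.a k hk)⟩

lemma Prepared.spaced (P : S.Prepared n m p q a e f g e' f' g' ε ρ t)
    (Y : Layout n m p q a e f g) (hε : 0 < ε) (V : ι → ℝ → EuclideanSpace ℝ (Fin d)) :
    (S.snap p q a e f g ε Λ V t).Spaced n m ρ := by
  refine ⟨fun k hk => ?_, fun k hk => ?_, fun k hk => ?_, (snap_linked Y V).pos⟩
  · have h := P.arm₁ k hk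
    rw [inner_sub_right] at h
    simp only [snap]
    rw [← sub_div, le_div_iff₀ hε, div_le_one hε]
    push_cast
    constructor <;> linarith
  · have h := P.arm₂ k hk
    rw [inner_sub_right] at h
    simp only [snap]
    rw [← sub_div, le_div_iff₀ hε, div_le_one hε]
    push_cast
    constructor <;> linarith
  · have h := P.train k hk
    rw [inner_sub_right] at h
    simp only [snap]
    rw [← sub_div, le_div_iff₀ hε, div_le_one hε]
    push_cast
    constructor <;> linarith

/-- If one ball carries almost all of the energy then the other balls are slow. -/
lemma norm_vr_le_of_ne [Fintype ι] {i j : ι} (hij : i ≠ j) {w : EuclideanSpace ℝ (Fin d)}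
    (hw : ‖w‖ = 1) (hΛ : 0 < Λ) (hΛ₀ : S.speedNorm t = Λ) (h : ‖S.vr j t - Λ • w‖ ≤ Λ * ε)
    (hε : ε < 1) (hκ : 0 ≤ κ) (hεκ : 2 * ε ≤ κ ^ 2) : ‖S.vr i t‖ ≤ Λ * κ := by
  classical
  have h1 : ‖S.vr i t‖ ^ 2 + ‖S.vr j t‖ ^ 2 ≤ Λ ^ 2 := by
    rw [← hΛ₀, speedNorm, Real.sq_sqrt (Finset.sum_nonneg fun _ _ => by positivity),
      ← Finset.sum_pair (f := fun k => ‖S.vr k t‖ ^ 2) hij]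
    exact Finset.sum_le_univ_sum_of_nonneg fun _ => by positivity
  have h2 : Λ * (1 - ε) ≤ ‖S.vr j t‖ := by
    have h3 := norm_sub_norm_le (Λ • w) (S.vr j t)
    rw [norm_smul, hw, Real.norm_of_nonneg hΛ.le, norm_sub_rev] at h3
    linarith
  have h3 : (Λ * (1 - ε)) ^ 2 ≤ ‖S.vr j t‖ ^ 2 :=
    pow_le_pow_left₀ (mul_nonneg hΛ.le (by linarith)) h2 2
  refine abs_le_of_sq_le_sq' ?_ (by positivity) |>.2
  have h4 : Λ ^ 2 * (2 * ε) ≤ Λ ^ 2 * κ ^ 2 := by gcongr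
  nlinarith [sq_nonneg (Λ * ε)]

lemma launch [Fintype ι] (Y : Layout n m p q a e f g) (hm : 0 < m) (hΛ : 0 < Λ)
    (hΛ₀ : S.speedNorm t = Λ) (h : ‖S.vr (a (m - 1)) t - Λ • g‖ ≤ Λ * ε)
    (hε : ε < 1) (hκ : 0 ≤ κ) (hεκ : 2 * ε ≤ κ ^ 2) (hεκ' : ε ≤ κ) {ε₁ : ℝ} :
    (S.snap p q a e f g ε₁ Λ S.vr t).Launch n m κ := by
  have key : ∀ w : EuclideanSpace ℝ (Fin d), ‖w‖ = 1 → ∀ i, i ≠ a (m - 1) →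
      |⟪w, S.vr i t⟫ / Λ| ≤ κ := fun w hw i hi => by
    rw [abs_div, abs_of_pos hΛ, div_le_iff₀ hΛ, mul_comm]
    refine (abs_real_inner_le_norm _ _).trans ?_
    rw [hw, one_mul]
    exact norm_vr_le_of_ne hi Y.norm_g hΛ hΛ₀ h hε hκ hεκ
  have key' : ∀ w : EuclideanSpace ℝ (Fin d), ‖w‖ = 1 →
      |⟪w, S.vr (a (m - 1)) t⟫ / Λ - ⟪w, g⟫| ≤ κ := fun w hw => by
    rw [show ⟪w, S.vr (a (m - 1)) t⟫ / Λ - ⟪w, g⟫ = ⟪w, S.vr (a (m - 1)) t - Λ • g⟫ / Λ by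
      rw [inner_sub_right, inner_smul_right]; field_simp, abs_div, abs_of_pos hΛ, div_le_iff₀ hΛ]
    refine (abs_real_inner_le_norm _ _).trans ?_
    rw [hw, one_mul]
    nlinarith
  refine ⟨fun k h1 h2 => key e Y.norm_e _ (Y.p_ne_a k _ h1),
    fun k h1 h2 => key f Y.norm_f _ (Y.q_ne_a k _ h1), fun i h1 h2 => key g Y.norm_g _ fun h' => ?_,
    fun hm1 => ⟨?_, ?_, ?_⟩, fun hm1 => ⟨?_, ?_⟩⟩
  · have := Y.a_inj i (by omega) (m - 1) (by omega) h'
    omega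
  · have := key' g Y.norm_g
    rwa [real_inner_self_eq_norm_sq, Y.norm_g, one_pow] at this
  · refine key e Y.norm_e _ fun h' => ?_
    rw [Y.p_zero] at h'
    have := Y.a_inj 0 hm (m - 1) (by omega) h'
    omega
  · refine key f Y.norm_f _ fun h' => ?_
    rw [Y.q_zero] at h'
    have := Y.a_inj 0 hm (m - 1) (by omega) h'
    omega
  · have := key' e Y.norm_e
    rw [Y.inner_eg] at this
    simpa only [snap, Y.p_zero, hm1] using this
  · have := key' f Y.norm_f
    rw [Y.swap.inner_eg] at this
    simpa only [snap, Y.q_zero, hm1] using this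

lemma Prepared.of_final [Fintype ι] (P : S.Prepared n m p q a e f g e' f' g' ε ρ t₀)
    (Y : Layout n m p q a e f g) (Fe : Frame e e') (Ff : Frame f f') (Fg : Frame g g')
    (hn : 0 < n) (hε : 0 < ε) (hρ : 0 < ρ) (hT : 5 ≤ T) (hΛ : 0 < Λ) (hΛ₀ : S.speedNorm t₀ = Λ)
    (H : Snapshot.Final n m ρ (S.snap p q a e f g ε Λ S.vr t₀)
      (S.snap p q a e f g ε Λ S.vr (t₀ + T * (ε / Λ)))) :
    S.Prepared n m p q a e f g e' f' g' (ε * (1 + 2 * T)) (ρ * (1 + 3 * T))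
      (t₀ + T * (ε / Λ)) := by
  have hq : 0 ≤ T * (ε / Λ) := by positivity
  have hx : ∀ {w : EuclideanSpace ℝ (Fin d)}, ‖w‖ = 1 → ∀ i,
      |⟪w, S.x i (t₀ + T * (ε / Λ))⟫ - ⟪w, S.x i t₀⟫| ≤ T * ε := fun hw i =>
    abs_inner_sub_le hw hΛ₀ hΛ (by linarith) le_rfl i
  have hTε : 0 ≤ T * ε := by positivity
  have hρi : 0 < ρ⁻¹ := inv_pos.2 hρ
  have hlow : ε * (1 + 2 * T) * (ρ * (1 + 3 * T))⁻¹ ≤ 11 / 16 * ρ⁻¹ * ε := by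
    rw [mul_inv, show ε * (1 + 2 * T) * (ρ⁻¹ * (1 + 3 * T)⁻¹) =
      (1 + 2 * T) * (1 + 3 * T)⁻¹ * (ρ⁻¹ * ε) by ring, mul_assoc (11 / 16)]
    refine mul_le_mul_of_nonneg_right ?_ (by positivity)
    rw [← div_eq_mul_inv, div_le_iff₀ (by positivity)]
    linarith
  have hside : ∀ {w : EuclideanSpace ℝ (Fin d)}, ‖w‖ = 1 → ∀ i, |⟪w, S.x i t₀⟫| ≤ ε →
      |⟪w, S.x i (t₀ + T * (ε / Λ))⟫| ≤ ε * (1 + 2 * T) := fun {w} hw i h => by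
    have := abs_sub_abs_le_abs_sub ⟪w, S.x i (t₀ + T * (ε / Λ))⟫ ⟪w, S.x i t₀⟫
    linarith [hx hw i]
  have hup : ∀ {w : EuclideanSpace ℝ (Fin d)}, ‖w‖ = 1 → ∀ i j, ⟪w, S.x i t₀ - S.x j t₀⟫ - 2 ≤ ε →
      ⟪w, S.x i (t₀ + T * (ε / Λ)) - S.x j (t₀ + T * (ε / Λ))⟫ - 2 ≤ ε * (1 + 2 * T) :=
    fun hw i j h => by
    rw [inner_sub_right] at h ⊢
    linarith [(abs_le.1 (hx hw i)).2, (abs_le.1 (hx hw j)).1]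
  have gap₁ : ∀ k < n, 11 / 16 * ρ⁻¹ * ε ≤
      ⟪e, S.x (p (k + 1)) (t₀ + T * (ε / Λ)) - S.x (p k) (t₀ + T * (ε / Λ))⟫ - 2 := fun k hk => by
    have h := H.arm₁ k hk
    simp only [snap] at h
    rw [← sub_div, le_div_iff₀ hε] at h
    push_cast at h
    rw [inner_sub_right]
    linarith
  have gap₂ : ∀ k < n, 11 / 16 * ρ⁻¹ * ε ≤
      ⟪f, S.x (q (k + 1)) (t₀ + T * (ε / Λ)) - S.x (q k) (t₀ + T * (ε / Λ))⟫ - 2 := fun k hk => by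
    have h := H.arm₂ k hk
    simp only [snap] at h
    rw [← sub_div, le_div_iff₀ hε] at h
    push_cast at h
    rw [inner_sub_right]
    linarith
  have hpos : 0 < 11 / 16 * ρ⁻¹ * ε := by positivity
  refine ⟨?_, ?_, ?_, fun k hk => hside Fe.norm_side _ (P.side₁ k hk),
    fun k hk => hside Ff.norm_side _ (P.side₂ k hk),
    fun k h1 hk => hside Fg.norm_side _ (P.side k h1 hk),
    fun k hk => ⟨hlow.trans (gap₁ k hk), hup Y.norm_e _ _ (P.arm₁ k hk).2⟩,
    fun k hk => ⟨hlow.trans (gap₂ k hk), hup Y.norm_f _ _ (P.arm₂ k hk).2⟩,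
    fun k hk => ⟨hlow.trans ?_, hup Y.norm_g _ _ (P.train k hk).2⟩, ?_⟩
  · have h := H.apex₁
    simp only [snap] at h
    rw [div_le_div_iff_of_pos_right hε] at h
    linarith [P.apex₁]
  · have h := H.apex₂
    simp only [snap] at h
    rw [div_le_div_iff_of_pos_right hε] at h
    linarith [P.apex₂]
  · linarith [P.head, (abs_le.1 (hx Y.norm_g (a 0))).2]
  · have h := H.train k hk
    simp only [snap] at h
    rw [← sub_div, le_div_iff₀ hε] at h
    push_cast at h
    rw [inner_sub_right]
    linarith
  · have h1 := gap₁ 0 hn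
    have h2 := gap₂ 0 hn
    rw [zero_add] at h1 h2
    refine H.ratio.imp (fun h => ?_) fun h => ?_
    all_goals
      rw [div_le_iff₀ (by linarith)]
      simp only [snap] at h
      rw [← sub_div, ← sub_div, div_le_iff₀ hε, mul_assoc, div_mul_cancel₀ _ hε.ne'] at h
      push_cast at h
      rw [inner_sub_right, inner_sub_right]
      linarith

/-- A prepared system undergoes the required number of collisions, after which it is prepared
again. -/
theorem Prepared.step [Fintype ι] (P : S.Prepared n m p q a e f g e' f' g' ε ρ t₀)
    (Y : Layout n m p q a e f g) (Fe : Frame e e') (Ff : Frame f f') (Fg : Frame g g')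
    (hm : 0 < m) (hn : 0 < n) (hρ : 2 ≤ ρ) (hε : 0 < ε) (hΛ : 0 < Λ) (hΛ₀ : S.speedNorm t₀ = Λ)
    (h : ‖S.vr (a (m - 1)) t₀ - Λ • g‖ ≤ Λ * ε) {K : ℝ} (hκ : 0 ≤ κ)
    (hK : 100 * 4 ^ n * (1 + T) ≤ K) (hsm : K ^ (m - 1 + 2 * (n * n) + 2) * κ ≤ ρ⁻¹)
    (hT : (m : ℝ) + 4 ^ n ≤ T) (hε1 : ε < 1) (hεκ : 2 * ε ≤ κ ^ 2) (hεκ' : ε ≤ κ)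
    (hη : 4 * ((n + m + 3 + T) * ε) ≤ κ) (hη' : ((n + m + 3 + T) * ε) ^ 2 ≤ κ * ε)
    (hη'' : (n + m + 3 + T) * ε < 1 / 2) :
    (∃ F : Finset ℝ, ↑F ⊆ {s | ∃ i j, S.Bounce (t₀ + s * (ε / Λ)) i j} ∩ Set.Ioo 0 T ∧
      F.card = m - 1 + n * (n + 1)) ∧
    S.Prepared n m p q a e f g e' f' g' (ε * (1 + 2 * T)) (ρ * (1 + 3 * T))
      (t₀ + T * (ε / Λ)) := by
  have hT5 : 5 ≤ T := by
    have h4 : (4 : ℝ) ^ 1 ≤ 4 ^ n := pow_le_pow_right₀ (by norm_num) hn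
    have h5 : (1 : ℝ) ≤ m := by exact_mod_cast hm
    linarith
  have N := P.norm_le Y Fe Ff Fg hε (by linarith) hm
  have E := evolution (T := T) Y hm (fun t h0 h1 => by
    have := N.later hΛ₀ hΛ h0 h1
    rwa [← add_mul] at this) hΛ₀ hε hΛ hη hη' hη''
  have H := E.outcome hm hn hρ hκ hK hsm
    (by simpa only [zero_mul, add_zero] using P.spaced Y hε _)
    (by simpa only [zero_mul, add_zero] using launch Y hm hΛ hΛ₀ h hε1 hκ hεκ hεκ') hT
  refine ⟨H.1, P.of_final Y Fe Ff Fg hn hε (by linarith) hT5 hΛ hΛ₀ ?_⟩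
  simpa only [zero_mul, add_zero] using H.2

end BallSystem

lemma inner_plane (x y : EuclideanSpace ℝ (Fin 2)) : ⟪x, y⟫ = x 0 * y 0 + x 1 * y 1 := by
  rw [PiLp.inner_apply, Fin.sum_univ_two]
  simp [mul_comm]

lemma Frame.of_coords {w u : EuclideanSpace ℝ (Fin 2)} (hw : w 0 ^ 2 + w 1 ^ 2 = 1)
    (h₀ : u 0 = w 1) (h₁ : u 1 = -w 0) : Frame w u := by
  refine ⟨?_, fun x => ?_, ?_⟩
  · rw [EuclideanSpace.norm_eq, Fin.sum_univ_two, h₀, h₁]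
    simp only [Real.norm_eq_abs, sq_abs]
    rw [neg_sq, add_comm, hw, Real.sqrt_one]
  · have h : ‖x‖ ^ 2 = ⟪w, x⟫ ^ 2 + ⟪u, x⟫ ^ 2 := by
      rw [← real_inner_self_eq_norm_sq, inner_plane, inner_plane, inner_plane, h₀, h₁]
      linear_combination -(x 0 ^ 2 + x 1 ^ 2) * hw
    refine abs_le_of_sq_le_sq' ?_ (by positivity) |>.2
    rw [h, add_sq, sq_abs, sq_abs]
    have : 0 ≤ 2 * |⟪w, x⟫| * |⟪u, x⟫| := by positivity
    linarith
  · rw [inner_plane, h₀, h₁]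
    ring

lemma Frame.flip {d : ℕ} {w u : EuclideanSpace ℝ (Fin d)} (h : Frame w (-u)) : Frame w u :=
  ⟨by simpa using h.norm_side, fun x => by simpa using h.norm_le x, by simpa using h.inner⟩

lemma frame₀ : Frame w0 u0 := by
  apply Frame.of_coords <;> simp [w0, u0]

lemma frame₁ : Frame w1 u1 := by
  have h3 := Real.sq_sqrt (show (0 : ℝ) ≤ 3 by norm_num)
  apply Frame.of_coords <;> simp [w1, u1]
  linear_combination h3 / 4

lemma frame₂ : Frame w2 u2 := by
  have h3 := Real.sq_sqrt (show (0 : ℝ) ≤ 3 by norm_num)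
  refine Frame.flip ?_
  apply Frame.of_coords <;> simp [w2, u2]
  linear_combination h3 / 4

section Layout

variable {m n : ℕ}

/-- The discs `A_{k+1}`; indices that are too large are truncated. -/
def trainBall (hm : 0 < m) (k : ℕ) : BBIndex m n := .inl ⟨min k (m - 1), by omega⟩

/-- The discs `B_k`, where `B_0 = A_1`; indices that are too large are truncated. -/
def leftBall (hm : 0 < m) (hn : 0 < n) : ℕ → BBIndex m n
  | 0 => .inl ⟨0, hm⟩
  | k + 1 => .inr (.inl ⟨min k (n - 1), by omega⟩)

/-- The discs `C_k`, where `C_0 = A_1`; indices that are too large are truncated. -/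
def rightBall (hm : 0 < m) (hn : 0 < n) : ℕ → BBIndex m n
  | 0 => .inl ⟨0, hm⟩
  | k + 1 => .inr (.inr ⟨min k (n - 1), by omega⟩)

lemma trainBall_of_lt {hm : 0 < m} {k : ℕ} (hk : k < m) :
    trainBall (n := n) hm k = .inl ⟨k, hk⟩ := by
  simp only [trainBall, Sum.inl.injEq, Fin.mk.injEq]; omega

lemma leftBall_of_lt {hm : 0 < m} {hn : 0 < n} {k : ℕ} (hk : k < n) :
    leftBall hm hn (k + 1) = .inr (.inl ⟨k, hk⟩) := by
  simp only [leftBall, Sum.inr.injEq, Sum.inl.injEq, Fin.mk.injEq]; omega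

lemma rightBall_of_lt {hm : 0 < m} {hn : 0 < n} {k : ℕ} (hk : k < n) :
    rightBall hm hn (k + 1) = .inr (.inr ⟨k, hk⟩) := by
  simp only [rightBall, Sum.inr.injEq, Fin.mk.injEq]; omega

lemma layout (hm : 0 < m) (hn : 0 < n) :
    Layout n m (leftBall hm hn) (rightBall hm hn) (trainBall hm) w1 w2 w0 := by
  have h3 := Real.sq_sqrt (show (0 : ℝ) ≤ 3 by norm_num)
  refine ⟨?_, ?_, ?_, ?_, ?_, ?_, ?_, ?_, ?_, ?_, ?_, ?_, ?_⟩
  · have h : ‖w1‖ ^ 2 = 1 := by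
      rw [← real_inner_self_eq_norm_sq, inner_plane]
      simp [w1]
      linear_combination h3 / 4
    nlinarith [norm_nonneg w1]
  · have h : ‖w2‖ ^ 2 = 1 := by
      rw [← real_inner_self_eq_norm_sq, inner_plane]
      simp [w2]
      linear_combination h3 / 4
    nlinarith [norm_nonneg w2]
  · rw [inner_plane]
    simp [w1, w2]
    linear_combination -h3 / 4
  · ext i
    fin_cases i <;> simp [w0, w1, w2]
    norm_num
  · rw [trainBall_of_lt hm]; rfl
  · rw [trainBall_of_lt hm]; rfl
  · rintro (_ | j) hj (_ | k) hk h
    · rfl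
    · simp [leftBall] at h
    · simp [leftBall] at h
    · simp [leftBall] at h; omega
  · rintro (_ | j) hj (_ | k) hk h
    · rfl
    · simp [rightBall] at h
    · simp [rightBall] at h
    · simp [rightBall] at h; omega
  · intro j hj k hk h
    simp [trainBall] at h
    omega
  · rintro (_ | j) (_ | k) h1 h2
    · omega
    · omega
    · omega
    · simp [leftBall, rightBall]
  · rintro (_ | j) k h1
    · omega
    · simp [leftBall, trainBall]
  · rintro (_ | j) k h1
    · omega
    · simp [rightBall, trainBall]
  · rintro (i | i | i)
    · exact .inr (.inr ⟨i, i.2, (trainBall_of_lt i.2).symm⟩)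
    · exact .inl ⟨i + 1, i.2, (leftBall_of_lt i.2).symm⟩
    · exact .inr (.inl ⟨i + 1, i.2, (rightBall_of_lt i.2).symm⟩)

lemma initCond_iff (hm : 0 < m) (hn : 0 < n) (S : BallSystem (BBIndex m n) 2 Set.univ)
    (ε ρ t : ℝ) : InitCond m n hm hn S ε ρ t ↔
      S.Prepared n m (leftBall hm hn) (rightBall hm hn) (trainBall hm) w1 w2 w0 u1 u2 u0 ε ρ t := by
  constructor
  · rintro ⟨⟨h1, h2, h3⟩, h4, h5, h6, h7, h8, h9, h10, h11, h12, h13, h14⟩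
    refine ⟨h1, h2, by rwa [trainBall_of_lt hm], ?_, ?_, ?_, ?_, ?_, ?_, ?_⟩
    · rintro (_ | k) hk
      · exact h5
      · rw [leftBall_of_lt hk]; exact h6 ⟨k, hk⟩
    · rintro (_ | k) hk
      · exact h7
      · rw [rightBall_of_lt hk]; exact h8 ⟨k, hk⟩
    · intro k h0 hk
      rw [trainBall_of_lt hk]; exact h4 ⟨k, hk⟩ h0
    · rintro (_ | k) hk
      · rw [leftBall_of_lt hk]; exact h10
      · rw [leftBall_of_lt hk, leftBall_of_lt (by omega)]; exact h11 k hk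
    · rintro (_ | k) hk
      · rw [rightBall_of_lt hk]; exact h12
      · rw [rightBall_of_lt hk, rightBall_of_lt (by omega)]; exact h13 k hk
    · intro k hk
      rw [trainBall_of_lt hk, trainBall_of_lt (by omega)]; exact h9 k hk
    · rw [leftBall_of_lt hn, rightBall_of_lt hn]; exact h14
  · rintro ⟨h1, h2, h3, h4, h5, h6, h7, h8, h9, h10⟩
    rw [trainBall_of_lt hm] at h3
    rw [leftBall_of_lt hn, rightBall_of_lt hn] at h10
    refine ⟨⟨h1, h2, h3⟩, fun k hk => ?_, h4 0 hn.le, fun k => ?_, h5 0 hn.le, fun k => ?_,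
      fun k hk => ?_, ?_, fun k hk => ?_, ?_, fun k hk => ?_, h10⟩
    · have h := h6 k hk k.2
      rwa [trainBall_of_lt k.2] at h
    · have h := h4 (k + 1) k.2
      rwa [leftBall_of_lt k.2] at h
    · have h := h5 (k + 1) k.2
      rwa [rightBall_of_lt k.2] at h
    · have h := h9 k hk
      rwa [trainBall_of_lt hk, trainBall_of_lt (by omega)] at h
    · have h := h7 0 hn
      rwa [leftBall_of_lt hn] at h
    · have h := h7 (k + 1) hk
      rwa [leftBall_of_lt hk, leftBall_of_lt (by omega)] at h
    · have h := h8 0 hn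
      rwa [rightBall_of_lt hn] at h
    · have h := h8 (k + 1) hk
      rwa [rightBall_of_lt hk, rightBall_of_lt (by omega)] at h

end Layout

/-- Distinct times of bounces yield distinct collisions. -/
lemma BallSystem.exists_finset_collisions {ι : Type} [DecidableEq ι] {d : ℕ}
    {S : BallSystem ι d Set.univ} {t₀ r T : ℝ} (hr : 0 < r) {F : Finset ℝ}
    (hF : ↑F ⊆ {s | ∃ i j, S.Bounce (t₀ + s * r) i j} ∩ Set.Ioo 0 T) :
    ∃ G : Finset (ℝ × Finset ι),
      ↑G ⊆ {c ∈ S.collisions | c.1 ∈ Set.Ico t₀ (t₀ + T * r)} ∧ G.card = F.card := by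
  have h : ∀ s : F, ∃ B : Finset ι, (t₀ + s * r, B) ∈ S.collisions := fun s => by
    obtain ⟨i, j, B⟩ := (hF s.2).1
    exact ⟨_, B.mem_collisions⟩
  choose B hB using h
  refine ⟨Finset.univ.image fun s : F => (t₀ + s * r, B s), ?_, ?_⟩
  · intro c hc
    simp only [Finset.coe_image, Finset.coe_univ, Set.image_univ, Set.mem_range] at hc
    obtain ⟨s, rfl⟩ := hc
    have hs := (hF s.2).2
    exact ⟨hB s, by nlinarith [hs.1], by simpa using mul_lt_mul_of_pos_right hs.2 hr⟩
  · rw [Finset.card_image_of_injective _ fun s s' hss => ?_, Finset.card_univ, Fintype.card_coe]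
    have h := congrArg Prod.fst hss
    simp only [add_right_inj, mul_eq_mul_right_iff, hr.ne', or_false] at h
    exact Subtype.ext h

/-- Every sufficiently small `ε` satisfies the smallness conditions for given `κ` and `L`. -/
lemma exists_pos_forall_small {κ L : ℝ} (hκ : 0 < κ) (hL : 1 ≤ L) :
    ∃ δ > 0, ∀ ε, 0 < ε → ε < δ → ε < 1 ∧ 2 * ε ≤ κ ^ 2 ∧ ε ≤ κ ∧ 4 * (L * ε) ≤ κ ∧
      (L * ε) ^ 2 ≤ κ * ε ∧ L * ε < 1 / 2 := by
  have hL0 : 0 < L := by linarith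
  refine ⟨min (min (1 / (2 * L)) (κ ^ 2 / 2)) (min (κ / (4 * L)) (κ / L ^ 2)), by positivity,
    fun ε h0 h1 => ?_⟩
  obtain ⟨⟨h1, h2⟩, h3, h4⟩ := by simpa only [lt_min_iff] using h1
  rw [lt_div_iff₀ (by positivity)] at h1 h2 h3 h4
  have hLε : ε ≤ L * ε := by nlinarith
  refine ⟨by linarith, by linarith, by nlinarith, by linarith, ?_, by linarith⟩
  calc (L * ε) ^ 2 = ε * L ^ 2 * ε := by ring
    _ ≤ κ * ε := by gcongr

/-- main inductive step.  With `T = n2 + 2^{2 n1}` and `ρ ≥ 2` there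
is `ε* > 0` such that for all `ε ∈ (0,ε*)`, `λ > 0` and `1 ≤ m ≤ n2`: every elastic
collision system `S` of `2 n1 + m` unit discs in `ℝ²` satisfying the `(ε,ρ)` initial
conditions at `t0`, with `|DS(t0)| = λ` and `|D a_m(t0) - λ w0| ≤ λ ε`, undergoes at
least `m - 1 + n1 (n1 + 1)` collisions in `[t0, t0 + ε λ⁻¹ T)` and satisfies the
`(ε (1+2T), ρ (1+3T))` initial conditions at time `t0 + ε λ⁻¹ T`. -/
theorem inductive_step (n1 n2 : ℕ) (hn1 : 0 < n1) (hn2 : 0 < n2)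
    (ρ : ℝ) (hρ : 2 ≤ ρ) :
    ∃ εstar : ℝ, 0 < εstar ∧
      ∀ ε : ℝ, 0 < ε → ε < εstar → ∀ lam : ℝ, 0 < lam →
      ∀ m : ℕ, ∀ hm : 0 < m, m ≤ n2 →
      ∀ S : BallSystem (BBIndex m n1) 2 Set.univ, ∀ t0 : ℝ,
        InitCond m n1 hm hn1 S ε ρ t0 →
        S.speedNorm t0 = lam →
        ‖S.vr (Sum.inl (⟨m - 1, by omega⟩ : Fin m)) t0 - lam • w0‖ ≤ lam * ε →
        (∃ F : Finset (ℝ × Finset (BBIndex m n1)),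
          ↑F ⊆ {p ∈ S.collisions |
              p.1 ∈ Set.Ico t0 (t0 + ε * lam⁻¹ * ((n2 : ℝ) + 2 ^ (2 * n1)))} ∧
          m - 1 + n1 * (n1 + 1) ≤ F.card) ∧
        InitCond m n1 hm hn1 S (ε * (1 + 2 * ((n2 : ℝ) + 2 ^ (2 * n1))))
          (ρ * (1 + 3 * ((n2 : ℝ) + 2 ^ (2 * n1))))
          (t0 + ε * lam⁻¹ * ((n2 : ℝ) + 2 ^ (2 * n1))) := by
  have hpow : (2 : ℝ) ^ (2 * n1) = 4 ^ n1 := by rw [pow_mul]; norm_num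
  rw [hpow]
  set T : ℝ := (n2 : ℝ) + 4 ^ n1 with hT
  have h4 : (1 : ℝ) ≤ 4 ^ n1 := one_le_pow₀ (by norm_num)
  have hT1 : 1 ≤ T := by
    have : (0 : ℝ) ≤ n2 := Nat.cast_nonneg n2
    linarith
  set K : ℝ := 100 * 4 ^ n1 * (1 + T) with hK
  have hK1 : 1 ≤ K := by nlinarith
  set κ : ℝ := ρ⁻¹ / K ^ (n2 + 2 * (n1 * n1) + 2) with hκ
  have hκ0 : 0 < κ := by positivity
  have hn1r : (0 : ℝ) ≤ n1 := Nat.cast_nonneg n1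
  have hn2r : (0 : ℝ) ≤ n2 := Nat.cast_nonneg n2
  obtain ⟨δ, hδ, hsmall⟩ := exists_pos_forall_small hκ0
    (show 1 ≤ (n1 : ℝ) + n2 + 3 + T by linarith)
  refine ⟨δ, hδ, fun ε hε hεδ lam hlam m hm hmn S t0 hI hS hV => ?_⟩
  obtain ⟨s1, s2, s3, s4, s5, s6⟩ := hsmall ε hε hεδ
  have hmr : (m : ℝ) ≤ n2 := by exact_mod_cast hmn
  have hL : ((n1 : ℝ) + m + 3 + T) * ε ≤ (n1 + n2 + 3 + T) * ε := by gcongr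
  have hL0 : 0 ≤ ((n1 : ℝ) + m + 3 + T) * ε := by positivity
  have hsm : K ^ (m - 1 + 2 * (n1 * n1) + 2) * κ ≤ ρ⁻¹ := by
    rw [hκ, ← mul_div_assoc, div_le_iff₀ (by positivity), mul_comm]
    gcongr
    omega
  have H := ((initCond_iff hm hn1 S ε ρ t0).1 hI).step (layout hm hn1) frame₁ frame₂ frame₀ hm hn1
    hρ hε hlam hS (by rw [trainBall_of_lt (by omega)]; exact hV) hκ0.le (T := T) (K := K) le_rfl
    hsm (by linarith) s1 s2 s3 (by linarith) ((pow_le_pow_left₀ hL0 hL 2).trans s5) (by linarith)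
  rw [show t0 + ε * lam⁻¹ * T = t0 + T * (ε / lam) by ring]
  obtain ⟨⟨F, hF, hcard⟩, hP⟩ := H
  obtain ⟨G, hG, hGF⟩ := BallSystem.exists_finset_collisions (div_pos hε hlam) hF
  exact ⟨⟨G, hG, by rw [hGF, hcard]⟩, (initCond_iff hm hn1 S _ _ _).2 hP⟩
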